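/- arXiv:2311.15119 — 10 statements merged into one kernel-verified Lean document; each statement's English description precedes it below -/
import Mathlib

section
/- Let D ⊆ ℝⁿ be an open set with x_eq ∈ D. Suppose there exists a continuously differentiable function V : D → ℝ such that: (1) V(x_eq) = 0 and V(x) > 0 for all x ∈ D \ {x_eq}; (2) ∇V(x)·f(x) = −q(x) for all x ∈ D, where q : ℝⁿ → ℝ is continuous, q(x_eq) = 0 and q(x) > 0 for x ≠ x_eq; (3) for every m > 0 there exists a compact set K ⊆ D such that V(x) > m for all x ∈ D \ K (i.e., V(x) → ∞ as x → ∂D or |x| → ∞). Then D equals the region of attraction D(x_eq) = {x ∈ ℝⁿ : φ(t,x) → x_eq as t → ∞}. -/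
open Filter Topology
open scoped RealInnerProductSpace

noncomputable section


/-- Invariance of a proper sublevel region along a curve. -/
theorem zubov_stay {E : Type*} [TopologicalSpace E] [T2Space E] {D K : Set E} (hD : IsOpen D)
    (hKD : K ⊆ D) (hK : IsCompact K) {V : E → ℝ} (hV : ContinuousOn V D) {m : ℝ}
    (hm : ∀ x ∈ D \ K, m < V x) {z : ℝ → E} {T C : ℝ}
    (hC : 0 ≤ C) (hz : ContinuousOn z (Set.Icc 0 T)) (hz0 : z 0 ∈ D)
    (hmT : V (z 0) + C * T ≤ m)
    (hstep : ∀ a b, 0 ≤ a → a ≤ b → b ≤ T → (∀ s ∈ Set.Icc a b, z s ∈ D) →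
      V (z b) ≤ V (z a) + C * (b - a)) (hT : 0 ≤ T) :
    ∀ t ∈ Set.Icc 0 T, z t ∈ K := by
  have inK : ∀ t ∈ Set.Icc 0 T, z t ∈ D → V (z t) ≤ V (z 0) + C * t → z t ∈ K := by
    intro t ht h1 h2
    by_contra h3
    have := hm _ ⟨h1, h3⟩
    have : C * t ≤ C * T := mul_le_mul_of_nonneg_left ht.2 hC
    linarith
  have key : Set.Icc 0 T ⊆ {t | z t ∈ K ∧ V (z t) ≤ V (z 0) + C * t} := by
    apply IsClosed.Icc_subset_of_forall_exists_gt
    · have h1 : IsClosed (Set.Icc 0 T ∩ z ⁻¹' K) :=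
        hz.preimage_isClosed_of_isClosed isClosed_Icc hK.isClosed
      have h2 : ContinuousOn (fun t => V (z t) - (V (z 0) + C * t)) (Set.Icc 0 T ∩ z ⁻¹' K) := by
        apply ContinuousOn.sub
        · exact hV.comp (hz.mono Set.inter_subset_left) (fun t ht => hKD ht.2)
        · fun_prop
      have h3 := h2.preimage_isClosed_of_isClosed h1 (isClosed_Iic (a := (0:ℝ)))
      convert h3 using 1
      ext t
      simp only [Set.mem_inter_iff, Set.mem_ofPred_eq, Set.mem_preimage, Set.mem_Iic, sub_nonpos]
      tauto
    · have h0 : (0:ℝ) ∈ Set.Icc 0 T := ⟨le_rfl, hT⟩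
      exact ⟨inK 0 h0 hz0 (by simp), by simp⟩
    · rintro t ⟨⟨htK, htV⟩, ht0, htT⟩ y hy
      have hty : t < y := hy
      have hc : ContinuousWithinAt z (Set.Icc 0 T) t := hz t ⟨ht0, htT.le⟩
      have hev : ∀ᶠ s in 𝓝[Set.Icc 0 T] t, z s ∈ D := hc (hD.mem_nhds (hKD htK))
      obtain ⟨ε, hε, hball⟩ := Metric.mem_nhdsWithin_iff.1 hev
      let b := min (min y T) (t + ε / 2)
      have hb1 : t < b := by simp only [b, lt_min_iff]; exact ⟨⟨hty, htT⟩, by linarith⟩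
      have hb2 : b ≤ y := (min_le_left _ _).trans (min_le_left _ _)
      have hb3 : b ≤ T := (min_le_left _ _).trans (min_le_right _ _)
      have hb4 : b ≤ t + ε / 2 := min_le_right _ _
      have hin : ∀ s ∈ Set.Icc t b, z s ∈ D := by
        intro s hs
        apply hball
        refine ⟨?_, ht0.trans hs.1, hs.2.trans hb3⟩
        rw [Metric.mem_ball, Real.dist_eq, abs_lt]
        constructor <;> linarith [hs.1, hs.2]
      have h5 := hstep t b ht0 hb1.le hb3 hin
      have h6 : V (z b) ≤ V (z 0) + C * b := by linarith
      exact ⟨b, ⟨inK b ⟨ht0.trans hb1.le, hb3⟩ (hin b ⟨hb1.le, le_rfl⟩) h6, h6⟩, hb1, hb2⟩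
  intro t ht
  exact (key ht).1

/-- Maximal Lyapunov function theorem (Theorem `max_lyap`):
if `V` is a `C¹` positive-definite function on an open set `D ∋ x_eq` whose derivative
along solutions equals `-q` with `q` continuous positive definite, and `V` blows up at the
boundary of `D` (and at infinity), then `D` is exactly the region of attraction of `x_eq`. -/
theorem zubov_max_lyapunov {n : ℕ}
    (f : EuclideanSpace ℝ (Fin n) → EuclideanSpace ℝ (Fin n))
    (φ : ℝ → EuclideanSpace ℝ (Fin n) → EuclideanSpace ℝ (Fin n))
    (xeq : EuclideanSpace ℝ (Fin n))
    (hf : LocallyLipschitz f)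
    (hφ0 : ∀ x, φ 0 x = x)
    (hφd : ∀ x, ∀ t ≥ (0:ℝ), HasDerivWithinAt (fun s => φ s x) (f (φ t x)) (Set.Ici 0) t)
    (hφadd : ∀ x, ∀ s ≥ (0:ℝ), ∀ t ≥ (0:ℝ), φ s (φ t x) = φ (t + s) x)
    (hfeq : f xeq = 0)
    (hstab : ∃ δ > (0:ℝ), ∃ M > (0:ℝ), ∃ c > (0:ℝ), ∀ x : EuclideanSpace ℝ (Fin n),
      ‖x - xeq‖ ≤ δ → ∀ t ≥ (0:ℝ), ‖φ t x - xeq‖ ≤ M * ‖x - xeq‖ * Real.exp (-c * t))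
    (D : Set (EuclideanSpace ℝ (Fin n))) (hD : IsOpen D) (hxeqD : xeq ∈ D)
    (V : EuclideanSpace ℝ (Fin n) → ℝ)
    (gV : EuclideanSpace ℝ (Fin n) → EuclideanSpace ℝ (Fin n))
    (q : EuclideanSpace ℝ (Fin n) → ℝ)
    (hV : ContDiffOn ℝ 1 V D)
    (hV0 : V xeq = 0)
    (hVpos : ∀ x ∈ D, x ≠ xeq → 0 < V x)
    (hgrad : ∀ x ∈ D, HasGradientAt V (gV x) x)
    (hpde : ∀ x ∈ D, ⟪gV x, f x⟫ = - q x)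
    (hq : Continuous q) (hq0 : q xeq = 0) (hqpos : ∀ x, x ≠ xeq → 0 < q x)
    (hproper : ∀ m > (0:ℝ), ∃ K, K ⊆ D ∧ IsCompact K ∧ ∀ x ∈ D \ K, m < V x) :
    D = {x | Tendsto (fun t => φ t x) atTop (𝓝 xeq)} := by
  have hVc : ContinuousOn V D := hV.continuousOn
  have hyc : ∀ x, ContinuousOn (fun t => φ t x) (Set.Ici 0) := fun x t ht =>
    (hφd x t ht).continuousWithinAt
  have hVnn : ∀ x ∈ D, 0 ≤ V x := by
    intro x hx
    by_cases h : x = xeq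
    · rw [h, hV0]
    · exact (hVpos x hx h).le
  have hqnn : ∀ x, 0 ≤ q x := by
    intro x
    by_cases h : x = xeq
    · rw [h, hq0]
    · exact (hqpos x h).le
  have hder : ∀ x, ∀ t > (0:ℝ), φ t x ∈ D →
      HasDerivAt (fun s => V (φ s x)) (- q (φ t x)) t := by
    intro x t ht hx
    have h1 : HasDerivAt (fun s => φ s x) (f (φ t x)) t :=
      (hφd x t ht.le).hasDerivAt (Ici_mem_nhds ht)
    have h2 := (hgrad _ hx).hasFDerivAt.comp_hasDerivAt t h1
    have h3 : (InnerProductSpace.toDual ℝ (EuclideanSpace ℝ (Fin n)) (gV (φ t x))) (f (φ t x))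
        = - q (φ t x) := by
      rw [InnerProductSpace.toDual_apply_apply, hpde _ hx]
    rw [h3] at h2
    exact h2
  have hcontV : ∀ x a b, 0 ≤ a → (∀ s ∈ Set.Icc a b, φ s x ∈ D) →
      ContinuousOn (fun s => V (φ s x)) (Set.Icc a b) := by
    intro x a b ha h
    exact hVc.comp ((hyc x).mono (fun s hs => ha.trans hs.1)) h
  have hdec : ∀ x a b c, 0 ≤ a → a ≤ b → (∀ s ∈ Set.Icc a b, φ s x ∈ D) →
      (∀ s ∈ Set.Icc a b, c ≤ q (φ s x)) → V (φ b x) ≤ V (φ a x) - c * (b - a) := by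
    intro x a b c ha hab hin hc
    have := Convex.image_sub_le_mul_sub_of_deriv_le (convex_Icc a b) (hcontV x a b ha hin)
      (C := -c) (by
        intro s hs
        rw [interior_Icc] at hs
        exact (hder x s (ha.trans_lt hs.1)
          (hin s ⟨hs.1.le, hs.2.le⟩)).differentiableAt.differentiableWithinAt) (by
        intro s hs
        rw [interior_Icc] at hs
        rw [(hder x s (ha.trans_lt hs.1) (hin s ⟨hs.1.le, hs.2.le⟩)).deriv]
        linarith [hc s ⟨hs.1.le, hs.2.le⟩]) a ⟨le_rfl, hab⟩ b ⟨hab, le_rfl⟩ hab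
    linarith
  have hinc : ∀ x a b c, 0 ≤ a → a ≤ b → (∀ s ∈ Set.Icc a b, φ s x ∈ D) →
      (∀ s ∈ Set.Icc a b, q (φ s x) ≤ c) → V (φ a x) ≤ V (φ b x) + c * (b - a) := by
    intro x a b c ha hab hin hc
    have := Convex.mul_sub_le_image_sub_of_le_deriv (convex_Icc a b) (hcontV x a b ha hin)
      (C := -c) (by
        intro s hs
        rw [interior_Icc] at hs
        exact (hder x s (ha.trans_lt hs.1)
          (hin s ⟨hs.1.le, hs.2.le⟩)).differentiableAt.differentiableWithinAt) (by
        intro s hs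
        rw [interior_Icc] at hs
        rw [(hder x s (ha.trans_lt hs.1) (hin s ⟨hs.1.le, hs.2.le⟩)).deriv]
        linarith [hc s ⟨hs.1.le, hs.2.le⟩]) a ⟨le_rfl, hab⟩ b ⟨hab, le_rfl⟩ hab
    linarith
  ext x
  constructor
  · intro hx
    obtain ⟨δ, hδ, M, hM, c, hc, hst⟩ := hstab
    obtain ⟨K, hKD, hK, hKm⟩ := hproper (V x + 1) (by linarith [hVnn x hx])
    have hstay : ∀ t ≥ (0:ℝ), φ t x ∈ K := by
      intro t ht
      refine zubov_stay hD hKD hK hVc hKm (z := fun s => φ s x) (T := t) (C := 0) le_rfl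
        ((hyc x).mono (fun s hs => hs.1)) (by simpa [hφ0] using hx) (by simp [hφ0]) ?_ ht
        t ⟨ht, le_rfl⟩
      intro a b ha hab _ hin
      have := hdec x a b 0 ha hab hin (fun s _ => hqnn _)
      linarith
    have hex : ∃ t0 ≥ (0:ℝ), ‖φ t0 x - xeq‖ ≤ δ := by
      by_contra! hcon
      have hK' : IsCompact (K \ Metric.ball xeq δ) := hK.diff Metric.isOpen_ball
      have hmem : ∀ t ≥ (0:ℝ), φ t x ∈ K \ Metric.ball xeq δ := by
        intro t ht
        refine ⟨hstay t ht, ?_⟩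
        rw [Metric.mem_ball, dist_eq_norm, not_lt]
        exact (hcon t ht).le
      obtain ⟨p, hp, hpmin⟩ := hK'.exists_isMinOn ⟨_, hmem 0 le_rfl⟩ hq.continuousOn
      have hpne : p ≠ xeq := by
        rintro rfl
        exact hp.2 (Metric.mem_ball_self hδ)
      have hqp := hqpos p hpne
      have hT : 0 ≤ (V x + 1) / q p := by have := hVnn x hx; positivity
      have h1 := hdec x 0 ((V x + 1) / q p) (q p) le_rfl hT
        (fun s hs => hKD (hstay s hs.1)) (fun s hs => hpmin (hmem s hs.1))
      rw [hφ0, sub_zero, mul_div_cancel₀ _ hqp.ne'] at h1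
      have h2 := hVnn _ (hKD (hstay _ hT))
      linarith
    obtain ⟨t0, ht0, hnear⟩ := hex
    have hlim : Tendsto (fun t => M * ‖φ t0 x - xeq‖ * Real.exp (-c * (t - t0))) atTop (𝓝 0) := by
      have h1 : Tendsto (fun t : ℝ => -c * (t - t0)) atTop atBot :=
        (tendsto_atTop_add_const_right _ (-t0) tendsto_id).const_mul_atTop_of_neg
          (neg_lt_zero.2 hc)
      have h2 := (Real.tendsto_exp_atBot.comp h1).const_mul (M * ‖φ t0 x - xeq‖)
      simpa using h2
    show Tendsto (fun t => φ t x) atTop (𝓝 xeq)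
    rw [tendsto_iff_norm_sub_tendsto_zero]
    refine squeeze_zero' (Eventually.of_forall fun t => norm_nonneg _) ?_ hlim
    filter_upwards [eventually_ge_atTop t0] with t ht
    have h := hst _ hnear (t - t0) (by linarith)
    rw [hφadd x (t - t0) (by linarith) t0 ht0] at h
    simpa using h
  · intro hx
    have hx' : Tendsto (fun t => φ t x) atTop (𝓝 xeq) := hx
    obtain ⟨T, hTD, hT⟩ :=
      ((hx'.eventually (hD.mem_nhds hxeqD)).and (eventually_ge_atTop (0:ℝ))).exists
    replace hTD : φ T x ∈ D := hTD
    obtain ⟨p, hp, hpmax⟩ := (isCompact_Icc (a := (0:ℝ)) (b := T)).exists_isMaxOn ⟨0, le_rfl, hT⟩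
      (hq.comp_continuousOn ((hyc x).mono (fun s hs => hs.1)))
    have hCnn : 0 ≤ q (φ p x) := hqnn _
    have hVT := hVnn _ hTD
    obtain ⟨K, hKD, hK, hKm⟩ := hproper (V (φ T x) + q (φ p x) * T + 1) (by positivity)
    have := zubov_stay hD hKD hK hVc hKm (z := fun s => φ (T - s) x) (T := T) hCnn
      ((hyc x).comp (by fun_prop) (fun s hs => sub_nonneg.2 hs.2)) (by simpa using hTD)
      (by simp) (by
        intro a b ha hab hb hin
        have := hinc x (T - b) (T - a) (q (φ p x)) (by linarith) (by linarith)
          (by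
            intro s hs
            have := hin (T - s) ⟨by linarith [hs.2], by linarith [hs.1]⟩
            simpa using this)
          (fun s hs => hpmax (show s ∈ Set.Icc 0 T from
            ⟨by linarith [hs.1], by linarith [hs.2]⟩))
        have e : T - a - (T - b) = b - a := by ring
        rw [e] at this
        exact this) hT T ⟨hT, le_rfl⟩
    simp only [sub_self, hφ0] at this
    exact hKD this
end
end

section
/- Let D ⊂ ℝⁿ be an open set containing x_eq. Then D equals the region of attraction D(x_eq) if and only if there exist a continuous function W : D → ℝ that is continuously differentiable on D and a continuous function η : ℝⁿ → ℝ such that: (1) 0 < W(x) < 1 for all x ∈ D \ {x_eq} and W(x_eq) = 0; (2) η(x_eq) = 0 and η(x) > 0 for all x ∈ D \ {x_eq}; (3) there exists c₀ > 0 such that for every c₃ ∈ (0, c₀) there exist c₁, c₂ > 0 with W(x) > c₁ and η(x) > c₂ whenever x ∈ D and |x − x_eq| ≥ c₃; (4) for every y ∈ ∂D and every sequence x_k ∈ D with x_k → y, W(x_k) → 1; (5) ∇W(x)·f(x) = −η(x)(1 − W(x)) for all x ∈ D. -/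
open Filter Topology
open scoped RealInnerProductSpace

noncomputable section

theorem zub_psi (m : ℝ → ℝ) (hm : Monotone m) (h0 : ∀ a, 0 ≤ m a) (hpos : ∀ a, 0 < a → 0 < m a) :
    ∃ ψ ψ' : ℝ → ℝ, (∀ a, HasDerivAt ψ (ψ' a) a) ∧ Continuous ψ' ∧
      ∀ a, 0 < a → a ≤ 1 → 0 < ψ a ∧ ψ a ≤ m a ∧ 0 ≤ ψ' a ∧ ψ' a ≤ m a := by
  have hmint : ∀ a b, IntervalIntegrable m MeasureTheory.volume a b := fun a b => hm.intervalIntegrable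
  have hcont : Continuous (fun s => ∫ x in (0:ℝ)..s, m x) :=
    intervalIntegral.continuous_primitive hmint 0
  have hpp : ∀ s, 0 < s → 0 < ∫ x in (0:ℝ)..s, m x := by
    intro s hs
    refine intervalIntegral.intervalIntegral_pos_of_pos_on (hmint _ _) ?_ hs
    intro x hx
    exact hpos x hx.1
  have hle : ∀ s, 0 ≤ s → ∫ x in (0:ℝ)..s, m x ≤ s * m s := by
    intro s hs
    have := intervalIntegral.integral_mono_on (μ := MeasureTheory.volume) hs (hmint 0 s)
      (intervalIntegrable_const (c := m s)) (fun x hx => hm hx.2)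
    simpa using this
  have hcint : ∀ a b, IntervalIntegrable (fun s => ∫ x in (0:ℝ)..s, m x) MeasureTheory.volume a b :=
    fun a b => hcont.intervalIntegrable a b
  refine ⟨fun a => ∫ s in (0:ℝ)..a, ∫ x in (0:ℝ)..s, m x, fun s => ∫ x in (0:ℝ)..s, m x, ?_, hcont, ?_⟩
  · intro a
    exact intervalIntegral.integral_hasDerivAt_right (hcint _ _)
      hcont.stronglyMeasurable.stronglyMeasurableAtFilter hcont.continuousAt
  · intro a ha ha1
    have h2 : ∫ x in (0:ℝ)..a, m x ≤ m a := (hle a ha.le).trans (by nlinarith [h0 a])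
    refine ⟨?_, ?_, (hpp a ha).le, h2⟩
    · exact intervalIntegral.intervalIntegral_pos_of_pos_on (hcint _ _) (fun x hx => hpp x hx.1) ha
    · have := intervalIntegral.integral_mono_on (μ := MeasureTheory.volume) ha.le (hcint 0 a)
        (intervalIntegrable_const (c := m a)) (fun x hx => by
          have h3 := hle x hx.1
          have h4 := hm hx.2
          have h5 := h0 x
          have h6 := hx.1
          have h7 := hx.2
          show ∫ t in (0:ℝ)..x, m t ≤ m a
          nlinarith)
      refine this.trans ?_
      simp
      nlinarith [h0 a]

theorem zub_radius {E : Type*} [NormedAddCommGroup E] [InnerProductSpace ℝ E]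
    [FiniteDimensional ℝ E] {U : Set E} (hU : IsOpen U) (P : E → ℝ → Prop)
    (hP : ∀ x ∈ U, ∃ ρ > 0, ∀ᶠ x' in 𝓝 x, ∀ ρ', 0 < ρ' → ρ' ≤ ρ → P x' ρ') :
    ∃ r : E → ℝ, ContDiff ℝ 1 r ∧ ∀ x ∈ U, 0 < r x ∧ ∃ ρ > 0, P x ρ ∧ r x ≤ ρ ∧
      ‖fderiv ℝ r x‖ ≤ ρ := by
  obtain ⟨g, hgs, hgc, hgr⟩ := hU.exists_contDiff_support_eq (n := 1)
  have hg0 : ∀ x, 0 ≤ g x := fun x => (hgr ⟨x, rfl⟩).1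
  have hg1 : ∀ x, g x ≤ 1 := fun x => (hgr ⟨x, rfl⟩).2
  set G : E → ℝ := fun x => g x / (1 + ‖x‖ ^ 2) with hG
  have hden : ∀ x : E, 0 < 1 + ‖x‖ ^ 2 := fun x => by positivity
  have hGc : ContDiff ℝ 1 G := by
    refine ContDiff.div (by exact_mod_cast hgc) ?_ (fun x => (hden x).ne')
    exact contDiff_const.add (contDiff_norm_sq ℝ)
  have hGpos : ∀ x ∈ U, 0 < G x := by
    intro x hx
    refine div_pos ((hg0 x).lt_of_ne' ?_) (hden x)
    rw [← hgs] at hx; exact hx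
  have hG1 : ∀ x, G x ≤ 1 := fun x => by
    rw [hG]; dsimp only; rw [div_le_one (hden x)]; nlinarith [hg1 x, sq_nonneg ‖x‖]
  have hGU : ∀ x, 0 < G x → x ∈ U := by
    intro x hx
    rw [← hgs]
    intro h
    simp [hG, h] at hx
  have hcpt : ∀ a, 0 < a → IsCompact {x | a ≤ G x} := by
    intro a ha
    refine Metric.isCompact_of_isClosed_isBounded (isClosed_le continuous_const hGc.continuous) ?_
    refine (Metric.isBounded_closedBall (x := (0:E)) (r := 1 / a + 1)).subset ?_
    intro x hx
    have hx : a ≤ g x / (1 + ‖x‖ ^ 2) := hx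
    rw [le_div_iff₀ (hden x)] at hx
    have h1 : 1 + ‖x‖ ^ 2 ≤ 1 / a := by
      rw [le_div_iff₀ ha]; nlinarith [hg1 x]
    simp only [Metric.mem_closedBall, dist_zero_right]
    nlinarith [sq_nonneg (‖x‖ - 1)]
  have hDG : Continuous (fun x => ‖fderiv ℝ G x‖) := (hGc.continuous_fderiv (by norm_num)).norm
  set Q : ℝ → ℝ → Prop := fun a m => ∀ x, a ≤ G x → ∀ ρ', 0 < ρ' → ρ' ≤ m →
    P x (ρ' * (1 + ‖fderiv ℝ G x‖)) with hQ
  set S : ℝ → Set ℝ := fun a => {m | 0 ≤ m ∧ m ≤ 1 ∧ Q a m} with hS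
  have hS0 : ∀ a, (0:ℝ) ∈ S a := fun a => ⟨le_rfl, zero_le_one, fun x _ ρ' h1 h2 => by linarith⟩
  have hSb : ∀ a, BddAbove (S a) := fun a => ⟨1, fun m hm => hm.2.1⟩
  have hSp : ∀ a, 0 < a → ∃ m ∈ S a, 0 < m := by
    intro a ha
    have key : ∃ m > 0, ∀ x ∈ {x | a ≤ G x}, ∀ ρ', 0 < ρ' → ρ' ≤ m →
        P x (ρ' * (1 + ‖fderiv ℝ G x‖)) := by
      refine (hcpt a ha).induction_on (p := fun s => ∃ m > 0, ∀ x ∈ s, ∀ ρ', 0 < ρ' → ρ' ≤ m →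
        P x (ρ' * (1 + ‖fderiv ℝ G x‖))) ?_ ?_ ?_ ?_
      · exact ⟨1, one_pos, by simp⟩
      · rintro s t hst ⟨m, hm, h⟩
        exact ⟨m, hm, fun x hx => h x (hst hx)⟩
      · rintro s t ⟨m, hm, h⟩ ⟨m', hm', h'⟩
        refine ⟨min m m', lt_min hm hm', fun x hx ρ' h1 h2 => ?_⟩
        rcases hx with hx | hx
        · exact h x hx ρ' h1 (h2.trans (min_le_left _ _))
        · exact h' x hx ρ' h1 (h2.trans (min_le_right _ _))
      · intro x hx
        obtain ⟨ρ, hρ, hev⟩ := hP x (hGU x (lt_of_lt_of_le ha hx))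
        have hb : ∀ᶠ x' in 𝓝 x, ‖fderiv ℝ G x'‖ < ‖fderiv ℝ G x‖ + 1 :=
          hDG.continuousAt.eventually_lt continuousAt_const (by simp)
        refine ⟨{x' | (∀ ρ', 0 < ρ' → ρ' ≤ ρ → P x' ρ') ∧ ‖fderiv ℝ G x'‖ < ‖fderiv ℝ G x‖ + 1},
          mem_nhdsWithin_of_mem_nhds (hev.and hb), ρ / (2 + ‖fderiv ℝ G x‖), by positivity, ?_⟩
        rintro x' ⟨h1, h2⟩ ρ' h3 h4
        refine h1 _ (by positivity) ?_
        rw [le_div_iff₀ (by positivity)] at h4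
        nlinarith
    obtain ⟨m, hm, h⟩ := key
    refine ⟨min m 1, ⟨(lt_min hm one_pos).le, min_le_right _ _, fun x hx ρ' h1 h2 => ?_⟩, lt_min hm one_pos⟩
    exact h x hx ρ' h1 (h2.trans (min_le_left _ _))
  set m : ℝ → ℝ := fun a => sSup (S a) / 2 with hm
  have hmpos : ∀ a, 0 < a → 0 < m a := by
    intro a ha
    obtain ⟨k, hk, hk0⟩ := hSp a ha
    exact half_pos (hk0.trans_le (le_csSup (hSb a) hk))
  have hmnn : ∀ a, 0 ≤ m a := fun a => by
    have := le_csSup (hSb a) (hS0 a)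
    simp only [hm]; linarith
  have hmm : Monotone m := by
    intro a b hab
    have : sSup (S a) ≤ sSup (S b) := by
      refine csSup_le_csSup (hSb b) ⟨0, hS0 a⟩ ?_
      rintro k ⟨h1, h2, h3⟩
      exact ⟨h1, h2, fun x hx => h3 x (hab.trans hx)⟩
    simp only [hm]; linarith
  obtain ⟨ψ, ψ', hψ, hψc, hψb⟩ := zub_psi m hmm hmnn hmpos
  have hψC : ContDiff ℝ 1 ψ := by
    rw [contDiff_one_iff_deriv]
    refine ⟨fun a => (hψ a).differentiableAt, ?_⟩
    have : deriv ψ = ψ' := funext fun a => (hψ a).deriv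
    rwa [this]
  refine ⟨ψ ∘ G, hψC.comp hGc, fun x hx => ?_⟩
  obtain ⟨b1, b2, b3, b4⟩ := hψb (G x) (hGpos x hx) (hG1 x)
  have hmp := hmpos _ (hGpos x hx)
  have hPx : P x (m (G x) * (1 + ‖fderiv ℝ G x‖)) := by
    have hlt : m (G x) < sSup (S (G x)) := by
      simp only [hm] at hmp ⊢; linarith
    obtain ⟨k, hk, hlk⟩ := exists_lt_of_lt_csSup ⟨0, hS0 _⟩ hlt
    exact hk.2.2 x le_rfl _ hmp hlk.le
  refine ⟨b1, m (G x) * (1 + ‖fderiv ℝ G x‖), by positivity, hPx, ?_, ?_⟩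
  · refine b2.trans ?_
    nlinarith [norm_nonneg (fderiv ℝ G x)]
  · have hd : HasFDerivAt (ψ ∘ G) (ψ' (G x) • fderiv ℝ G x) x :=
      (hψ (G x)).comp_hasFDerivAt x (hGc.differentiable (by norm_num) x).hasFDerivAt
    rw [hd.fderiv, norm_smul, Real.norm_of_nonneg b3]
    nlinarith [norm_nonneg (fderiv ℝ G x)]

theorem zub_kernel (E : Type*) [NormedAddCommGroup E] [InnerProductSpace ℝ E]
    [FiniteDimensional ℝ E] [MeasurableSpace E] [BorelSpace E] :
    ∃ k : E → ℝ, ContDiff ℝ 1 k ∧ (∀ z, 0 ≤ k z) ∧ MeasureTheory.Integrable k ∧ ∫ z, k z = 1 ∧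
      ∀ z, 1 ≤ ‖z‖ → k z = 0 := by
  let b : ContDiffBump (0 : E) := ⟨1 / 2, 1, by norm_num, by norm_num⟩
  refine ⟨b.normed MeasureTheory.volume, ?_, b.nonneg_normed, b.integrable_normed,
    b.integral_normed, ?_⟩
  · exact_mod_cast b.contDiff_normed (n := 1)
  · intro z hz
    by_contra h
    have : z ∈ Function.support (b.normed MeasureTheory.volume) := h
    rw [b.support_normed_eq] at this
    simp only [Metric.mem_ball, dist_zero_right] at this
    exact absurd this (not_lt.2 hz)

section smoothing
variable {E : Type*} [NormedAddCommGroup E] [InnerProductSpace ℝ E]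
    [FiniteDimensional ℝ E] [MeasurableSpace E] [BorelSpace E]

theorem zub_integrable {k : E → ℝ} (hkc : Continuous k) (hk0 : ∀ z, 1 ≤ ‖z‖ → k z = 0)
    {V0 : E → ℝ} {x : E} {R : ℝ} (hR : 0 ≤ R) (hV : ContinuousOn V0 (Metric.closedBall x R)) :
    MeasureTheory.Integrable (fun z => k z * V0 (x + R • z)) := by
  have hsub : Function.support (fun z => k z * V0 (x + R • z)) ⊆ Metric.closedBall (0:E) 1 := by
    intro z hz
    by_contra h
    apply hz
    simp only [Metric.mem_closedBall, dist_zero_right, not_le] at h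
    simp [hk0 z h.le]
  rw [← MeasureTheory.integrableOn_iff_integrable_of_support_subset hsub]
  refine ContinuousOn.integrableOn_compact (isCompact_closedBall _ _) ?_
  refine hkc.continuousOn.mul (hV.comp (by fun_prop) ?_)
  intro z hz
  simp only [Metric.mem_closedBall, dist_zero_right] at hz
  simp only [Metric.mem_closedBall, dist_self_add_left, norm_smul, Real.norm_of_nonneg hR]
  nlinarith

theorem zub_avg_le {k : E → ℝ} (hkc : Continuous k) (hkn : ∀ z, 0 ≤ k z)
    (hki : MeasureTheory.Integrable k)
    (hk1 : ∫ z, k z = 1) (hk0 : ∀ z, 1 ≤ ‖z‖ → k z = 0)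
    {V0 : E → ℝ} {x x' : E} {R R' c C : ℝ} (hR : 0 ≤ R) (hR' : 0 ≤ R')
    (hV : ContinuousOn V0 (Metric.closedBall x R))
    (hV' : ContinuousOn V0 (Metric.closedBall x' R'))
    (hb : ∀ z : E, ‖z‖ ≤ 1 → |V0 (x + R • z) - V0 (x' + R' • z) + c| ≤ C) :
    |(∫ z, k z * V0 (x + R • z)) - (∫ z, k z * V0 (x' + R' • z)) + c| ≤ C := by
  have h1 := zub_integrable hkc hk0 hR hV
  have h2 := zub_integrable hkc hk0 hR' hV'
  have hc : c = ∫ z, k z * c := by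
    rw [MeasureTheory.integral_mul_const, hk1, one_mul]
  have e : (∫ z, k z * V0 (x + R • z)) - (∫ z, k z * V0 (x' + R' • z)) + c
      = ∫ z, k z * (V0 (x + R • z) - V0 (x' + R' • z) + c) := by
    conv_lhs => rw [hc]
    rw [← MeasureTheory.integral_sub h1 h2]
    refine (MeasureTheory.integral_add (h1.sub h2) (hki.mul_const c)).symm.trans ?_
    congr 1
    ext z
    simp only [Pi.sub_apply]
    ring
  rw [e]
  have hC : C = ∫ z, k z * C := by
    rw [MeasureTheory.integral_mul_const, hk1, one_mul]
  rw [hC, ← Real.norm_eq_abs]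
  refine MeasureTheory.norm_integral_le_of_norm_le (hki.mul_const C) (Eventually.of_forall fun z => ?_)
  rw [norm_mul, Real.norm_of_nonneg (hkn z), Real.norm_eq_abs]
  by_cases hz : ‖z‖ ≤ 1
  · exact mul_le_mul_of_nonneg_left (hb z hz) (hkn z)
  · simp [hk0 z (not_le.1 hz).le]

theorem zub_avg_contDiffAt {k : E → ℝ} (hkc : ContDiff ℝ 1 k)
    (hk0 : ∀ z, 1 ≤ ‖z‖ → k z = 0)
    {V0 : E → ℝ} {r : E → ℝ} (hr : ContDiff ℝ 1 r) {x : E} {R : ℝ} (hrx : 0 < r x) (hrR : r x < R)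
    (hV : ContinuousOn V0 (Metric.closedBall x R)) :
    ContDiffAt ℝ 1 (fun y => ∫ z, k z * V0 (y + r y • z)) x := by
  set B := Metric.closedBall x R with hB
  set V1 : E → ℝ := B.indicator V0 with hV1
  have hV1i : MeasureTheory.Integrable V1 := by
    rw [hV1, MeasureTheory.integrable_indicator_iff Metric.isClosed_closedBall.measurableSet]
    exact hV.integrableOn_compact (isCompact_closedBall _ _)
  set N := Module.finrank ℝ E with hN
  set g : ℝ → E → ℝ := fun p u => (p ^ N)⁻¹ * k (-(p⁻¹ • u)) with hg
  have hconv := MeasureTheory.contDiffOn_convolution_right_with_param (μ := MeasureTheory.volume) (𝕜 := ℝ) (n := 1) (f := V1)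
    (ContinuousLinearMap.mul ℝ ℝ) (g := g) (s := Set.Ioo 0 R) (k := Metric.closedBall (0:E) R)
    isOpen_Ioo (isCompact_closedBall _ _) (by
      intro p u hp hu
      simp only [Metric.mem_closedBall, dist_zero_right, not_le] at hu
      have : k (-(p⁻¹ • u)) = 0 := by
        apply hk0
        rw [norm_neg, norm_smul, norm_inv, Real.norm_of_nonneg hp.1.le, ← div_eq_inv_mul,
          le_div_iff₀ hp.1]
        linarith [hp.2]
      simp [hg, this]) hV1i.locallyIntegrable (by
      have h1 : ContDiffOn ℝ 1 (fun q : ℝ × E => (q.1)⁻¹) (Set.Ioo 0 R ×ˢ Set.univ) :=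
        contDiffOn_fst.inv (fun q hq => hq.1.1.ne')
      have h2 : ContDiffOn ℝ 1 (fun q : ℝ × E => (q.1 ^ N)⁻¹) (Set.Ioo 0 R ×ˢ Set.univ) :=
        (contDiffOn_fst.pow N).inv (fun q hq => pow_ne_zero _ hq.1.1.ne')
      have h3 : ContDiffOn ℝ 1 (fun q : ℝ × E => -(q.1⁻¹ • q.2)) (Set.Ioo 0 R ×ˢ Set.univ) :=
        (h1.smul contDiffOn_snd).neg
      exact h2.mul (hkc.comp_contDiffOn h3))
  have hat : ContDiffAt ℝ 1 (fun q : ℝ × E => (MeasureTheory.convolution V1 (g q.1)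
      (ContinuousLinearMap.mul ℝ ℝ) MeasureTheory.volume) q.2) (r x, x) :=
    hconv.contDiffAt ((isOpen_Ioo.prod isOpen_univ).mem_nhds ⟨⟨hrx, hrR⟩, trivial⟩)
  have hcomp := ContDiffAt.comp x (g := (fun q : ℝ × E => (MeasureTheory.convolution V1 (g q.1)
      (ContinuousLinearMap.mul ℝ ℝ) MeasureTheory.volume) q.2)) (f := fun y => (r y, y)) hat
      (hr.contDiffAt.prodMk contDiffAt_id)
  refine hcomp.congr_of_eventuallyEq ?_
  have hrc := hr.continuous
  have e1 : ∀ᶠ y in 𝓝 x, 0 < r y := continuousAt_const.eventually_lt hrc.continuousAt hrx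
  have e2 : ∀ᶠ y in 𝓝 x, ‖y - x‖ + r y < R := by
    refine ContinuousAt.eventually_lt (f := fun y => ‖y - x‖ + r y) (by fun_prop)
      continuousAt_const (by simpa using hrR)
  filter_upwards [e1, e2] with y hy1 hy2
  simp only [Function.comp, MeasureTheory.convolution, ContinuousLinearMap.mul_apply']
  set p := r y
  have s1 : ∫ t, V1 t * g p (y - t) = ∫ s, V1 (y + s) * g p (y - (y + s)) :=
    (MeasureTheory.integral_add_left_eq_self (fun t => V1 t * g p (y - t)) y).symm
  have s2 : ∫ s, V1 (y + s) * g p (y - (y + s))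
      = ∫ s, (fun z => V1 (y + p • z) * ((p ^ N)⁻¹ * k z)) (p⁻¹ • s) := by
    congr 1
    ext s
    simp only [hg, sub_add_cancel_left, smul_neg, neg_neg, smul_smul, mul_inv_cancel₀ hy1.ne', one_smul]
  have s3 := MeasureTheory.Measure.integral_comp_inv_smul_of_nonneg (MeasureTheory.volume : MeasureTheory.Measure E)
    (fun z => V1 (y + p • z) * ((p ^ N)⁻¹ * k z)) hy1.le
  rw [s1, s2, s3, smul_eq_mul, ← MeasureTheory.integral_const_mul]
  congr 1
  ext z
  by_cases hz : 1 ≤ ‖z‖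
  · simp [hk0 z hz]
  · have hmem : y + p • z ∈ B := by
      rw [hB, Metric.mem_closedBall, dist_eq_norm]
      calc ‖y + p • z - x‖ = ‖(y - x) + p • z‖ := by congr 1; abel
        _ ≤ ‖y - x‖ + ‖p • z‖ := norm_add_le _ _
        _ ≤ ‖y - x‖ + p := by
          rw [norm_smul, Real.norm_of_nonneg hy1.le]; nlinarith
        _ ≤ R := hy2.le
    have hp : p ^ N ≠ 0 := pow_ne_zero _ hy1.ne'
    rw [hV1, Set.indicator_of_mem hmem]
    rw [← hN]
    field_simp

theorem zub_smooth {U : Set E} (hU : IsOpen U) (V0 η0 : E → ℝ) (f : E → E) (hf : Continuous f)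
    (ε : E → ℝ) (hε : ContinuousOn ε U) (hεp : ∀ x ∈ U, 0 < ε x)
    (hLip : ∀ x ∈ U, ∃ K : NNReal, ∃ ρ > 0, LipschitzOnWith K V0 (Metric.ball x ρ))
    (hstrict : ∀ x ∈ U, ∀ e > (0:ℝ), ∃ ρ > 0, ∀ x' y : E, ∀ h : ℝ, ‖x' - x‖ < ρ → ‖y - x‖ < ρ →
      0 < h → h < ρ → |V0 (y + h • f x') - V0 y + h * η0 x'| ≤ e * h) :
    ∃ V : E → ℝ, ContDiffOn ℝ 1 V U ∧ ∀ x ∈ U, |V x - V0 x| ≤ ε x ∧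
      |fderiv ℝ V x (f x) + η0 x| ≤ ε x ∧
      ∀ K : NNReal, LipschitzOnWith K V0 (Metric.ball x (ε x)) → ‖fderiv ℝ V x‖ ≤ 2 * K := by
  obtain ⟨k, hkc, hkn, hki, hk1, hk0⟩ := zub_kernel E
  obtain ⟨r, hrc, hr⟩ := zub_radius hU (fun x ρ => ρ ≤ 1 ∧ ρ < ε x ∧
    ∃ K : NNReal, LipschitzOnWith K V0 (Metric.ball x (3 * ρ)) ∧ K * ρ ≤ ε x ∧
      K * ρ * ‖f x‖ ≤ ε x / 2 ∧ ∃ h0 > 0, ∀ (y : E) (h : ℝ), ‖y - x‖ ≤ ρ → 0 < h → h < h0 →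
        |V0 (y + h • f x) - V0 y + h * η0 x| ≤ ε x / 2 * h) (by
    intro x hx
    obtain ⟨K, ρ0, hρ0, hK⟩ := hLip x hx
    have hex := hεp x hx
    obtain ⟨ρ1, hρ1, hs⟩ := hstrict x hx (ε x / 4) (by positivity)
    set q : ℝ := 4 * (K + 1) * (‖f x‖ + 1) with hq
    have hK0 : (0:ℝ) ≤ K := K.2
    have hq4 : 4 ≤ q := by rw [hq]; nlinarith [norm_nonneg (f x), mul_nonneg hK0 (norm_nonneg (f x))]
    have hq0 : 0 < q := by linarith
    refine ⟨min (min 1 (ε x / q)) (min (ρ0 / 6) (ρ1 / 6)), by positivity, ?_⟩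
    have e1 : ∀ᶠ x' in 𝓝 x, ε x / 2 < ε x' :=
      continuousAt_const.eventually_lt (hε.continuousAt (hU.mem_nhds hx)) (by linarith)
    have e2 : ∀ᶠ x' in 𝓝 x, ‖f x'‖ < ‖f x‖ + 1 :=
      hf.norm.continuousAt.eventually_lt continuousAt_const (by simp)
    have e3 : ∀ᶠ x' in 𝓝 x, ‖x' - x‖ < min (ρ0 / 2) (ρ1 / 2) := by
      refine ContinuousAt.eventually_lt (f := fun y => ‖y - x‖) (by fun_prop)
        continuousAt_const (by simp [hρ0, hρ1])
    filter_upwards [e1, e2, e3] with x' h1 h2 h3 ρ hρ hρle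
    obtain ⟨⟨l1, l2⟩, l3, l4⟩ : (ρ ≤ 1 ∧ ρ ≤ ε x / q) ∧ ρ ≤ ρ0 / 6 ∧ ρ ≤ ρ1 / 6 := by
      simpa only [le_min_iff] using hρle
    obtain ⟨h31, h32⟩ := lt_min_iff.1 h3
    rw [le_div_iff₀ hq0] at l2
    have l5 : ρ * (4 * (K + 1) * (‖f x‖ + 1)) ≤ ε x := l2
    have hfx := norm_nonneg (f x)
    have n1 : 0 ≤ ρ * K := by positivity
    have n2 : 0 ≤ ρ * ‖f x‖ := by positivity
    have n3 : 0 ≤ ρ * K * ‖f x‖ := by positivity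
    refine ⟨l1, by nlinarith, K, hK.mono ?_, by nlinarith, ?_, ρ1, hρ1, ?_⟩
    · refine Metric.ball_subset_ball' ?_
      rw [dist_eq_norm]; linarith
    · have : K * ρ * ‖f x'‖ ≤ K * ρ * (‖f x‖ + 1) := by gcongr
      nlinarith
    · intro y h hy hh0 hh1
      refine (hs x' y h (by linarith) ?_ hh0 hh1).trans ?_
      · calc ‖y - x‖ = ‖(y - x') + (x' - x)‖ := by congr 1; abel
          _ ≤ ‖y - x'‖ + ‖x' - x‖ := norm_add_le _ _
          _ < ρ1 := by linarith
      · nlinarith)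
  set V : E → ℝ := fun y => ∫ z, k z * V0 (y + r y • z) with hV
  have hVat : ∀ x ∈ U, ContDiffAt ℝ 1 V x := by
    intro x hx
    obtain ⟨hrx, ρ, hρ, ⟨-, -, K, hK, -⟩, hrρ, -⟩ := hr x hx
    exact zub_avg_contDiffAt hkc hk0 hrc hrx (R := 2 * ρ) (by linarith)
      (hK.continuousOn.mono (Metric.closedBall_subset_ball (by linarith)))
  refine ⟨V, fun x hx => (hVat x hx).contDiffWithinAt, fun x hx => ?_⟩
  obtain ⟨hrx, ρ, hρ, ⟨hρ1, hρε, K, hK, hK1, hK2, h0, hh0, hst⟩, hrρ, hDr⟩ := hr x hx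
  have hdV : HasFDerivAt V (fderiv ℝ V x) x := ((hVat x hx).differentiableAt (by norm_num)).hasFDerivAt
  have hdr : HasFDerivAt r (fderiv ℝ r x) x := (hrc.differentiable (by norm_num) x).hasFDerivAt
  have hex := hεp x hx
  have hrcc := hrc.continuous
  have hnear : ∀ s, r x < s → ∀ᶠ y in 𝓝 x, 0 < r y ∧ ‖y - x‖ + r y < s := by
    intro s hs
    refine (continuousAt_const.eventually_lt hrcc.continuousAt hrx).and ?_
    refine ContinuousAt.eventually_lt (f := fun y => ‖y - x‖ + r y) (by fun_prop)
      continuousAt_const (by simpa using hs)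
  have hmem : ∀ (s : ℝ) (y z : E) (R : ℝ), 0 ≤ R → ‖y - x‖ + R < s → ‖z‖ ≤ 1 →
      y + R • z ∈ Metric.ball x s := by
    intro s y z R hR hy hz
    rw [Metric.mem_ball, dist_eq_norm]
    calc ‖y + R • z - x‖ = ‖(y - x) + R • z‖ := by congr 1; abel
      _ ≤ ‖y - x‖ + ‖R • z‖ := norm_add_le _ _
      _ ≤ ‖y - x‖ + R := by
          rw [norm_smul, Real.norm_of_nonneg hR]; nlinarith
      _ < s := hy
  have hcb : ∀ (s : ℝ) (y : E) (R : ℝ), ‖y - x‖ + R < s →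
      Metric.closedBall y R ⊆ Metric.ball x s := by
    intro s y R h
    refine (Metric.closedBall_subset_ball' (ε₂ := s) ?_)
    rw [dist_eq_norm]; linarith
  have hKd : ∀ (K : NNReal) (s : ℝ), LipschitzOnWith K V0 (Metric.ball x s) → ∀ a ∈ Metric.ball x s, ∀ b ∈ Metric.ball x s,
      |V0 a - V0 b| ≤ K * ‖a - b‖ := by
    intro K s hK a ha b hb
    have := hK.dist_le_mul a ha b hb
    rwa [Real.dist_eq, dist_eq_norm] at this
  have hsmul : ∀ (R : ℝ) (z : E), ‖z‖ ≤ 1 → ‖R • z‖ ≤ |R| := by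
    intro R z hz
    rw [norm_smul, Real.norm_eq_abs]
    nlinarith [abs_nonneg R]
  refine ⟨?_, ?_, ?_⟩
  · have e0 : V0 x = ∫ z, k z * V0 (x + (0:ℝ) • z) := by
      simp [MeasureTheory.integral_mul_const, hk1]
    have := zub_avg_le hkc.continuous hkn hki hk1 hk0 (V0 := V0) (x := x) (x' := x) (R := r x)
      (R' := 0) (c := 0) (C := ε x) hrx.le le_rfl
      (hK.continuousOn.mono (hcb _ _ _ (by simp; linarith)))
      (hK.continuousOn.mono (hcb _ _ _ (by simp; linarith))) (by
        intro z hz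
        have := hKd K _ hK (x + r x • z) (hmem _ _ _ _ hrx.le (by simp; linarith) hz)
          (x + (0:ℝ) • z) (hmem _ _ _ _ le_rfl (by simp; linarith) hz)
        rw [add_zero]
        refine this.trans (le_trans ?_ hK1)
        have h5 := hsmul (r x) z hz
        rw [abs_of_pos hrx] at h5
        simp only [zero_smul, add_zero, add_sub_cancel_left]
        gcongr
        linarith)
    rw [← e0, add_zero] at this
    exact this
  · set v := f x with hv
    have hline : HasDerivAt (fun h : ℝ => x + h • v) v 0 := by
      simpa using ((hasDerivAt_id (0:ℝ)).smul_const v).const_add x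
    have d1 : HasDerivAt (fun h : ℝ => V (x + h • v)) (fderiv ℝ V x v) 0 :=
      HasFDerivAt.comp_hasDerivAt (l := V) (l' := fderiv ℝ V x) (0:ℝ) (by simpa using hdV) hline
    have d2 : HasDerivAt (fun h : ℝ => r (x + h • v)) (fderiv ℝ r x v) 0 :=
      HasFDerivAt.comp_hasDerivAt (l := r) (l' := fderiv ℝ r x) (0:ℝ) (by simpa using hdr) hline
    have t1 := d1.tendsto_slope_zero_right
    have t2 := d2.tendsto_slope_zero_right
    simp only [zero_add, zero_smul, add_zero, smul_eq_mul] at t1 t2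
    have hlim := le_of_tendsto_of_tendsto (t1.add_const (η0 x)).abs
      ((t2.abs.const_mul (K:ℝ)).add_const (ε x / 2)) (by
        have hcl : Tendsto (fun h : ℝ => x + h • v) (𝓝[>] 0) (𝓝 x) := by
          have : ContinuousAt (fun h : ℝ => x + h • v) 0 := hline.continuousAt
          have h2 := this.tendsto
          simp only [zero_smul, add_zero] at h2
          exact h2.mono_left nhdsWithin_le_nhds
        have hv2 : ∀ᶠ h : ℝ in 𝓝[>] 0, ‖h • v‖ < ρ := by
          have : ContinuousAt (fun h : ℝ => ‖h • v‖) 0 := by fun_prop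
          exact (this.eventually_lt continuousAt_const (by simpa using hρ)).filter_mono nhdsWithin_le_nhds
        filter_upwards [hcl.eventually (hnear (2 * ρ) (by linarith)), self_mem_nhdsWithin,
          (eventually_lt_nhds hh0).filter_mono nhdsWithin_le_nhds, hv2] with h hh hpos hlt hhv
        have hpos : 0 < h := hpos
        have hmain := zub_avg_le hkc.continuous hkn hki hk1 hk0 (V0 := V0) (x := x + h • v) (x' := x)
          (R := r (x + h • v)) (R' := r x) (c := h * η0 x)
          (C := K * |r (x + h • v) - r x| + ε x / 2 * h) hh.1.le hrx.le
          (hK.continuousOn.mono (hcb _ _ _ (by linarith [hh.2])))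
          (hK.continuousOn.mono (hcb _ _ _ (by simp; linarith))) (by
            intro z hz
            have m1 := hmem (3 * ρ) _ z _ hh.1.le (by linarith [hh.2]) hz
            have m2 := hmem (3 * ρ) (x + h • v) z (r x) hrx.le (by simp only [add_sub_cancel_left]; linarith [hh.2]) hz
            have b1 := hKd K _ hK _ m1 _ m2
            have b2 := hst (x + r x • z) h (by
              have := hsmul (r x) z hz
              rw [abs_of_pos hrx] at this
              simp only [add_sub_cancel_left]; linarith) hpos hlt
            have e1 : x + r x • z + h • f x = x + h • v + r x • z := by rw [hv]; abel
            rw [e1] at b2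
            have e2 : x + h • v + r (x + h • v) • z - (x + h • v + r x • z)
              = (r (x + h • v) - r x) • z := by rw [sub_smul]; abel
            rw [e2] at b1
            have b3 : |V0 (x + h • v + r (x + h • v) • z) - V0 (x + h • v + r x • z)|
              ≤ K * |r (x + h • v) - r x| := b1.trans (by
                have := hsmul (r (x + h • v) - r x) z hz
                gcongr)
            have := abs_add_le (V0 (x + h • v + r (x + h • v) • z) - V0 (x + h • v + r x • z))
              (V0 (x + h • v + r x • z) - V0 (x + r x • z) + h * η0 x)
            have e3 : V0 (x + h • v + r (x + h • v) • z) - V0 (x + r x • z) + h * η0 x =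
              (V0 (x + h • v + r (x + h • v) • z) - V0 (x + h • v + r x • z)) +
              (V0 (x + h • v + r x • z) - V0 (x + r x • z) + h * η0 x) := by ring
            rw [e3]
            linarith)
        have hmain : |V (x + h • v) - V x + h * η0 x| ≤ K * |r (x + h • v) - r x| + ε x / 2 * h := hmain
        have e4 : h⁻¹ * (V (x + h • v) - V x) + η0 x = h⁻¹ * (V (x + h • v) - V x + h * η0 x) := by
          field_simp
        rw [e4, abs_mul, abs_mul, abs_of_pos (inv_pos.2 hpos)]
        have e5 : (K:ℝ) * (h⁻¹ * |r (x + h • v) - r x|) + ε x / 2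
          = h⁻¹ * (K * |r (x + h • v) - r x| + ε x / 2 * h) := by field_simp
        rw [e5]
        exact mul_le_mul_of_nonneg_left hmain (inv_pos.2 hpos).le)
    refine hlim.trans ?_
    have : |fderiv ℝ r x v| ≤ ρ * ‖v‖ := by
      have := (fderiv ℝ r x).le_opNorm v
      rw [Real.norm_eq_abs] at this
      exact this.trans (by gcongr)
    have h3 : (K:ℝ) * |fderiv ℝ r x v| ≤ K * (ρ * ‖v‖) := by gcongr
    linarith
  · intro K' hK'
    have hC0 : (0:ℝ) ≤ K' := K'.2
    refine le_of_forall_pos_le_add fun e he => ?_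
    refine hdV.le_of_lip' (by positivity) ?_
    obtain ⟨e', he', hee⟩ : ∃ e' > 0, K' * e' ≤ e :=
      ⟨e / (K' + 1), by positivity, by rw [mul_div_assoc', div_le_iff₀ (by positivity)]; nlinarith⟩
    have hrl : ∀ᶠ y in 𝓝 x, |r y - r x| ≤ (1 + e') * ‖y - x‖ := by
      have := hdr.isLittleO.def he'
      filter_upwards [this] with y hy
      have h6 := (fderiv ℝ r x).le_opNorm (y - x)
      have h7 : ‖fderiv ℝ r x‖ * ‖y - x‖ ≤ 1 * ‖y - x‖ := by gcongr; linarith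
      rw [Real.norm_eq_abs] at hy h6
      have h8 := abs_add_le (r y - r x - fderiv ℝ r x (y - x)) (fderiv ℝ r x (y - x))
      rw [sub_add_cancel] at h8
      linarith
    filter_upwards [hnear (ε x) (by linarith), hrl] with y hy hry
    have := zub_avg_le hkc.continuous hkn hki hk1 hk0 (V0 := V0) (x := y) (x' := x) (R := r y)
      (R' := r x) (c := 0) (C := (2 * K' + e) * ‖y - x‖) hy.1.le hrx.le
      (hK'.continuousOn.mono (hcb _ _ _ hy.2))
      (hK'.continuousOn.mono (hcb _ _ _ (by simp; linarith))) (by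
        intro z hz
        have := hKd K' _ hK' (y + r y • z) (hmem _ _ _ _ hy.1.le hy.2 hz)
          (x + r x • z) (hmem _ _ _ _ hrx.le (by simp; linarith) hz)
        rw [add_zero]
        refine this.trans ?_
        have e2 : y + r y • z - (x + r x • z) = (y - x) + (r y - r x) • z := by rw [sub_smul]; abel
        have h5 := hsmul (r y - r x) z hz
        rw [e2]
        have h6 : ‖(y - x) + (r y - r x) • z‖ ≤ (2 + e') * ‖y - x‖ := by
          refine (norm_add_le _ _).trans ?_
          linarith
        have h7 := mul_le_mul_of_nonneg_left h6 hC0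
        have h8 := mul_le_mul_of_nonneg_right hee (norm_nonneg (y - x))
        nlinarith)
    rw [add_zero] at this
    exact this

end smoothing

section flow
variable {E : Type*} [NormedAddCommGroup E] [InnerProductSpace ℝ E] [FiniteDimensional ℝ E]

structure ZubFlow (f : E → E) (φ : ℝ → E → E) : Prop where
  lip : LocallyLipschitz f
  zero : ∀ x, φ 0 x = x
  deriv : ∀ x, ∀ t ≥ (0:ℝ), HasDerivWithinAt (fun s => φ s x) (f (φ t x)) (Set.Ici 0) t
  add : ∀ x, ∀ s ≥ (0:ℝ), ∀ t ≥ (0:ℝ), φ s (φ t x) = φ (t + s) x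

variable {f : E → E} {φ : ℝ → E → E}

theorem ZubFlow.cont (H : ZubFlow f φ) (x : E) : ContinuousOn (fun t => φ t x) (Set.Ici 0) :=
  fun t ht => (H.deriv x t ht).continuousWithinAt

theorem ZubFlow.gronwall (H : ZubFlow f φ) {s : Set E} {K : NNReal} (hK : LipschitzOnWith K f s)
    {x y : E} {T : ℝ} (hx : ∀ t, 0 ≤ t → t ≤ T → φ t x ∈ s) (hy : ∀ t, 0 ≤ t → t ≤ T → φ t y ∈ s) :
    ∀ t, 0 ≤ t → t ≤ T → ‖φ t x - φ t y‖ ≤ ‖x - y‖ * Real.exp (K * t) := by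
  intro t h0 hT
  have := dist_le_of_trajectories_ODE_of_mem (v := fun _ => f) (s := fun _ => s) (K := K)
    (f := fun t => φ t x) (g := fun t => φ t y) (a := 0) (b := T) (δ := ‖x - y‖)
    (fun t _ => hK) ((H.cont x).mono Set.Icc_subset_Ici_self)
    (fun t ht => (H.deriv x t ht.1).mono (Set.Ici_subset_Ici.2 ht.1)) (fun t ht => hx t ht.1 ht.2.le)
    ((H.cont y).mono Set.Icc_subset_Ici_self)
    (fun t ht => (H.deriv y t ht.1).mono (Set.Ici_subset_Ici.2 ht.1)) (fun t ht => hy t ht.1 ht.2.le)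
    (by simp [H.zero, dist_eq_norm]) t ⟨h0, hT⟩
  simpa [dist_eq_norm] using this

theorem ZubFlow.flow_lip (H : ZubFlow f φ) (x : E) {T : ℝ} (hT : 0 ≤ T) :
    ∃ L : ℝ, 0 ≤ L ∧ ∃ ρ > 0, ∀ y z : E, ‖y - x‖ < ρ → ‖z - x‖ < ρ → ∀ t, 0 ≤ t → t ≤ T →
      ‖φ t y - φ t z‖ ≤ L * ‖y - z‖ := by
  have hcpt : IsCompact ((fun t => φ t x) '' Set.Icc 0 T) :=
    isCompact_Icc.image_of_continuousOn ((H.cont x).mono Set.Icc_subset_Ici_self)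
  obtain ⟨R, hR⟩ := hcpt.isBounded.subset_closedBall x
  have hRx : ∀ t, 0 ≤ t → t ≤ T → φ t x ∈ Metric.closedBall x R := fun t h1 h2 => hR ⟨t, ⟨h1, h2⟩, rfl⟩
  obtain ⟨K, hK⟩ := LocallyLipschitzOn.exists_lipschitzOnWith_of_compact
    (isCompact_closedBall x (R + 1)) (H.lip.locallyLipschitzOn (s := Metric.closedBall x (R + 1)))
  have hRx' : ∀ t, 0 ≤ t → t ≤ T → φ t x ∈ Metric.closedBall x (R + 1) := fun t h1 h2 =>
    Metric.closedBall_subset_closedBall (by linarith) (hRx t h1 h2)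
  have hK0 : (0:ℝ) ≤ K := K.2
  have key : ∀ y, ‖y - x‖ < Real.exp (-(K * T)) / 2 → ∀ t, 0 ≤ t → t ≤ T →
      φ t y ∈ Metric.closedBall x (R + 1) := by
    intro y hy
    have hR0 : 0 ≤ R := by
      have := hRx 0 le_rfl hT
      rw [H.zero] at this
      simpa using this
    have hy1 : ‖y - x‖ < 1 := by
      have : Real.exp (-(K * T)) ≤ 1 := Real.exp_le_one_iff.2 (by simp; positivity)
      linarith
    have hsub : Set.Icc 0 T ⊆ {t | φ t y ∈ Metric.closedBall x (R + 1)} := by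
      apply IsClosed.Icc_subset_of_forall_mem_nhdsGT_of_Icc_subset
      · rw [Set.inter_comm]
        exact ((H.cont y).mono Set.Icc_subset_Ici_self).preimage_isClosed_of_isClosed isClosed_Icc
          Metric.isClosed_closedBall
      · simp only [Set.mem_ofPred_eq, H.zero, Metric.mem_closedBall, dist_eq_norm]
        linarith
      · intro t ht hts
        have hg := H.gronwall hK (x := y) (y := x) (T := t) (fun s h1 h2 => hts ⟨h1, h2⟩)
          (fun s h1 h2 => hRx' s h1 (h2.trans ht.2.le)) t ht.1 le_rfl
        have h2 : ‖y - x‖ * Real.exp (K * t) < 1 := by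
          have e1 : Real.exp (K * t) ≤ Real.exp (K * T) :=
            Real.exp_le_exp.2 (mul_le_mul_of_nonneg_left ht.2.le hK0)
          have e2 : Real.exp (-(K * T)) * Real.exp (K * T) = 1 := by rw [← Real.exp_add]; simp
          nlinarith [Real.exp_pos (K * T), norm_nonneg (y - x)]
        have hmem : φ t y ∈ Metric.ball x (R + 1) := by
          have h3 := hRx t ht.1 ht.2.le
          rw [Metric.mem_closedBall] at h3
          rw [Metric.mem_ball]
          have := dist_triangle (φ t y) (φ t x) x
          rw [dist_eq_norm (φ t y) (φ t x)] at this
          linarith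
        have hc : ContinuousWithinAt (fun s => φ s y) (Set.Ioi t) t :=
          (H.cont y t ht.1).mono (fun s hs => ht.1.trans (le_of_lt hs))
        filter_upwards [hc.eventually (Metric.isOpen_ball.mem_nhds hmem)] with s hs
        exact Metric.ball_subset_closedBall hs
    intro t h1 h2
    exact hsub ⟨h1, h2⟩
  refine ⟨Real.exp (K * T), (Real.exp_pos _).le, Real.exp (-(K * T)) / 2, by positivity, ?_⟩
  intro y z hy hz t h1 h2
  have := H.gronwall hK (key y hy) (key z hz) t h1 h2
  refine this.trans ?_
  rw [mul_comm]
  gcongr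

theorem ZubFlow.cont_zero (H : ZubFlow f φ) (x : E) {e : ℝ} (he : 0 < e) :
    ∃ ρ > 0, ∀ (y : E) (s : ℝ), ‖y - x‖ < ρ → 0 ≤ s → s < ρ → ‖φ s y - x‖ < e := by
  obtain ⟨L, hL, ρ, hρ, h⟩ := H.flow_lip x zero_le_one
  have hc := H.cont x 0 (by simp)
  rw [Metric.continuousWithinAt_iff] at hc
  obtain ⟨d, hd, hc⟩ := hc (e / 2) (by positivity)
  refine ⟨min (min 1 ρ) (min d (e / (2 * (L + 1)))), by positivity, ?_⟩
  intro y s hy hs0 hs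
  simp only [lt_min_iff] at hy hs
  obtain ⟨⟨-, hy1⟩, -, hy2⟩ := hy
  obtain ⟨⟨hs1, -⟩, hs2, -⟩ := hs
  have h1 := h y x hy1 (by simpa using hρ) s hs0 hs1.le
  have h2 := hc (x := s) hs0 (by simpa [abs_of_nonneg hs0] using hs2)
  rw [H.zero, dist_eq_norm] at h2
  rw [lt_div_iff₀ (by positivity)] at hy2
  calc ‖φ s y - x‖ = ‖(φ s y - φ s x) + (φ s x - x)‖ := by congr 1; abel
    _ ≤ ‖φ s y - φ s x‖ + ‖φ s x - x‖ := norm_add_le _ _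
    _ < e := by nlinarith [norm_nonneg (y - x)]

theorem ZubFlow.taylor (H : ZubFlow f φ) (x : E) {e : ℝ} (he : 0 < e) :
    ∃ ρ > 0, ∀ (x' y : E) (h : ℝ), ‖x' - x‖ < ρ → ‖y - x‖ < ρ → 0 ≤ h → h < ρ →
      ‖φ h y - y - h • f x'‖ ≤ e * h := by
  have hfc := H.lip.continuous.continuousAt (x := x)
  rw [Metric.continuousAt_iff] at hfc
  obtain ⟨d, hd, hfc⟩ := hfc (e / 2) (by positivity)
  obtain ⟨ρ, hρ, hc⟩ := H.cont_zero x hd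
  refine ⟨min ρ d, by positivity, ?_⟩
  intro x' y h hx hy h0 hh
  rw [lt_min_iff] at hx hy hh
  have hx' := hfc (by rw [dist_eq_norm]; exact hx.2)
  have := norm_image_sub_le_of_norm_deriv_le_segment' (f := fun s => φ s y - s • f x')
    (f' := fun s => f (φ s y) - f x') (a := 0) (b := h) (C := e) (by
      intro s hs
      have h1 := (H.deriv y s hs.1).mono (Set.Icc_subset_Ici_self : Set.Icc 0 h ⊆ Set.Ici 0)
      have h2 : HasDerivWithinAt (fun s : ℝ => s • f x') (f x') (Set.Icc 0 h) s := by
        simpa using ((hasDerivAt_id s).smul_const (f x')).hasDerivWithinAt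
      exact h1.sub h2) (by
      intro s hs
      have h1 := hfc (x := φ s y) (by rw [dist_eq_norm]; exact hc y s hy.1 hs.1 (hs.2.trans hh.1))
      have h2 := dist_triangle_right (f (φ s y)) (f x') (f x)
      rw [dist_eq_norm (f (φ s y)) (f x')] at h2
      linarith) h ⟨h0, le_rfl⟩
  simp only [H.zero, zero_smul, sub_zero] at this
  rwa [sub_right_comm]

end flow

section lyap
variable {E : Type*} [NormedAddCommGroup E] [InnerProductSpace ℝ E] [FiniteDimensional ℝ E]

def zubV (φ : ℝ → E → E) (xeq : E) (p : ℕ) (x : E) : ℝ :=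
  ∫ t in Set.Ioi (0:ℝ), ‖φ t x - xeq‖ ^ p

structure ZubSys (f : E → E) (φ : ℝ → E → E) (xeq : E) (p : ℕ) (δ C : ℝ) : Prop where
  flow : ZubFlow f φ
  hp : 2 ≤ p
  hδ : 0 < δ
  hC : 0 ≤ C
  fix : ∀ t ≥ (0:ℝ), φ t xeq = xeq
  attract : ∀ x, ‖x - xeq‖ ≤ δ → Tendsto (fun t => φ t x) atTop (𝓝 xeq)
  integ : ∀ x, ‖x - xeq‖ ≤ δ →
    MeasureTheory.IntegrableOn (fun t => ‖φ t x - xeq‖ ^ p) (Set.Ioi (0:ℝ))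
  lipV : ∀ x y s, ‖x - xeq‖ ≤ s → ‖y - xeq‖ ≤ s → s ≤ δ →
    |zubV φ xeq p x - zubV φ xeq p y| ≤ C * s * ‖x - y‖

variable {f : E → E} {φ : ℝ → E → E}

theorem ZubFlow.contq (H : ZubFlow f φ) (xeq : E) (p : ℕ) (x : E) :
    ContinuousOn (fun t => ‖φ t x - xeq‖ ^ p) (Set.Ici 0) :=
  (((H.cont x).sub continuousOn_const).norm).pow p

theorem ZubFlow.sys (H : ZubFlow f φ) {xeq : E}
    (hstab : ∃ δ > (0:ℝ), ∃ M > (0:ℝ), ∃ c > (0:ℝ), ∀ x : E,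
      ‖x - xeq‖ ≤ δ → ∀ t ≥ (0:ℝ), ‖φ t x - xeq‖ ≤ M * ‖x - xeq‖ * Real.exp (-c * t)) :
    ∃ p δ C, ZubSys f φ xeq p δ C := by
  obtain ⟨δ, hδ, M0, hM0, c, hc, hst0⟩ := hstab
  set M := max M0 1 with hM
  have hM1 : 1 ≤ M := le_max_right _ _
  have hst : ∀ x : E, ‖x - xeq‖ ≤ δ → ∀ t ≥ (0:ℝ), ‖φ t x - xeq‖ ≤ M * ‖x - xeq‖ * Real.exp (-c * t) := by
    intro x hx t ht
    refine (hst0 x hx t ht).trans ?_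
    gcongr
    exact le_max_left _ _
  obtain ⟨K, hK⟩ := LocallyLipschitzOn.exists_lipschitzOnWith_of_compact
    (isCompact_closedBall xeq δ) (H.lip.locallyLipschitzOn (s := Metric.closedBall xeq δ))
  have hK0 : (0:ℝ) ≤ K := K.2
  obtain ⟨N, hN⟩ := exists_nat_ge ((K + 1) / c)
  have hN' : K + 1 ≤ N * c := by rwa [div_le_iff₀ hc] at hN
  set p := N + 2 with hp
  set δ1 := min δ 1 / M with hδ1
  have hδ1p : 0 < δ1 := by positivity
  have hMδ : M * δ1 = min δ 1 := by rw [hδ1]; field_simp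
  have hMd : M * δ1 ≤ δ := hMδ ▸ min_le_left _ _
  have hM1' : M * δ1 ≤ 1 := hMδ ▸ min_le_right _ _
  have hδ1δ : δ1 ≤ δ := by nlinarith
  have hexp1 : ∀ t, 0 ≤ t → Real.exp (-c * t) ≤ 1 := fun t ht =>
    Real.exp_le_one_iff.2 (by nlinarith)
  have hbd : ∀ x s, ‖x - xeq‖ ≤ s → s ≤ δ1 → ∀ t, 0 ≤ t → ‖φ t x - xeq‖ ≤ M * s * Real.exp (-c * t) := by
    intro x s h1 h2 t ht
    refine (hst x (by linarith) t ht).trans ?_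
    gcongr
  -- powers of the decaying exponential
  have hpow : ∀ s t, 0 ≤ s → s ≤ δ1 → 0 ≤ t →
      (M * s * Real.exp (-c * t)) ^ (N + 1) * Real.exp (K * t) ≤ M * s * Real.exp (-t) := by
    intro s t hs hs1 ht
    have hMs : M * s ≤ 1 := le_trans (by gcongr) hM1'
    have hMs0 : 0 ≤ M * s := by positivity
    rw [mul_pow, ← Real.exp_nat_mul, mul_assoc, ← Real.exp_add]
    have h1 : (M * s) ^ (N + 1) ≤ M * s := by
      rw [pow_succ]
      have := pow_le_one₀ (n := N) hMs0 hMs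
      nlinarith
    have h2 : Real.exp (((N + 1 : ℕ) : ℝ) * (-c * t) + K * t) ≤ Real.exp (-t) := by
      apply Real.exp_le_exp.2
      push_cast
      nlinarith [mul_nonneg hc.le ht, mul_le_mul_of_nonneg_right hN' ht]
    gcongr
  have hexpint : MeasureTheory.IntegrableOn (fun t : ℝ => Real.exp (-t)) (Set.Ioi 0) := by
    simpa using exp_neg_integrableOn_Ioi 0 one_pos
  have hmeas : ∀ x, MeasureTheory.AEStronglyMeasurable (fun t => ‖φ t x - xeq‖ ^ p)
      (MeasureTheory.volume.restrict (Set.Ioi (0:ℝ))) := fun x =>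
    ((H.contq xeq p x).mono Set.Ioi_subset_Ici_self).aestronglyMeasurable measurableSet_Ioi
  have hinteg : ∀ x, ‖x - xeq‖ ≤ δ1 →
    MeasureTheory.IntegrableOn (fun t => ‖φ t x - xeq‖ ^ p) (Set.Ioi (0:ℝ)) := by
    intro x hx
    refine MeasureTheory.Integrable.mono' hexpint (hmeas x) ?_
    filter_upwards [MeasureTheory.ae_restrict_mem measurableSet_Ioi] with t ht
    have ht : 0 < t := ht
    have h1 := hbd x δ1 hx le_rfl t ht.le
    rw [Real.norm_of_nonneg (by positivity)]
    have h2 := hpow δ1 t hδ1p.le le_rfl ht.le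
    have h3 : M * δ1 * Real.exp (-c * t) ≤ 1 := by nlinarith [hexp1 t ht.le, Real.exp_pos (-c * t)]
    have h0 : 0 ≤ M * δ1 * Real.exp (-c * t) := by positivity
    calc ‖φ t x - xeq‖ ^ p ≤ (M * δ1 * Real.exp (-c * t)) ^ p := by gcongr
      _ = (M * δ1 * Real.exp (-c * t)) ^ (N + 1) * (M * δ1 * Real.exp (-c * t)) := by rw [hp, ← pow_succ]
      _ ≤ (M * δ1 * Real.exp (-c * t)) ^ (N + 1) * Real.exp (K * t) := by
        gcongr
        exact h3.trans (Real.one_le_exp (by positivity))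
      _ ≤ M * δ1 * Real.exp (-t) := h2
      _ ≤ Real.exp (-t) := by nlinarith [Real.exp_pos (-t)]
  refine ⟨p, δ1, p * M, H, by omega, hδ1p, by positivity, ?_, ?_, hinteg, ?_⟩
  · intro t ht
    have := hst xeq (by simp [hδ.le]) t ht
    simp only [sub_self, norm_zero, mul_zero, zero_mul] at this
    exact sub_eq_zero.1 (norm_le_zero_iff.1 this)
  · intro x hx
    rw [tendsto_iff_norm_sub_tendsto_zero]
    have h1 : Tendsto (fun t : ℝ => M * δ1 * Real.exp (-c * t)) atTop (𝓝 0) := by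
      have h2 : Tendsto (fun t : ℝ => -c * t) atTop atBot :=
        tendsto_id.const_mul_atTop_of_neg (by linarith)
      simpa using (Real.tendsto_exp_atBot.comp h2).const_mul (M * δ1)
    refine squeeze_zero' (Eventually.of_forall fun t => norm_nonneg _) ?_ h1
    filter_upwards [eventually_ge_atTop 0] with t ht
    exact hbd x δ1 hx le_rfl t ht
  · intro x y s hx hy hs
    have hs0 : 0 ≤ s := (norm_nonneg _).trans hx
    have hin : ∀ z, ‖z - xeq‖ ≤ s → ∀ t, 0 ≤ t → φ t z ∈ Metric.closedBall xeq δ := by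
      intro z hz t ht
      rw [Metric.mem_closedBall, dist_eq_norm]
      refine (hbd z s hz hs t ht).trans (le_trans ?_ hMd)
      have : M * s ≤ M * δ1 := by gcongr
      have h0 : 0 ≤ M * s := by positivity
      nlinarith [hexp1 t ht, Real.exp_pos (-c * t)]
    unfold zubV
    rw [← MeasureTheory.integral_sub (hinteg x (hx.trans hs)) (hinteg y (hy.trans hs)), ← Real.norm_eq_abs]
    have hI : ∫ t in Set.Ioi (0:ℝ), (p * M * s * ‖x - y‖) * Real.exp (-t) = p * M * s * ‖x - y‖ := by
      rw [MeasureTheory.integral_const_mul, integral_exp_neg_Ioi_zero, mul_one]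
    rw [← hI]
    refine MeasureTheory.norm_integral_le_of_norm_le (hexpint.const_mul _) ?_
    filter_upwards [MeasureTheory.ae_restrict_mem measurableSet_Ioi] with t ht
    have ht : 0 < t := ht
    have hg := H.gronwall hK (x := x) (y := y) (T := t) (fun u h1 _ => hin x hx u h1)
      (fun u h1 _ => hin y hy u h1) t ht.le le_rfl
    have hab : |‖φ t x - xeq‖ - ‖φ t y - xeq‖| ≤ ‖φ t x - φ t y‖ := by
      have := abs_norm_sub_norm_le (φ t x - xeq) (φ t y - xeq)
      simpa using this
    have hp1 := abs_pow_sub_pow_le (‖φ t x - xeq‖) (‖φ t y - xeq‖) p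
    rw [abs_norm, abs_norm] at hp1
    have hmax : max ‖φ t x - xeq‖ ‖φ t y - xeq‖ ≤ M * s * Real.exp (-c * t) :=
      max_le (hbd x s hx hs t ht.le) (hbd y s hy hs t ht.le)
    rw [Real.norm_eq_abs]
    calc |‖φ t x - xeq‖ ^ p - ‖φ t y - xeq‖ ^ p|
        ≤ |‖φ t x - xeq‖ - ‖φ t y - xeq‖| * p * max ‖φ t x - xeq‖ ‖φ t y - xeq‖ ^ (p - 1) := hp1
      _ ≤ (‖x - y‖ * Real.exp (K * t)) * p * (M * s * Real.exp (-c * t)) ^ (N + 1) := by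
        have : p - 1 = N + 1 := by omega
        rw [this]
        gcongr
        exact hab.trans hg
      _ = p * ‖x - y‖ * ((M * s * Real.exp (-c * t)) ^ (N + 1) * Real.exp (K * t)) := by ring
      _ ≤ p * ‖x - y‖ * (M * s * Real.exp (-t)) := by
        gcongr p * ‖x - y‖ * ?_
        exact hpow s t hs0 hs ht.le
      _ = p * M * s * ‖x - y‖ * Real.exp (-t) := by ring

end lyap

section lyap2
variable {E : Type*} [NormedAddCommGroup E] [InnerProductSpace ℝ E] [FiniteDimensional ℝ E]
variable {f : E → E} {φ : ℝ → E → E} {xeq : E} {p : ℕ} {δ C : ℝ}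

def zubD (φ : ℝ → E → E) (xeq : E) : Set E := {x | Tendsto (fun t => φ t x) atTop (𝓝 xeq)}

theorem ZubFlow.mem_iff (H : ZubFlow f φ) (x : E) {T : ℝ} (hT : 0 ≤ T) :
    φ T x ∈ zubD φ xeq ↔ x ∈ zubD φ xeq := by
  have h1 : (fun t => φ t (φ T x)) =ᶠ[atTop] (fun t => φ (t + T) x) := by
    filter_upwards [eventually_ge_atTop 0] with t ht
    rw [H.add x t ht T hT, add_comm]
  show Tendsto _ _ _ ↔ Tendsto _ _ _
  rw [tendsto_congr' h1]
  constructor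
  · intro h
    have h2 : Tendsto (fun t : ℝ => t - T) atTop atTop := tendsto_atTop_add_const_right _ _ tendsto_id
    have := h.comp h2
    simpa [Function.comp_def] using this
  · intro h
    have h2 : Tendsto (fun t : ℝ => t + T) atTop atTop := tendsto_atTop_add_const_right _ _ tendsto_id
    exact h.comp h2

theorem zubV_nonneg (x : E) : 0 ≤ zubV φ xeq p x :=
  MeasureTheory.setIntegral_nonneg measurableSet_Ioi (fun t _ => by positivity)

namespace ZubSys

theorem enter (S : ZubSys f φ xeq p δ C) {x : E} (hx : x ∈ zubD φ xeq) :
    ∃ T, 0 ≤ T ∧ ‖φ T x - xeq‖ < δ := by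
  have h1 : ∀ᶠ t in atTop, φ t x ∈ Metric.ball xeq δ := hx (Metric.ball_mem_nhds _ S.hδ)
  obtain ⟨T, h2, h3⟩ := (h1.and (eventually_ge_atTop 0)).exists
  exact ⟨T, h3, by rwa [Metric.mem_ball, dist_eq_norm] at h2⟩

theorem of_enter (S : ZubSys f φ xeq p δ C) {x : E} {T : ℝ} (hT : 0 ≤ T)
    (h : ‖φ T x - xeq‖ ≤ δ) : x ∈ zubD φ xeq :=
  (S.flow.mem_iff x hT).1 (S.attract _ h)

theorem shift (S : ZubSys f φ xeq p δ C) {x : E} {T : ℝ} (hT : 0 ≤ T)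
    (h : MeasureTheory.IntegrableOn (fun t => ‖φ t (φ T x) - xeq‖ ^ p) (Set.Ioi (0:ℝ))) :
    MeasureTheory.IntegrableOn (fun t => ‖φ t x - xeq‖ ^ p) (Set.Ioi (0:ℝ)) ∧
    zubV φ xeq p x = (∫ t in (0:ℝ)..T, ‖φ t x - xeq‖ ^ p) + zubV φ xeq p (φ T x) := by
  have hmp := MeasureTheory.measurePreserving_add_right (MeasureTheory.volume : MeasureTheory.Measure ℝ) T
  have hemb : MeasurableEmbedding (fun t : ℝ => t + T) := measurableEmbedding_addRight T
  have hpre : (fun t : ℝ => t + T) ⁻¹' (Set.Ioi T) = Set.Ioi 0 := by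
    rw [Set.preimage_add_const_Ioi, sub_self]
  have hcongr : Set.EqOn (fun t => ‖φ t (φ T x) - xeq‖ ^ p)
      ((fun t => ‖φ t x - xeq‖ ^ p) ∘ fun t => t + T) (Set.Ioi 0) := by
    intro t ht
    have ht : 0 < t := ht
    simp only [Function.comp]
    rw [S.flow.add x t ht.le T hT, add_comm]
  have h1 : MeasureTheory.IntegrableOn (fun t => ‖φ t x - xeq‖ ^ p) (Set.Ioi T) := by
    rw [← hmp.integrableOn_comp_preimage hemb, hpre]
    exact h.congr_fun hcongr measurableSet_Ioi
  have hI : IntervalIntegrable (fun t => ‖φ t x - xeq‖ ^ p) MeasureTheory.volume 0 T := by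
    refine ContinuousOn.intervalIntegrable_of_Icc hT ((S.flow.contq xeq p x).mono Set.Icc_subset_Ici_self)
  have h2 : MeasureTheory.IntegrableOn (fun t => ‖φ t x - xeq‖ ^ p) (Set.Ioc 0 T) :=
    (intervalIntegrable_iff_integrableOn_Ioc_of_le hT).1 hI
  refine ⟨?_, ?_⟩
  · rw [← Set.Ioc_union_Ioi_eq_Ioi hT]
    exact h2.union h1
  · have e1 : zubV φ xeq p (φ T x) = ∫ t in Set.Ioi T, ‖φ t x - xeq‖ ^ p := by
      unfold zubV
      have h3 := hmp.setIntegral_preimage_emb hemb (fun t => ‖φ t x - xeq‖ ^ p) (Set.Ioi T)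
      rw [hpre] at h3
      rw [← h3]
      exact MeasureTheory.setIntegral_congr_fun measurableSet_Ioi hcongr
    rw [e1, intervalIntegral.integral_of_le hT]
    unfold zubV
    rw [← Set.Ioc_union_Ioi_eq_Ioi hT]
    exact MeasureTheory.setIntegral_union (Set.Ioc_disjoint_Ioi le_rfl) measurableSet_Ioi h2 h1

theorem integD (S : ZubSys f φ xeq p δ C) {x : E} (hx : x ∈ zubD φ xeq) :
    MeasureTheory.IntegrableOn (fun t => ‖φ t x - xeq‖ ^ p) (Set.Ioi (0:ℝ)) := by
  obtain ⟨T, hT, h⟩ := S.enter hx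
  exact (S.shift hT (S.integ _ h.le)).1

theorem split (S : ZubSys f φ xeq p δ C) {x : E} (hx : x ∈ zubD φ xeq) {T : ℝ} (hT : 0 ≤ T) :
    zubV φ xeq p x = (∫ t in (0:ℝ)..T, ‖φ t x - xeq‖ ^ p) + zubV φ xeq p (φ T x) :=
  (S.shift hT (S.integD ((S.flow.mem_iff x hT).2 hx))).2

theorem ival (S : ZubSys f φ xeq p δ C) (x : E) {T : ℝ} (hT : 0 ≤ T) :
    IntervalIntegrable (fun t => ‖φ t x - xeq‖ ^ p) MeasureTheory.volume 0 T :=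
  ContinuousOn.intervalIntegrable_of_Icc hT ((S.flow.contq xeq p x).mono Set.Icc_subset_Ici_self)

theorem lower (S : ZubSys f φ xeq p δ C) {x : E} (hx : x ∈ zubD φ xeq) {T m : ℝ} (hT : 0 ≤ T)
    (hm : ∀ t, 0 ≤ t → t ≤ T → m ≤ ‖φ t x - xeq‖ ^ p) : T * m ≤ zubV φ xeq p x := by
  rw [S.split hx hT]
  have h1 := zubV_nonneg (φ := φ) (xeq := xeq) (p := p) (φ T x)
  have h2 := intervalIntegral.integral_mono_on (μ := MeasureTheory.volume) hT
    (intervalIntegrable_const (c := m)) (S.ival x hT) (fun t ht => hm t ht.1 ht.2)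
  simp only [intervalIntegral.integral_const, sub_zero, smul_eq_mul] at h2
  linarith

theorem mono (S : ZubSys f φ xeq p δ C) {x : E} (hx : x ∈ zubD φ xeq) {T : ℝ} (hT : 0 ≤ T) :
    zubV φ xeq p (φ T x) ≤ zubV φ xeq p x := by
  rw [S.split hx hT]
  have := intervalIntegral.integral_nonneg (μ := MeasureTheory.volume) hT
    (f := fun t => ‖φ t x - xeq‖ ^ p) (fun t _ => by positivity)
  linarith

theorem V_xeq (S : ZubSys f φ xeq p δ C) : zubV φ xeq p xeq = 0 := by
  unfold zubV
  have : ∀ t ∈ Set.Ioi (0:ℝ), ‖φ t xeq - xeq‖ ^ p = 0 := by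
    intro t ht
    have ht : 0 < t := ht
    have hp : p ≠ 0 := by have := S.hp; omega
    rw [S.fix t ht.le]; simp [hp]
  rw [MeasureTheory.setIntegral_congr_fun measurableSet_Ioi this]
  simp

theorem V_pos (S : ZubSys f φ xeq p δ C) {x : E} (hx : x ∈ zubD φ xeq) (hne : x ≠ xeq) :
    0 < zubV φ xeq p x := by
  have hn : 0 < ‖x - xeq‖ := norm_pos_iff.2 (sub_ne_zero.2 hne)
  obtain ⟨ρ, hρ, h⟩ := S.flow.cont_zero x (half_pos hn)
  have := S.lower hx (T := ρ / 2) (m := (‖x - xeq‖ / 2) ^ p) (by positivity) (by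
    intro t h0 h1
    have h2 := h x t (by simpa using hρ) h0 (by linarith)
    have h3 := norm_sub_le_norm_sub_add_norm_sub x (φ t x) xeq
    rw [norm_sub_rev x (φ t x)] at h3
    gcongr
    linarith)
  refine lt_of_lt_of_le ?_ this
  positivity

theorem V_lip (S : ZubSys f φ xeq p δ C) {x : E} (hx : x ∈ zubD φ xeq) :
    ∃ K : NNReal, ∃ ρ > 0, LipschitzOnWith K (zubV φ xeq p) (Metric.ball x ρ) ∧
      Metric.ball x ρ ⊆ zubD φ xeq := by
  obtain ⟨T, hT, hTx⟩ := S.enter hx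
  obtain ⟨L, hL, ρ, hρ, h⟩ := S.flow.flow_lip x hT
  have hcpt : IsCompact ((fun t => φ t x) '' Set.Icc 0 T) :=
    isCompact_Icc.image_of_continuousOn ((S.flow.cont x).mono Set.Icc_subset_Ici_self)
  obtain ⟨R, hR⟩ := hcpt.isBounded.subset_closedBall xeq
  have hRx : ∀ t, 0 ≤ t → t ≤ T → ‖φ t x - xeq‖ ≤ R := fun t h1 h2 => by
    have := hR ⟨t, ⟨h1, h2⟩, rfl⟩
    rwa [Metric.mem_closedBall, dist_eq_norm] at this
  have hR0 : 0 ≤ R := (norm_nonneg _).trans (hRx 0 le_rfl hT)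
  set ρ' := min ρ ((δ - ‖φ T x - xeq‖) / (L + 1)) with hρ'
  have hd : 0 < δ - ‖φ T x - xeq‖ := by linarith
  have hρ'p : 0 < ρ' := by positivity
  have hLρ : L * ρ' ≤ δ - ‖φ T x - xeq‖ := by
    have h1 : ρ' ≤ (δ - ‖φ T x - xeq‖) / (L + 1) := min_le_right _ _
    rw [le_div_iff₀ (by positivity)] at h1
    linarith
  have hball : ∀ y ∈ Metric.ball x ρ', ‖y - x‖ < ρ ∧ ‖y - x‖ < ρ' := by
    intro y hy
    rw [Metric.mem_ball, dist_eq_norm] at hy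
    exact ⟨hy.trans_le (min_le_left _ _), hy⟩
  have hnear : ∀ y ∈ Metric.ball x ρ', ∀ t, 0 ≤ t → t ≤ T →
      ‖φ t y - xeq‖ ≤ ‖φ t x - xeq‖ + (δ - ‖φ T x - xeq‖) := by
    intro y hy t h0 h1
    obtain ⟨a1, a2⟩ := hball y hy
    have h2 := h y x a1 (by simpa using hρ) t h0 h1
    have h3 := norm_sub_le_norm_sub_add_norm_sub (φ t y) (φ t x) xeq
    have h4 : L * ‖y - x‖ ≤ L * ρ' := by gcongr
    linarith
  have hTy : ∀ y ∈ Metric.ball x ρ', ‖φ T y - xeq‖ ≤ δ := by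
    intro y hy
    have := hnear y hy T hT le_rfl
    linarith
  have hsub : Metric.ball x ρ' ⊆ zubD φ xeq := fun y hy => S.of_enter hT (hTy y hy)
  set B := R + (δ - ‖φ T x - xeq‖) with hB
  have hB0 : 0 ≤ B := by positivity
  have hC := S.hC
  have hδ := S.hδ
  refine ⟨Real.toNNReal (T * (L * p * B ^ (p - 1)) + C * δ * L), ρ', hρ'p, ?_, hsub⟩
  apply LipschitzOnWith.of_dist_le_mul
  intro y hy z hz
  rw [Real.coe_toNNReal _ (by positivity), Real.dist_eq, dist_eq_norm, S.split (hsub hy) hT, S.split (hsub hz) hT]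
  have hyz := h y z (hball y hy).1 (hball z hz).1
  have b1 : |zubV φ xeq p (φ T y) - zubV φ xeq p (φ T z)| ≤ C * δ * L * ‖y - z‖ := by
    refine (S.lipV _ _ δ (hTy y hy) (hTy z hz) le_rfl).trans ?_
    rw [mul_assoc (C * δ)]
    gcongr
    exact hyz T hT le_rfl
  have b2 : |(∫ t in (0:ℝ)..T, ‖φ t y - xeq‖ ^ p) - ∫ t in (0:ℝ)..T, ‖φ t z - xeq‖ ^ p|
      ≤ T * (L * p * B ^ (p - 1)) * ‖y - z‖ := by
    rw [← intervalIntegral.integral_sub (S.ival y hT) (S.ival z hT), ← Real.norm_eq_abs]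
    have := intervalIntegral.norm_integral_le_of_norm_le_const (a := 0) (b := T)
      (f := fun t => ‖φ t y - xeq‖ ^ p - ‖φ t z - xeq‖ ^ p) (C := L * ‖y - z‖ * p * B ^ (p - 1)) (by
        intro t ht
        rw [Set.uIoc_of_le hT] at ht
        have hp1 := abs_pow_sub_pow_le (‖φ t y - xeq‖) (‖φ t z - xeq‖) p
        rw [abs_norm, abs_norm] at hp1
        rw [Real.norm_eq_abs]
        refine hp1.trans ?_
        have hab : |‖φ t y - xeq‖ - ‖φ t z - xeq‖| ≤ ‖φ t y - φ t z‖ := by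
          have := abs_norm_sub_norm_le (φ t y - xeq) (φ t z - xeq)
          simpa using this
        have m1 := hnear y hy t ht.1.le ht.2
        have m2 := hnear z hz t ht.1.le ht.2
        have m3 := hRx t ht.1.le ht.2
        gcongr
        · exact hab.trans (hyz t ht.1.le ht.2)
        · exact max_le (by linarith) (by linarith))
    rw [sub_zero, abs_of_nonneg hT] at this
    refine this.trans (le_of_eq ?_)
    ring
  have e : ∀ a b c d : ℝ, a + b - (c + d) = (a - c) + (b - d) := fun a b c d => by ring
  rw [e]
  refine (abs_add_le _ _).trans ?_
  linarith

theorem V_strict (S : ZubSys f φ xeq p δ C) {x : E} (hx : x ∈ zubD φ xeq) {e : ℝ} (he : 0 < e) :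
    ∃ ρ > 0, ∀ x' y : E, ∀ h : ℝ, ‖x' - x‖ < ρ → ‖y - x‖ < ρ →
      0 < h → h < ρ → |zubV φ xeq p (y + h • f x') - zubV φ xeq p y + h * ‖x' - xeq‖ ^ p| ≤ e * h := by
  obtain ⟨K, ρ0, hρ0, hK, hsub⟩ := S.V_lip hx
  have hK0 : (0:ℝ) ≤ K := K.2
  have hqc : ContinuousAt (fun y : E => ‖y - xeq‖ ^ p) x := by fun_prop
  rw [Metric.continuousAt_iff] at hqc
  obtain ⟨d, hd, hqc⟩ := hqc (e / 4) (by positivity)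
  have he2 : 0 < e / (2 * (K + 1)) := by positivity
  obtain ⟨ρ1, hρ1, ht⟩ := S.flow.taylor x he2
  obtain ⟨ρ2, hρ2, hc⟩ := S.flow.cont_zero x (e := min (ρ0 / 2) d) (by positivity)
  set ρ := min (min ρ1 ρ2) (min (min d (ρ0 / 4)) (ρ0 / (4 * (e / (2 * (K + 1)) + 1)))) with hρ
  refine ⟨ρ, by positivity, ?_⟩
  intro x' y h hx' hy h0 hh
  rw [hρ] at hx' hy hh
  simp only [lt_min_iff] at hx' hy hh
  obtain ⟨⟨x1, x2⟩, ⟨x3, x4⟩, x5⟩ := hx'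
  obtain ⟨⟨y1, y2⟩, ⟨y3, y4⟩, y5⟩ := hy
  obtain ⟨⟨h1, h2⟩, ⟨h3, h4⟩, h5⟩ := hh
  have hφ : ∀ s, 0 ≤ s → s ≤ h → ‖φ s y - x‖ < ρ0 / 2 ∧ ‖φ s y - x‖ < d := fun s a b =>
    lt_min_iff.1 (hc y s y2 a (by linarith))
  have hyD : y ∈ zubD φ xeq := hsub (by rw [Metric.mem_ball, dist_eq_norm]; linarith)
  have htay := ht x' y h x1 y1 h0.le h1
  have hφh := hφ h h0.le le_rfl
  have m1 : φ h y ∈ Metric.ball x ρ0 := by rw [Metric.mem_ball, dist_eq_norm]; linarith [hφh.1]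
  have m2 : y + h • f x' ∈ Metric.ball x ρ0 := by
    rw [Metric.mem_ball, dist_eq_norm]
    rw [lt_div_iff₀ (by positivity)] at h5
    calc ‖y + h • f x' - x‖ = ‖(φ h y - x) - (φ h y - y - h • f x')‖ := by congr 1; abel
      _ ≤ ‖φ h y - x‖ + ‖φ h y - y - h • f x'‖ := norm_sub_le _ _
      _ < ρ0 := by nlinarith [hφh.1]
  have b1 := hK.dist_le_mul _ m2 _ m1
  rw [Real.dist_eq, dist_eq_norm] at b1
  have e1 : ‖y + h • f x' - φ h y‖ = ‖φ h y - y - h • f x'‖ := by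
    rw [← norm_neg]; congr 1; abel
  rw [e1] at b1
  have b2 : |zubV φ xeq p (y + h • f x') - zubV φ xeq p (φ h y)| ≤ e / 2 * h := by
    refine b1.trans ?_
    calc (K:ℝ) * ‖φ h y - y - h • f x'‖ ≤ K * (e / (2 * (K + 1)) * h) := by gcongr
      _ ≤ (K + 1) * (e / (2 * (K + 1)) * h) := by gcongr; linarith
      _ = e / 2 * h := by field_simp
  have b3 : |(∫ t in (0:ℝ)..h, ‖φ t y - xeq‖ ^ p) - h * ‖x' - xeq‖ ^ p| ≤ e / 2 * h := by
    have e3 : h * ‖x' - xeq‖ ^ p = ∫ t in (0:ℝ)..h, ‖x' - xeq‖ ^ p := by simp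
    rw [e3, ← intervalIntegral.integral_sub (S.ival y h0.le) intervalIntegrable_const, ← Real.norm_eq_abs]
    have := intervalIntegral.norm_integral_le_of_norm_le_const (a := 0) (b := h)
      (f := fun t => ‖φ t y - xeq‖ ^ p - ‖x' - xeq‖ ^ p) (C := e / 2) (by
        intro t ht
        rw [Set.uIoc_of_le h0.le] at ht
        have q1 := hqc (x := φ t y) (by rw [dist_eq_norm]; exact (hφ t ht.1.le ht.2).2)
        have q2 := hqc (x := x') (by rw [dist_eq_norm]; exact x3)
        have := dist_triangle_right (‖φ t y - xeq‖ ^ p) (‖x' - xeq‖ ^ p) (‖x - xeq‖ ^ p)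
        rw [dist_eq_norm (‖φ t y - xeq‖ ^ p) (‖x' - xeq‖ ^ p)] at this
        linarith)
    rwa [sub_zero, abs_of_pos h0] at this
  rw [S.split hyD h0.le]
  rw [abs_le] at b2 b3 ⊢
  constructor <;> linarith [b2.1, b2.2, b3.1, b3.2]

theorem V_blowup (S : ZubSys f φ xeq p δ C) {y : E} (hy : y ∉ zubD φ xeq) (A : ℝ) :
    ∃ ρ > 0, ∀ x ∈ zubD φ xeq, ‖x - y‖ < ρ → A ≤ zubV φ xeq p x := by
  have hδ := S.hδ
  set T := max A 0 / (δ / 2) ^ p with hT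
  have hT0 : 0 ≤ T := by positivity
  obtain ⟨L, hL, ρ, hρ, h⟩ := S.flow.flow_lip y hT0
  refine ⟨min ρ (δ / (2 * (L + 1))), by positivity, ?_⟩
  intro x hx hxy
  rw [lt_min_iff, lt_div_iff₀ (by positivity)] at hxy
  have := S.lower hx (T := T) (m := (δ / 2) ^ p) hT0 (by
    intro t h0 h1
    have h2 : δ < ‖φ t y - xeq‖ := by
      by_contra hcon
      exact hy (S.of_enter h0 (not_lt.1 hcon))
    have h3 := h x y hxy.1 (by simpa using hρ) t h0 h1
    have h4 := norm_sub_le_norm_sub_add_norm_sub (φ t y) (φ t x) xeq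
    rw [norm_sub_rev (φ t y) (φ t x)] at h4
    gcongr
    nlinarith [norm_nonneg (x - y)])
  refine le_trans ?_ this
  rw [hT, div_mul_cancel₀ _ (by positivity)]
  exact le_max_left _ _

theorem V_contOn (S : ZubSys f φ xeq p δ C) : ContinuousOn (zubV φ xeq p) (zubD φ xeq) := by
  intro x hx
  obtain ⟨K, ρ, hρ, hK, -⟩ := S.V_lip hx
  exact (hK.continuousOn.continuousAt (Metric.ball_mem_nhds x hρ)).continuousWithinAt

theorem V_away (S : ZubSys f φ xeq p δ C) {c : ℝ} (hc : 0 < c) (hcδ : c < δ) :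
    ∃ m > 0, ∀ x ∈ zubD φ xeq, c ≤ ‖x - xeq‖ → m ≤ zubV φ xeq p x := by
  have hs : ∀ y ∈ Metric.sphere xeq c, y ∈ zubD φ xeq ∧ y ≠ xeq := by
    intro y hy
    rw [mem_sphere_iff_norm] at hy
    refine ⟨S.attract y (by linarith), ?_⟩
    rintro rfl
    simp at hy; linarith
  obtain ⟨m, hm, hmin⟩ := (isCompact_sphere xeq c).exists_forall_le'
    (S.V_contOn.mono fun y hy => (hs y hy).1) (a := 0) (fun y hy => S.V_pos (hs y hy).1 (hs y hy).2)
  refine ⟨m, hm, fun x hx hcx => ?_⟩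
  have h1 : ∀ᶠ t in atTop, φ t x ∈ Metric.ball xeq c := hx (Metric.ball_mem_nhds _ hc)
  obtain ⟨T, h2, h3⟩ := (h1.and (eventually_ge_atTop 0)).exists
  rw [Metric.mem_ball, dist_eq_norm] at h2
  have hcont : ContinuousOn (fun t => ‖φ t x - xeq‖) (Set.Icc 0 T) :=
    (((S.flow.cont x).mono Set.Icc_subset_Ici_self).sub continuousOn_const).norm
  have hiv := intermediate_value_Icc' h3 hcont
  obtain ⟨t, ht, hte⟩ := hiv ⟨h2.le, by simpa only [S.flow.zero] using hcx⟩
  exact (hmin _ (by rw [mem_sphere_iff_norm]; exact hte)).trans (S.mono hx ht.1)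

end ZubSys
end lyap2

section fwd
variable {E : Type*} [NormedAddCommGroup E] [InnerProductSpace ℝ E] [FiniteDimensional ℝ E]
  [MeasurableSpace E] [BorelSpace E]
variable {f : E → E} {φ : ℝ → E → E} {xeq : E} {p : ℕ} {δ C : ℝ}

theorem ZubSys.exists_smooth (S : ZubSys f φ xeq p δ C) (hD : IsOpen (zubD φ xeq))
    (hfeq : f xeq = 0) :
    ∃ (V η : E → ℝ), ContDiffOn ℝ 1 V (zubD φ xeq) ∧ Continuous η ∧ V xeq = 0 ∧ η xeq = 0 ∧
      (∀ x ∈ zubD φ xeq, x ≠ xeq → zubV φ xeq p x / 2 ≤ V x ∧ ‖x - xeq‖ ^ p / 2 ≤ η x) ∧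
      ∀ x ∈ zubD φ xeq, fderiv ℝ V x (f x) = - η x := by
  classical
  have hp0 : p ≠ 0 := by have := S.hp; omega
  have hδ := S.hδ
  have hC := S.hC
  set U : Set E := zubD φ xeq \ {xeq} with hUdef
  have hU : IsOpen U := hD.sdiff isClosed_singleton
  have hxU : xeq ∈ Uᶜ := by simp [hUdef]
  have hne : (Uᶜ).Nonempty := ⟨xeq, hxU⟩
  have hUD : U ⊆ zubD φ xeq := Set.sdiff_subset
  have hUne : ∀ x ∈ U, x ≠ xeq := fun x hx => hx.2
  have hxD : xeq ∈ zubD φ xeq := S.attract xeq (by simpa using hδ.le)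
  have hinf : ∀ x, Metric.infDist x Uᶜ ≤ ‖x - xeq‖ := by
    intro x
    rw [← dist_eq_norm]; exact Metric.infDist_le_dist_of_mem hxU
  have hinfpos : ∀ x ∈ U, 0 < Metric.infDist x Uᶜ := by
    intro x hx
    exact (hU.isClosed_compl.notMem_iff_infDist_pos hne).1 (by simpa using hx)
  obtain ⟨V, hV1, hV⟩ := zub_smooth hU (zubV φ xeq p) (fun x => ‖x - xeq‖ ^ p) f
    S.flow.lip.continuous
    (fun x => min (Metric.infDist x Uᶜ) (min (‖x - xeq‖ ^ p / 2) (zubV φ xeq p x / 2)))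
    (by
      refine ContinuousOn.inf (Metric.continuous_infDist_pt _).continuousOn
        (ContinuousOn.inf (by fun_prop) ((S.V_contOn.mono hUD).div_const 2)))
    (by
      intro x hx
      have h1 : 0 < ‖x - xeq‖ := norm_pos_iff.2 (sub_ne_zero.2 (hUne x hx))
      have h2 := S.V_pos (hUD hx) (hUne x hx)
      have h3 := hinfpos x hx
      positivity)
    (by
      intro x hx
      obtain ⟨K, ρ, h1, h2, -⟩ := S.V_lip (hUD hx)
      exact ⟨K, ρ, h1, h2⟩)
    (by
      intro x hx e he
      exact S.V_strict (hUD hx) he)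
  simp only [le_min_iff] at hV
  let Vf : E → ℝ := fun x => if x ∈ U then V x else 0
  let η : E → ℝ := fun x => if x ∈ U then -(fderiv ℝ V x (f x)) else ‖x - xeq‖ ^ p
  have hVfU : ∀ x ∈ U, Vf x = V x := fun x hx => if_pos hx
  have hVfE : ∀ x ∈ U, Vf =ᶠ[𝓝 x] V := fun x hx => by
    filter_upwards [hU.mem_nhds hx] with y hy using hVfU y hy
  have hηU : ∀ x ∈ U, η x = -(fderiv ℝ V x (f x)) := fun x hx => if_pos hx
  have hηE : ∀ x ∈ U, η =ᶠ[𝓝 x] fun x => -(fderiv ℝ V x (f x)) := fun x hx => by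
    filter_upwards [hU.mem_nhds hx] with y hy using hηU y hy
  have hηN : ∀ x ∉ U, η x = ‖x - xeq‖ ^ p := fun x hx => if_neg hx
  have hVx : Vf xeq = 0 := if_neg hxU
  have hηx : η xeq = 0 := by rw [hηN xeq hxU]; simp [hp0]
  have hfd : ContinuousOn (fderiv ℝ V) U := hV1.continuousOn_fderiv_of_isOpen hU le_rfl
  have hfdE : ∀ x ∈ U, fderiv ℝ Vf x = fderiv ℝ V x := fun x hx => (hVfE x hx).fderiv_eq
  have hlow : ∀ x ∈ U, zubV φ xeq p x / 2 ≤ Vf x ∧ Vf x ≤ 2 * zubV φ xeq p x ∧ ‖x - xeq‖ ^ p / 2 ≤ η x := by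
    intro x hx
    obtain ⟨⟨h1, h2, h3⟩, ⟨h4, h5, h6⟩, h7⟩ := hV x hx
    rw [hVfU x hx, hηU x hx]
    have h8 := abs_le.1 h3
    have h9 := abs_le.1 h5
    have h10 := zubV_nonneg (φ := φ) (xeq := xeq) (p := p) x
    refine ⟨by linarith [h8.1], by linarith [h8.2], by linarith [h9.2]⟩
  have hηq : ∀ x, |η x - ‖x - xeq‖ ^ p| ≤ Metric.infDist x Uᶜ := by
    intro x
    by_cases hx : x ∈ U
    · rw [hηU x hx]
      have := (hV x hx).2.1.1
      rw [← abs_neg, show -(-(fderiv ℝ V x (f x)) - ‖x - xeq‖ ^ p)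
        = fderiv ℝ V x (f x) + ‖x - xeq‖ ^ p by ring]
      exact this
    · rw [hηN x hx]; simpa using Metric.infDist_nonneg
  have hηc : Continuous η := by
    rw [continuous_iff_continuousAt]
    intro x
    by_cases hx : x ∈ U
    · refine ContinuousAt.congr ?_ (hηE x hx).symm
      exact ((hfd.continuousAt (hU.mem_nhds hx)).clm_apply S.flow.lip.continuous.continuousAt).neg
    · have h0 : Metric.infDist x Uᶜ = 0 := Metric.infDist_zero_of_mem hx
      have h1 : Tendsto (fun y => Metric.infDist y Uᶜ) (𝓝 x) (𝓝 0) := by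
        have := (Metric.continuous_infDist_pt (s := Uᶜ)).tendsto x
        rwa [h0] at this
      have h2 : Tendsto (fun y => η y - ‖y - xeq‖ ^ p) (𝓝 x) (𝓝 0) :=
        squeeze_zero_norm (fun y => hηq y) h1
      have h3 : Tendsto (fun y : E => ‖y - xeq‖ ^ p) (𝓝 x) (𝓝 (‖x - xeq‖ ^ p)) :=
        Continuous.tendsto (by fun_prop) x
      have h4 := h2.add h3
      simp only [sub_add_cancel, zero_add] at h4
      rw [← hηN x hx] at h4
      exact h4
  -- behaviour at the equilibrium
  have hquad : ∀ x, ‖x - xeq‖ ≤ δ → |Vf x| ≤ 2 * C * ‖x - xeq‖ ^ 2 := by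
    intro x hx
    by_cases hxU' : x ∈ U
    · obtain ⟨h1, h2, -⟩ := hlow x hxU'
      have h3 := S.lipV x xeq ‖x - xeq‖ le_rfl (by simp) hx
      rw [S.V_xeq, sub_zero] at h3
      have h4 := zubV_nonneg (φ := φ) (xeq := xeq) (p := p) x
      have h5 := le_abs_self (zubV φ xeq p x)
      rw [abs_of_nonneg (by linarith)]
      nlinarith
    · have : Vf x = 0 := if_neg hxU'
      rw [this]; simp; positivity
  have hder0 : HasFDerivAt Vf (0 : E →L[ℝ] ℝ) xeq := by
    rw [hasFDerivAt_iff_isLittleO_nhds_zero]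
    have h1 : (fun h : E => Vf (xeq + h) - Vf xeq - (0 : E →L[ℝ] ℝ) h) =O[𝓝 0] fun h => ‖h‖ ^ 2 := by
      refine Asymptotics.IsBigO.of_bound (2 * C) ?_
      filter_upwards [Metric.ball_mem_nhds (0:E) hδ] with h hh
      rw [mem_ball_zero_iff] at hh
      have := hquad (xeq + h) (by simpa using hh.le)
      simpa [hVx] using this
    exact h1.trans_isLittleO (Asymptotics.isLittleO_norm_pow_id one_lt_two)
  have hfd0 : fderiv ℝ Vf xeq = 0 := hder0.fderiv
  have hfdb : ∀ x, ‖x - xeq‖ < δ / 2 → ‖fderiv ℝ Vf x‖ ≤ 4 * C * ‖x - xeq‖ := by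
    intro x hx
    by_cases hxe : x = xeq
    · rw [hxe, hfd0]; simp
    have hxU' : x ∈ U := ⟨S.attract x (by linarith), hxe⟩
    rw [hfdE x hxU']
    have h7 := (hV x hxU').2.2 ⟨C * (2 * ‖x - xeq‖), by positivity⟩ ?_
    · refine h7.trans (le_of_eq ?_)
      show 2 * (C * (2 * ‖x - xeq‖)) = 4 * C * ‖x - xeq‖
      ring
    · have hb : ∀ y ∈ Metric.ball x (min (Metric.infDist x Uᶜ) (min (‖x - xeq‖ ^ p / 2) (zubV φ xeq p x / 2))),
          ‖y - xeq‖ ≤ 2 * ‖x - xeq‖ := by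
        intro y hy
        rw [Metric.mem_ball, dist_eq_norm] at hy
        have h1 := (hy.trans_le (min_le_left _ _)).le.trans (hinf x)
        have h2 := norm_add_le (y - x) (x - xeq)
        rw [sub_add_sub_cancel] at h2
        linarith
      refine LipschitzOnWith.of_dist_le_mul fun y hy z hz => ?_
      rw [Real.dist_eq, dist_eq_norm]
      exact S.lipV y z _ (hb y hy) (hb z hz) (by linarith)
  have hdcase : ∀ x ∈ zubD φ xeq, x = xeq ∨ x ∈ U := by
    intro x hx
    by_cases h : x = xeq
    · exact Or.inl h
    · exact Or.inr ⟨hx, h⟩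
  have hC1 : ContDiffOn ℝ 1 Vf (zubD φ xeq) := by
    have : (1 : WithTop ℕ∞) = 0 + 1 := by simp
    rw [this, contDiffOn_succ_iff_fderiv_of_isOpen hD]
    refine ⟨?_, by simp, ?_⟩
    · intro x hx
      rcases hdcase x hx with rfl | h
      · exact hder0.differentiableAt.differentiableWithinAt
      · have h1 : DifferentiableAt ℝ V x := (hV1.differentiableOn (by simp)).differentiableAt (hU.mem_nhds h)
        exact (h1.congr_of_eventuallyEq (hVfE x h)).differentiableWithinAt
    · rw [contDiffOn_zero]
      intro x hx
      refine ContinuousAt.continuousWithinAt ?_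
      rcases hdcase x hx with rfl | h
      · show Tendsto _ _ _
        rw [hfd0]
        refine squeeze_zero_norm' (a := fun y => 4 * C * ‖y - x‖) ?_ ?_
        · filter_upwards [Metric.ball_mem_nhds x (half_pos hδ)] with y hy
          rw [Metric.mem_ball, dist_eq_norm] at hy
          exact hfdb y hy
        · have : Tendsto (fun y => 4 * C * ‖y - x‖) (𝓝 x) (𝓝 (4 * C * ‖x - x‖)) :=
            Continuous.tendsto (by fun_prop) x
          simpa using this
      · refine (hfd.continuousAt (hU.mem_nhds h)).congr ?_
        filter_upwards [hU.mem_nhds h] with y hy using (hfdE y hy).symm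
  refine ⟨Vf, η, hC1, hηc, hVx, hηx, ?_, ?_⟩
  · intro x hx hxe
    have := hlow x ⟨hx, hxe⟩
    exact ⟨this.1, this.2.2⟩
  · intro x hx
    rcases hdcase x hx with rfl | h
    · rw [hfeq, hηx]; simp
    · rw [hfdE x h, hηU x h, neg_neg]

end fwd

section bwd
variable {E : Type*} [NormedAddCommGroup E] [InnerProductSpace ℝ E] [FiniteDimensional ℝ E]
  [CompleteSpace E]
variable {f : E → E} {φ : ℝ → E → E} {xeq : E} {p : ℕ} {δ C : ℝ}

/-- the data of the Zubov theorem -/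
structure ZubData (f : E → E) (xeq : E) (D : Set E) (W η : E → ℝ) (gW : E → E) : Prop where
  isOpen : IsOpen D
  mem : xeq ∈ D
  etac : Continuous η
  nonneg : ∀ x ∈ D, 0 ≤ W x
  lt_one : ∀ x ∈ D, W x < 1
  eta_nonneg : ∀ x ∈ D, 0 ≤ η x
  away : ∃ c₀ > (0:ℝ), ∀ c₃, 0 < c₃ → c₃ < c₀ → ∃ c₂ > (0:ℝ),
          ∀ x ∈ D, c₃ ≤ ‖x - xeq‖ → c₂ < η x
  front : ∀ y ∈ frontier D, ∀ xk : ℕ → E, (∀ k, xk k ∈ D) →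
          Tendsto xk atTop (𝓝 y) → Tendsto (fun k => W (xk k)) atTop (𝓝 1)
  grad : ∀ x ∈ D, HasGradientAt W (gW x) x ∧ ⟪gW x, f x⟫ = - (η x * (1 - W x))

variable {D : Set E} {W η : E → ℝ} {gW : E → E}

theorem ZubData.log_deriv (Z : ZubData f xeq D W η gW) (H : ZubFlow f φ) {x : E} {t : ℝ}
    (ht : 0 ≤ t) (hx : φ t x ∈ D) :
    HasDerivWithinAt (fun s => - Real.log (1 - W (φ s x))) (- η (φ t x)) (Set.Ici 0) t := by
  obtain ⟨h1, h2⟩ := Z.grad _ hx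
  have h3 := h1.hasFDerivAt.comp_hasDerivWithinAt t (H.deriv x t ht)
  rw [InnerProductSpace.toDual_apply_apply, h2] at h3
  have h4 : 0 < 1 - W (φ t x) := by linarith [Z.lt_one _ hx]
  have h5 := ((h3.const_sub 1).log h4.ne').neg
  have h6 : - η (φ t x) = -(- -(η (φ t x) * (1 - W (φ t x))) / (1 - W (φ t x))) := by
    field_simp
  rw [h6]
  exact h5

theorem ZubData.mvt (Z : ZubData f xeq D W η gW) (H : ZubFlow f φ) {x : E} {a b : ℝ}
    (ha : 0 ≤ a) (hab : a < b) (hx : ∀ t ∈ Set.Icc a b, φ t x ∈ D) :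
    ∃ c ∈ Set.Ioo a b, - Real.log (1 - W (φ a x)) = - Real.log (1 - W (φ b x)) + η (φ c x) * (b - a) := by
  obtain ⟨c, hc, h⟩ := exists_hasDerivAt_eq_slope (fun s => - Real.log (1 - W (φ s x)))
    (fun s => - η (φ s x)) hab
    (fun t ht => ((Z.log_deriv H (ha.trans ht.1) (hx t ht)).continuousWithinAt).mono
      (fun s hs => ha.trans hs.1))
    (fun t ht => (Z.log_deriv H (ha.trans ht.1.le) (hx t ⟨ht.1.le, ht.2.le⟩)).hasDerivAt
      (Ici_mem_nhds (ha.trans_lt ht.1)))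
  refine ⟨c, hc, ?_⟩
  have hba : b - a ≠ 0 := by linarith
  rw [eq_div_iff hba] at h
  linarith

theorem ZubData.closedA (Z : ZubData f xeq D W η gW) (H : ZubFlow f φ) (x : E) :
    IsClosed {t : ℝ | 0 ≤ t ∧ φ t x ∉ D} := by
  have := (H.cont x).preimage_isClosed_of_isClosed isClosed_Ici Z.isOpen.isClosed_compl
  exact this

theorem ZubData.front_seq (Z : ZubData f xeq D W η gW) (H : ZubFlow f φ) {x : E} {a : ℝ}
    (ha : 0 ≤ a) (hx : φ a x ∉ D) {u : ℕ → ℝ} (hu0 : ∀ k, 0 ≤ u k) (hu : Tendsto u atTop (𝓝 a))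
    (huD : ∀ k, φ (u k) x ∈ D) : Tendsto (fun k => W (φ (u k) x)) atTop (𝓝 1) := by
  have h1 : Tendsto (fun k => φ (u k) x) atTop (𝓝 (φ a x)) := by
    have h2 : Tendsto u atTop (𝓝[Set.Ici 0] a) :=
      tendsto_nhdsWithin_iff.2 ⟨hu, Eventually.of_forall hu0⟩
    exact (H.cont x a ha).tendsto.comp h2
  refine Z.front (φ a x) ?_ _ huD h1
  refine ⟨mem_closure_of_tendsto h1 (Eventually.of_forall huD), ?_⟩
  rwa [Z.isOpen.interior_eq]

theorem ZubData.invariant (Z : ZubData f xeq D W η gW) (H : ZubFlow f φ) {x : E} (hx : x ∈ D) :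
    ∀ t, 0 ≤ t → φ t x ∈ D := by
  by_contra! hcon
  obtain ⟨T, hT0, hT⟩ := hcon
  set A := {t : ℝ | 0 ≤ t ∧ φ t x ∉ D} with hA
  have hAb : BddBelow A := ⟨0, fun t ht => ht.1⟩
  have hAn : A.Nonempty := ⟨T, hT0, hT⟩
  have hmem : sInf A ∈ A := (Z.closedA H x).csInf_mem hAn hAb
  set a := sInf A with ha
  have ha0 : 0 < a := by
    refine lt_of_le_of_ne hmem.1 ?_
    intro h
    have := hmem.2
    rw [← h, H.zero] at this
    exact this hx
  have hin : ∀ t, 0 ≤ t → t < a → φ t x ∈ D := by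
    intro t h0 h1
    by_contra h2
    exact (notMem_of_lt_csInf h1 hAb) ⟨h0, h2⟩
  have hWle : ∀ t, 0 ≤ t → t < a → W (φ t x) ≤ W x := by
    intro t h0 h1
    rcases h0.eq_or_lt with rfl | h0'
    · rw [H.zero]
    obtain ⟨c, hc, h⟩ := Z.mvt H (x := x) le_rfl h0' (fun s hs => hin s hs.1 (hs.2.trans_lt h1))
    have h2 := Z.eta_nonneg _ (hin c hc.1.le (hc.2.trans h1))
    rw [H.zero] at h
    have h3 : 0 ≤ η (φ c x) * (t - 0) := mul_nonneg h2 (by linarith)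
    have h4 : Real.log (1 - W x) ≤ Real.log (1 - W (φ t x)) := by linarith
    rw [Real.log_le_log_iff (by linarith [Z.lt_one _ hx]) (by linarith [Z.lt_one _ (hin t h0 h1)])] at h4
    linarith
  have hu1 : ∀ k : ℕ, 0 < 1 / ((k:ℝ) + 1) := fun k => by positivity
  have hu2 : ∀ k : ℕ, 1 / ((k:ℝ) + 1) ≤ 1 := fun k => by
    rw [div_le_one (by positivity)]; linarith [(Nat.cast_nonneg k : (0:ℝ) ≤ k)]
  have hu3 : Tendsto (fun k : ℕ => a * (1 - 1 / ((k:ℝ) + 1))) atTop (𝓝 a) := by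
    have := (tendsto_one_div_add_atTop_nhds_zero_nat (𝕜 := ℝ)).const_sub 1
    simpa using this.const_mul a
  have hu4 : ∀ k : ℕ, 0 ≤ a * (1 - 1 / ((k:ℝ) + 1)) := fun k =>
    mul_nonneg ha0.le (by linarith [hu2 k])
  have hu5 : ∀ k : ℕ, a * (1 - 1 / ((k:ℝ) + 1)) < a := fun k => by nlinarith [hu1 k]
  have h6 := Z.front_seq H hmem.1 hmem.2 hu4 hu3 (fun k => hin _ (hu4 k) (hu5 k))
  have h7 := le_of_tendsto' h6 (fun k => hWle _ (hu4 k) (hu5 k))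
  linarith [Z.lt_one _ hx]

theorem ZubData.sub_roa (Z : ZubData f xeq D W η gW) (S : ZubSys f φ xeq p δ C) :
    D ⊆ zubD φ xeq := by
  intro x hx
  have hin := Z.invariant S.flow hx
  obtain ⟨c₀, hc₀, h⟩ := Z.away
  have hδ := S.hδ
  have hm : 0 < min c₀ δ := lt_min hc₀ hδ
  obtain ⟨c₂, hc₂, h⟩ := h (min c₀ δ / 2) (by linarith) (by linarith [min_le_left c₀ δ])
  by_cases hex : ∃ T, 0 ≤ T ∧ ‖φ T x - xeq‖ < min c₀ δ / 2
  · obtain ⟨T, hT, h1⟩ := hex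
    exact S.of_enter hT (by linarith [min_le_right c₀ δ])
  · exfalso
    push Not at hex
    set L := - Real.log (1 - W x) with hL
    have hpos : ∀ y ∈ D, 0 ≤ - Real.log (1 - W y) := by
      intro y hy
      have := Real.log_nonpos (x := 1 - W y) (by linarith [Z.lt_one y hy]) (by linarith [Z.nonneg y hy])
      linarith
    have hL0 : 0 ≤ L := hpos x hx
    obtain ⟨c, hc, h2⟩ := Z.mvt S.flow (x := x) (a := 0) (b := L / c₂ + 1) le_rfl (by positivity)
      (fun t ht => hin t ht.1)
    rw [S.flow.zero, ← hL, sub_zero] at h2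
    have h3 := h _ (hin c hc.1.le) (hex c hc.1.le)
    have h4 := hpos _ (hin (L / c₂ + 1) (by positivity))
    have h5 : c₂ * (L / c₂ + 1) ≤ η (φ c x) * (L / c₂ + 1) :=
      mul_le_mul_of_nonneg_right h3.le (by positivity)
    have h6 : c₂ * (L / c₂ + 1) = L + c₂ := by field_simp
    linarith

theorem ZubData.roa_sub (Z : ZubData f xeq D W η gW) (H : ZubFlow f φ) :
    zubD φ xeq ⊆ D := by
  intro x hx
  by_contra hxD
  have h1 : ∀ᶠ t in atTop, φ t x ∈ D := hx (Z.isOpen.mem_nhds Z.mem)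
  obtain ⟨T, hT⟩ := eventually_atTop.1 h1
  set A := {t : ℝ | 0 ≤ t ∧ φ t x ∉ D} with hA
  have hAb : BddAbove A := ⟨T, fun t ht => by
    by_contra! h
    exact ht.2 (hT t h.le)⟩
  have hAn : A.Nonempty := ⟨0, le_rfl, by rwa [H.zero]⟩
  have hmem : sSup A ∈ A := (Z.closedA H x).csSup_mem hAn hAb
  set a := sSup A with ha
  have ha0 : 0 ≤ a := hmem.1
  have hin : ∀ t, a < t → φ t x ∈ D := by
    intro t h1
    by_contra h2
    exact (notMem_of_csSup_lt h1 hAb) ⟨ha0.trans h1.le, h2⟩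
  obtain ⟨B, hB⟩ := (isCompact_Icc (a := a) (b := a + 2)).bddAbove_image
    (f := fun t => η (φ t x)) (Z.etac.comp_continuousOn ((H.cont x).mono (fun t ht => ha0.trans ht.1)))
  have hB' : ∀ t, a ≤ t → t ≤ a + 2 → η (φ t x) ≤ B := fun t h1 h2 => hB ⟨t, ⟨h1, h2⟩, rfl⟩
  set M := - Real.log (1 - W (φ (a + 2) x)) + B * 2 with hM
  have hbd : ∀ t, a < t → t ≤ a + 1 → W (φ t x) ≤ 1 - Real.exp (-M) := by
    intro t h1 h2
    obtain ⟨c, hc, h⟩ := Z.mvt H (x := x) (a := t) (b := a + 2) (ha0.trans h1.le) (by linarith)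
      (fun s hs => hin s (h1.trans_le hs.1))
    have h3 := hB' c (h1.trans hc.1).le hc.2.le
    have h4 := Z.eta_nonneg _ (hin c (h1.trans hc.1))
    have h5 : η (φ c x) * (a + 2 - t) ≤ B * 2 := by
      apply mul_le_mul h3 (by linarith) (by linarith) (h4.trans h3)
    have h6 : 0 < 1 - W (φ t x) := by linarith [Z.lt_one _ (hin t h1)]
    have h7 : -M ≤ Real.log (1 - W (φ t x)) := by linarith
    have h8 := (Real.le_log_iff_exp_le h6).1 h7
    linarith
  have hu1 : ∀ k : ℕ, 0 < 1 / ((k:ℝ) + 1) := fun k => by positivity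
  have hu2 : ∀ k : ℕ, 1 / ((k:ℝ) + 1) ≤ 1 := fun k => by
    rw [div_le_one (by positivity)]; linarith [(Nat.cast_nonneg k : (0:ℝ) ≤ k)]
  have hu3 : Tendsto (fun k : ℕ => a + 1 / ((k:ℝ) + 1)) atTop (𝓝 a) := by
    have := (tendsto_one_div_add_atTop_nhds_zero_nat (𝕜 := ℝ)).const_add a
    simpa using this
  have h6 := Z.front_seq H hmem.1 hmem.2 (u := fun k : ℕ => a + 1 / ((k:ℝ) + 1))
    (fun k => by linarith [hu1 k]) hu3 (fun k => hin _ (by linarith [hu1 k]))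
  have h7 := le_of_tendsto' h6 (fun k => hbd _ (by linarith [hu1 k]) (by linarith [hu2 k]))
  linarith [Real.exp_pos (-M)]

end bwd


/-- Zubov's theorem: an open set `D ∋ x_eq` equals the region of attraction
iff there exist `W : D → ℝ` (continuous, `C¹` on `D`) and continuous `η : ℝⁿ → ℝ`
satisfying conditions (1)-(5). -/
theorem zubov_theorem {n : ℕ}
    (f : EuclideanSpace ℝ (Fin n) → EuclideanSpace ℝ (Fin n))
    (φ : ℝ → EuclideanSpace ℝ (Fin n) → EuclideanSpace ℝ (Fin n))
    (xeq : EuclideanSpace ℝ (Fin n))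
    (hf : LocallyLipschitz f)
    (hφ0 : ∀ x, φ 0 x = x)
    (hφd : ∀ x, ∀ t ≥ (0:ℝ), HasDerivWithinAt (fun s => φ s x) (f (φ t x)) (Set.Ici 0) t)
    (hφadd : ∀ x, ∀ s ≥ (0:ℝ), ∀ t ≥ (0:ℝ), φ s (φ t x) = φ (t + s) x)
    (hfeq : f xeq = 0)
    (hstab : ∃ δ > (0:ℝ), ∃ M > (0:ℝ), ∃ c > (0:ℝ), ∀ x : EuclideanSpace ℝ (Fin n),
      ‖x - xeq‖ ≤ δ → ∀ t ≥ (0:ℝ), ‖φ t x - xeq‖ ≤ M * ‖x - xeq‖ * Real.exp (-c * t))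
    (D : Set (EuclideanSpace ℝ (Fin n))) (hD : IsOpen D) (hxeqD : xeq ∈ D) :
    D = {x | Tendsto (fun t => φ t x) atTop (𝓝 xeq)} ↔
      ∃ (W : EuclideanSpace ℝ (Fin n) → ℝ) (η : EuclideanSpace ℝ (Fin n) → ℝ)
        (gW : EuclideanSpace ℝ (Fin n) → EuclideanSpace ℝ (Fin n)),
        ContinuousOn W D ∧ ContDiffOn ℝ 1 W D ∧ Continuous η ∧
        -- (1)
        (∀ x ∈ D, x ≠ xeq → 0 < W x ∧ W x < 1) ∧ W xeq = 0 ∧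
        -- (2)
        (η xeq = 0 ∧ ∀ x ∈ D, x ≠ xeq → 0 < η x) ∧
        -- (3)
        (∃ c₀ > (0:ℝ), ∀ c₃, 0 < c₃ → c₃ < c₀ → ∃ c₁ > (0:ℝ), ∃ c₂ > (0:ℝ),
          ∀ x ∈ D, c₃ ≤ ‖x - xeq‖ → c₁ < W x ∧ c₂ < η x) ∧
        -- (4)
        (∀ y ∈ frontier D, ∀ xk : ℕ → EuclideanSpace ℝ (Fin n), (∀ k, xk k ∈ D) →
          Tendsto xk atTop (𝓝 y) → Tendsto (fun k => W (xk k)) atTop (𝓝 1)) ∧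
        -- (5)
        (∀ x ∈ D, HasGradientAt W (gW x) x ∧ ⟪gW x, f x⟫ = - (η x * (1 - W x))) := by
  have H : ZubFlow f φ := ⟨hf, hφ0, hφd, hφadd⟩
  obtain ⟨p, δ, C, S⟩ := H.sys hstab
  constructor
  · intro hDe
    have hDe : D = zubD φ xeq := hDe
    subst hDe
    obtain ⟨V, η, hV1, hη, hV0, hη0, hlow, hfd⟩ := S.exists_smooth hD hfeq
    have hdV : ∀ x ∈ zubD φ xeq, DifferentiableAt ℝ V x := fun x hx =>
      (hV1.differentiableOn (by simp)).differentiableAt (hD.mem_nhds hx)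
    have hW1 : ContDiffOn ℝ 1 (fun x => 1 - Real.exp (- V x)) (zubD φ xeq) :=
      contDiffOn_const.sub (hV1.neg.exp)
    have hpos : ∀ x ∈ zubD φ xeq, x ≠ xeq → 0 < V x := fun x hx hne => by
      linarith [(hlow x hx hne).1, S.V_pos hx hne]
    refine ⟨fun x => 1 - Real.exp (- V x), η, gradient (fun x => 1 - Real.exp (- V x)),
      hW1.continuousOn, hW1, hη, ?_, by simp [hV0], ⟨hη0, ?_⟩, ⟨δ, S.hδ, ?_⟩, ?_, ?_⟩
    · intro x hx hne
      have h1 := hpos x hx hne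
      have h2 : Real.exp (- V x) < 1 := Real.exp_lt_one_iff.2 (by linarith)
      exact ⟨by linarith, by linarith [Real.exp_pos (- V x)]⟩
    · intro x hx hne
      have h1 : 0 < ‖x - xeq‖ := norm_pos_iff.2 (sub_ne_zero.2 hne)
      have h2 : 0 < ‖x - xeq‖ ^ p := by positivity
      linarith [(hlow x hx hne).2]
    · intro c hc hcδ
      obtain ⟨m, hm, h⟩ := S.V_away hc hcδ
      have hcp : 0 < c ^ p := by positivity
      refine ⟨1 - Real.exp (-(m / 4)), by linarith [Real.exp_lt_one_iff.2 (show -(m / 4) < 0 by linarith)],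
        c ^ p / 4, by linarith, ?_⟩
      intro x hx hcx
      have hne : x ≠ xeq := by
        rintro rfl
        simp at hcx
        linarith
      have h1 := h x hx hcx
      have h2 := hlow x hx hne
      have h3 : c ^ p ≤ ‖x - xeq‖ ^ p := pow_le_pow_left₀ hc.le hcx p
      refine ⟨?_, by linarith [h2.2]⟩
      have h4 : Real.exp (- V x) < Real.exp (-(m / 4)) := Real.exp_lt_exp.2 (by linarith [h2.1])
      linarith
    · intro y hy xk hxk hlim
      have hyD : y ∉ zubD φ xeq := by
        have := hy.2
        rwa [hD.interior_eq] at this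
      have hinf : Tendsto (fun k => V (xk k)) atTop atTop := by
        rw [tendsto_atTop]
        intro A
        obtain ⟨ρ, hρ, h⟩ := S.V_blowup hyD (max (2 * A) 1)
        filter_upwards [hlim (Metric.ball_mem_nhds y hρ)] with k hk
        have hk : ‖xk k - y‖ < ρ := by
          rw [← dist_eq_norm]; exact hk
        have h1 := h _ (hxk k) hk
        have h2 := le_max_left (2 * A) 1
        have h3 := le_max_right (2 * A) 1
        have hne : xk k ≠ xeq := by
          intro he
          rw [he, S.V_xeq] at h1
          linarith
        linarith [(hlow _ (hxk k) hne).1]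
      have h1 := (Real.tendsto_exp_neg_atTop_nhds_zero.comp hinf).const_sub 1
      simpa [Function.comp_def] using h1
    · intro x hx
      have h1 := ((hdV x hx).hasFDerivAt.neg.exp).const_sub 1
      have h2 : DifferentiableAt ℝ (fun x => 1 - Real.exp (- V x)) x := h1.differentiableAt
      refine ⟨h2.hasGradientAt, ?_⟩
      have h3 : ⟪gradient (fun x => 1 - Real.exp (- V x)) x, f x⟫
          = fderiv ℝ (fun x => 1 - Real.exp (- V x)) x (f x) := by
        rw [gradient, InnerProductSpace.toDual_symm_apply]
      have h4 : fderiv ℝ (fun x => 1 - Real.exp (- V x)) x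
          = -(Real.exp (- V x) • -fderiv ℝ V x) := h1.fderiv
      rw [h3, h4]
      simp [hfd x hx]
      ring
  · rintro ⟨W, η, gW, -, -, hη, h1, hW0, ⟨hη0, h2⟩, ⟨c₀, hc₀, h3⟩, h4, h5⟩
    have Z : ZubData f xeq D W η gW :=
      { isOpen := hD
        mem := hxeqD
        etac := hη
        nonneg := fun x hx => by
          by_cases h : x = xeq
          · rw [h, hW0]
          · exact (h1 x hx h).1.le
        lt_one := fun x hx => by
          by_cases h : x = xeq
          · rw [h, hW0]; exact zero_lt_one
          · exact (h1 x hx h).2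
        eta_nonneg := fun x hx => by
          by_cases h : x = xeq
          · rw [h, hη0]
          · exact (h2 x hx h).le
        away := ⟨c₀, hc₀, fun c hc hc' => by
          obtain ⟨c₁, -, c₂, hc₂, h⟩ := h3 c hc hc'
          exact ⟨c₂, hc₂, fun x hx hcx => (h x hx hcx).2⟩⟩
        front := h4
        grad := h5 }
    exact Set.Subset.antisymm (Z.sub_roa S) (Z.roa_sub H)
end
end

section
/- For every x ∈ ℝⁿ, V(x) < ∞ if and only if x ∈ D(x_eq), the region of attraction of x_eq. -/
open Filter Topology MeasureTheory
open scoped ENNReal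

noncomputable section

/-- `V(x) = ∫₀^∞ η(φ(t,x)) dt`, with value `∞` if the integral diverges. -/
def zubovV {n : ℕ} (φ : ℝ → EuclideanSpace ℝ (Fin n) → EuclideanSpace ℝ (Fin n))
    (η : EuclideanSpace ℝ (Fin n) → ℝ) (x : EuclideanSpace ℝ (Fin n)) : ℝ≥0∞ :=
  ∫⁻ t in Set.Ioi (0:ℝ), ENNReal.ofReal (η (φ t x))

/-- `V(x) < ∞` iff `x` belongs to the region of attraction of `x_eq`. -/
theorem zubovV_finite_iff_mem_roa {n : ℕ}
    (f : EuclideanSpace ℝ (Fin n) → EuclideanSpace ℝ (Fin n))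
    (φ : ℝ → EuclideanSpace ℝ (Fin n) → EuclideanSpace ℝ (Fin n))
    (xeq : EuclideanSpace ℝ (Fin n))
    (hf : LocallyLipschitz f)
    (hφ0 : ∀ x, φ 0 x = x)
    (hφd : ∀ x, ∀ t ≥ (0:ℝ), HasDerivWithinAt (fun s => φ s x) (f (φ t x)) (Set.Ici 0) t)
    (hφadd : ∀ x, ∀ s ≥ (0:ℝ), ∀ t ≥ (0:ℝ), φ s (φ t x) = φ (t + s) x)
    (hfeq : f xeq = 0)
    (hstab : ∃ δ > (0:ℝ), ∃ M > (0:ℝ), ∃ c > (0:ℝ), ∀ x : EuclideanSpace ℝ (Fin n),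
      ‖x - xeq‖ ≤ δ → ∀ t ≥ (0:ℝ), ‖φ t x - xeq‖ ≤ M * ‖x - xeq‖ * Real.exp (-c * t))
    (η : EuclideanSpace ℝ (Fin n) → ℝ)
    (hη : LocallyLipschitz η) (hηnn : ∀ x, 0 ≤ η x)
    (hη0 : η xeq = 0) (hηpos : ∀ x, x ≠ xeq → 0 < η x)
    (hηinf : ∀ r > (0:ℝ), ∃ m > (0:ℝ), ∀ y, r ≤ ‖y - xeq‖ → m ≤ η y) :
    ∀ x : EuclideanSpace ℝ (Fin n),
      zubovV φ η x < ⊤ ↔ Tendsto (fun t => φ t x) atTop (𝓝 xeq) := by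
  obtain ⟨δ, hδ, M, hM, c, hc, hst⟩ := hstab
  intro x
  constructor
  · intro hV
    obtain ⟨T, hT, hTδ⟩ : ∃ T ≥ (0:ℝ), ‖φ T x - xeq‖ ≤ δ := by
      by_contra! hcon
      obtain ⟨m, hm, hmη⟩ := hηinf δ hδ
      have h1 : ∫⁻ t in Set.Ioi (0:ℝ), ENNReal.ofReal m ≤ zubovV φ η x := by
        unfold zubovV
        refine setLIntegral_mono' measurableSet_Ioi ?_
        intro t ht
        exact ENNReal.ofReal_le_ofReal (hmη _ (hcon t (le_of_lt ht)).le)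
      rw [setLIntegral_const, Real.volume_Ioi, ENNReal.mul_top (by simpa using hm)] at h1
      exact absurd (lt_of_le_of_lt h1 hV) (lt_irrefl _)
    rw [tendsto_iff_norm_sub_tendsto_zero]
    have hlim : Tendsto (fun t => M * ‖φ T x - xeq‖ * Real.exp (-c * (t - T))) atTop (𝓝 0) := by
      have h2 : Tendsto (fun t : ℝ => c * (t - T)) atTop atTop :=
        (tendsto_atTop_add_const_right _ (-T) tendsto_id).const_mul_atTop hc
      have h3 := (Real.tendsto_exp_neg_atTop_nhds_zero.comp h2).const_mul (M * ‖φ T x - xeq‖)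
      simpa [Function.comp_def, neg_mul] using h3
    refine squeeze_zero' (Eventually.of_forall fun t => norm_nonneg _) ?_ hlim
    filter_upwards [eventually_ge_atTop T] with t ht
    have h4 := hst _ hTδ (t - T) (by linarith)
    rwa [hφadd x (t - T) (by linarith) T hT, add_sub_cancel] at h4
  · intro hx
    obtain ⟨K, U, hU, hKU⟩ := hη xeq
    have hcont : ContinuousOn (fun t => η (φ t x)) (Set.Ici 0) :=
      hη.continuous.comp_continuousOn fun t ht => (hφd x t ht).continuousWithinAt
    have hev : ∀ᶠ t in atTop, φ t x ∈ U ∩ Metric.closedBall xeq δ :=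
      hx (inter_mem hU (Metric.closedBall_mem_nhds _ hδ))
    obtain ⟨T0, hT0⟩ := eventually_atTop.1 hev
    obtain ⟨T, hT, hTT⟩ : ∃ T ≥ (0:ℝ), T0 ≤ T := ⟨max 0 T0, le_max_left _ _, le_max_right _ _⟩
    have hTδ : ‖φ T x - xeq‖ ≤ δ := by
      simpa [dist_eq_norm] using (hT0 T hTT).2
    have hI1 : ∫⁻ t in Set.Ioc 0 T, ENNReal.ofReal (η (φ t x)) < ⊤ := by
      have h1 : IntegrableOn (fun t => η (φ t x)) (Set.Icc 0 T) :=
        (hcont.mono Set.Icc_subset_Ici_self).integrableOn_Icc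
      exact Integrable.lintegral_lt_top (h1.mono_set Set.Ioc_subset_Icc_self)
    have hI2 : ∫⁻ t in Set.Ioi T, ENNReal.ofReal (η (φ t x)) < ⊤ := by
      have h1 : IntegrableOn
          (fun t => K * (M * ‖φ T x - xeq‖ * Real.exp (c * T)) * Real.exp (-c * t)) (Set.Ioi T) :=
        (exp_neg_integrableOn_Ioi T hc).const_mul _
      refine lt_of_le_of_lt ?_ (Integrable.lintegral_lt_top h1)
      refine setLIntegral_mono' measurableSet_Ioi ?_
      intro t ht
      have ht' : T < t := ht
      apply ENNReal.ofReal_le_ofReal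
      have h2 := hKU.dist_le_mul (φ t x) (hT0 t (by linarith)).1 xeq (mem_of_mem_nhds hU)
      rw [hη0, Real.dist_eq, sub_zero, abs_of_nonneg (hηnn _), dist_eq_norm] at h2
      have h4 := hst _ hTδ (t - T) (by linarith)
      rw [hφadd x (t - T) (by linarith) T hT, add_sub_cancel] at h4
      have h5 : Real.exp (-c * (t - T)) = Real.exp (c * T) * Real.exp (-c * t) := by
        rw [← Real.exp_add]; ring_nf
      calc η (φ t x) ≤ K * ‖φ t x - xeq‖ := h2
        _ ≤ K * (M * ‖φ T x - xeq‖ * Real.exp (-c * (t - T))) := by gcongr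
        _ = _ := by rw [h5]; ring
    unfold zubovV
    rw [← Set.Ioc_union_Ioi_eq_Ioi hT]
    exact lt_of_le_of_lt (lintegral_union_le _ _ _) (ENNReal.add_lt_top.2 ⟨hI1, hI2⟩)
end
end

section
/- The function V is positive definite with respect to x_eq, i.e., V(x_eq) = 0 and V(x) > 0 for all x ≠ x_eq; and V(x) → ∞ as x approaches the boundary of the region of attraction: for every y ∈ ∂D(x_eq) and every sequence x_k ∈ D(x_eq) with x_k → y, V(x_k) → ∞. -/
open Filter Topology MeasureTheory
open scoped ENNReal

noncomputable section

theorem zubov_aux_lower {n : ℕ} (φ : ℝ → EuclideanSpace ℝ (Fin n) → EuclideanSpace ℝ (Fin n))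
    (η : EuclideanSpace ℝ (Fin n) → ℝ) (x : EuclideanSpace ℝ (Fin n)) (m T : ℝ) (hm : 0 ≤ m)
    (h : ∀ t ∈ Set.Ioo 0 T, m ≤ η (φ t x)) : ENNReal.ofReal (m * T) ≤ zubovV φ η x := by
  unfold zubovV
  calc ENNReal.ofReal (m * T) = ∫⁻ t in Set.Ioo (0:ℝ) T, ENNReal.ofReal m := by
        rw [setLIntegral_const, Real.volume_Ioo, sub_zero, ENNReal.ofReal_mul hm]
    _ ≤ ∫⁻ t in Set.Ioo (0:ℝ) T, ENNReal.ofReal (η (φ t x)) :=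
        setLIntegral_mono' measurableSet_Ioo fun t ht => ENNReal.ofReal_le_ofReal (h t ht)
    _ ≤ _ := lintegral_mono_set Set.Ioo_subset_Ioi_self

theorem zubov_aux_cont {n : ℕ}
    (f : EuclideanSpace ℝ (Fin n) → EuclideanSpace ℝ (Fin n))
    (φ : ℝ → EuclideanSpace ℝ (Fin n) → EuclideanSpace ℝ (Fin n))
    (hf : LocallyLipschitz f)
    (hφ0 : ∀ x, φ 0 x = x)
    (hφd : ∀ x, ∀ t ≥ (0:ℝ), HasDerivWithinAt (fun s => φ s x) (f (φ t x)) (Set.Ici 0) t)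
    (T : ℝ) (hT : 0 ≤ T) (y : EuclideanSpace ℝ (Fin n)) : ContinuousAt (φ T) y := by
  have hc : ∀ x, ContinuousOn (fun s => φ s x) (Set.Ici 0) :=
    fun x t ht => (hφd x t ht).continuousWithinAt
  have hc' : ∀ x, ∀ b, ContinuousOn (fun s => φ s x) (Set.Icc 0 b) :=
    fun x b => (hc x).mono Set.Icc_subset_Ici_self
  have hd' : ∀ x, ∀ t ≥ (0:ℝ), HasDerivWithinAt (fun s => φ s x) (f (φ t x)) (Set.Ici t) t :=
    fun x t ht => (hφd x t ht).mono (Set.Ici_subset_Ici.2 ht)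
  obtain ⟨R, hR⟩ := (isCompact_Icc.image_of_continuousOn (hc' y T)).isBounded.subset_closedBall 0
  have hRy : ∀ t ∈ Set.Icc 0 T, ‖φ t y‖ ≤ R := fun t ht => by
    simpa using hR ⟨t, ht, rfl⟩
  obtain ⟨L, hL⟩ := (hf.locallyLipschitzOn (s := Metric.closedBall 0 (R + 1))).exists_lipschitzOnWith_of_compact
    (isCompact_closedBall _ _)
  have key : ∀ x, ∀ b ∈ Set.Icc 0 T, (∀ t ∈ Set.Ico 0 b, dist (φ t x) (φ t y) < 1) →
      dist (φ b x) (φ b y) ≤ dist x y * Real.exp (L * T) := by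
    intro x b hb hlt
    have := dist_le_of_trajectories_ODE_of_mem (v := fun _ => f)
      (s := fun _ => Metric.closedBall 0 (R + 1)) (K := L) (a := 0) (b := b)
      (f := fun t => φ t x) (g := fun t => φ t y) (δ := dist x y)
      (fun t _ => hL) (hc' x b) (fun t ht => hd' x t ht.1)
      (fun t ht => by
        have h1 := hRy t ⟨ht.1, ht.2.le.trans hb.2⟩
        have h2 := hlt t ht
        rw [dist_eq_norm] at h2
        have h3 := norm_le_norm_add_norm_sub' (φ t x) (φ t y)
        simp only [mem_closedBall_zero_iff]
        linarith)
      (hc' y b) (fun t ht => hd' y t ht.1)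
      (fun t ht => by
        have h1 := hRy t ⟨ht.1, ht.2.le.trans hb.2⟩
        simp only [mem_closedBall_zero_iff]
        linarith)
      (by simp [hφ0]) b ⟨hb.1, le_rfl⟩
    refine this.trans ?_
    have : (L:ℝ) * (b - 0) ≤ L * T := by
      have := hb.2
      rw [sub_zero]
      gcongr
    gcongr
  have hsmall : ∀ x, dist x y * Real.exp (L * T) < 1 → ∀ b ∈ Set.Icc 0 T,
      dist (φ b x) (φ b y) < 1 := by
    intro x hx
    by_contra! hcon
    obtain ⟨b, hb, hb1⟩ := hcon
    let S := {t ∈ Set.Icc 0 T | 1 ≤ dist (φ t x) (φ t y)}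
    have hSc : IsClosed S := by
      have hdc : ContinuousOn (fun t => dist (φ t x) (φ t y)) (Set.Icc 0 T) :=
        continuous_dist.comp_continuousOn ((hc' x T).prodMk (hc' y T))
      exact hdc.preimage_isClosed_of_isClosed isClosed_Icc isClosed_Ici
    have hSb : BddBelow S := ⟨0, fun t ht => ht.1.1⟩
    have hmem : sInf S ∈ S := hSc.csInf_mem ⟨b, hb, hb1⟩ hSb
    have := key x (sInf S) hmem.1 (fun t ht => by
      by_contra! h
      exact absurd (csInf_le hSb (show t ∈ S from ⟨⟨ht.1, ht.2.le.trans hmem.1.2⟩, h⟩))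
        (not_le.2 ht.2))
    linarith [hmem.2]
  have hto : Tendsto (fun x => dist x y * Real.exp (L * T)) (𝓝 y) (𝓝 0) := by
    have : Continuous (fun x => dist x y * Real.exp (L * T)) := by fun_prop
    simpa using this.tendsto y
  rw [ContinuousAt, tendsto_iff_dist_tendsto_zero]
  refine squeeze_zero' (Eventually.of_forall fun _ => dist_nonneg) ?_ hto
  filter_upwards [hto.eventually (gt_mem_nhds one_pos)] with x hx
  exact key x T ⟨hT, le_rfl⟩ fun t ht => hsmall x hx t ⟨ht.1, ht.2.le⟩

/-- `V` is positive definite with respect to `x_eq`, and `V(x) → ∞` as `x`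
approaches the boundary of the region of attraction. -/
theorem zubovV_posdef_and_boundary_blowup {n : ℕ}
    (f : EuclideanSpace ℝ (Fin n) → EuclideanSpace ℝ (Fin n))
    (φ : ℝ → EuclideanSpace ℝ (Fin n) → EuclideanSpace ℝ (Fin n))
    (xeq : EuclideanSpace ℝ (Fin n))
    (hf : LocallyLipschitz f)
    (hφ0 : ∀ x, φ 0 x = x)
    (hφd : ∀ x, ∀ t ≥ (0:ℝ), HasDerivWithinAt (fun s => φ s x) (f (φ t x)) (Set.Ici 0) t)
    (hφadd : ∀ x, ∀ s ≥ (0:ℝ), ∀ t ≥ (0:ℝ), φ s (φ t x) = φ (t + s) x)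
    (hfeq : f xeq = 0)
    (hstab : ∃ δ > (0:ℝ), ∃ M > (0:ℝ), ∃ c > (0:ℝ), ∀ x : EuclideanSpace ℝ (Fin n),
      ‖x - xeq‖ ≤ δ → ∀ t ≥ (0:ℝ), ‖φ t x - xeq‖ ≤ M * ‖x - xeq‖ * Real.exp (-c * t))
    (η : EuclideanSpace ℝ (Fin n) → ℝ)
    (hη : LocallyLipschitz η) (hηnn : ∀ x, 0 ≤ η x)
    (hη0 : η xeq = 0) (hηpos : ∀ x, x ≠ xeq → 0 < η x)
    (hηinf : ∀ r > (0:ℝ), ∃ m > (0:ℝ), ∀ y, r ≤ ‖y - xeq‖ → m ≤ η y) :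
    zubovV φ η xeq = 0 ∧
    (∀ x, x ≠ xeq → 0 < zubovV φ η x) ∧
    (∀ y ∈ frontier {x | Tendsto (fun t => φ t x) atTop (𝓝 xeq)},
      ∀ xk : ℕ → EuclideanSpace ℝ (Fin n),
        (∀ k, Tendsto (fun t => φ t (xk k)) atTop (𝓝 xeq)) →
        Tendsto xk atTop (𝓝 y) →
        Tendsto (fun k => zubovV φ η (xk k)) atTop (𝓝 ⊤)) := by
  have hφc := zubov_aux_cont f φ hf hφ0 hφd
  obtain ⟨δ, hδ, M, hM, c, hc, hs⟩ := hstab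
  have hball : ∀ x, ‖x - xeq‖ ≤ δ → Tendsto (fun t => φ t x) atTop (𝓝 xeq) := by
    intro x hx
    rw [tendsto_iff_norm_sub_tendsto_zero]
    have h0 : Tendsto (fun t : ℝ => M * ‖x - xeq‖ * Real.exp (-c * t)) atTop (𝓝 0) := by
      have : Tendsto (fun t : ℝ => -c * t) atTop atBot :=
        tendsto_id.const_mul_atTop_of_neg (by linarith)
      simpa using (Real.tendsto_exp_atBot.comp this).const_mul (M * ‖x - xeq‖)
    refine squeeze_zero' (Eventually.of_forall fun _ => norm_nonneg _) ?_ h0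
    filter_upwards [eventually_ge_atTop 0] with t ht using hs x hx t ht
  have hback : ∀ x, ∀ t ≥ (0:ℝ), ‖φ t x - xeq‖ ≤ δ → Tendsto (fun t => φ t x) atTop (𝓝 xeq) := by
    intro x t ht hx
    have h1 := (hball _ hx).comp (tendsto_atTop_add_const_right atTop (-t) tendsto_id)
    refine h1.congr' ?_
    filter_upwards [eventually_ge_atTop t] with s hs
    have := hφadd x (s + -t) (by linarith) t ht
    simp only [Function.comp, id]
    rw [this]
    congr 1
    ring
  have hopen : IsOpen {x | Tendsto (fun t => φ t x) atTop (𝓝 xeq)} := by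
    rw [isOpen_iff_mem_nhds]
    intro x hx
    have hx' : Tendsto (fun t => φ t x) atTop (𝓝 xeq) := hx
    obtain ⟨T, hT, hT0⟩ := ((hx'.eventually (Metric.ball_mem_nhds xeq hδ)).and
      (eventually_ge_atTop 0)).exists
    filter_upwards [(hφc T hT0 x).eventually (Metric.isOpen_ball.mem_nhds hT)] with z hz
    refine hback z T hT0 ?_
    rw [← dist_eq_norm]
    exact (Metric.mem_ball.1 hz).le
  refine ⟨?_, ?_, ?_⟩
  · have : ∀ t ≥ (0:ℝ), φ t xeq = xeq := by
      intro t ht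
      have := hs xeq (by simpa using hδ.le) t ht
      simp only [sub_self, norm_zero, mul_zero, zero_mul] at this
      exact sub_eq_zero.1 (norm_le_zero_iff.1 this)
    unfold zubovV
    rw [setLIntegral_congr_fun measurableSet_Ioi (g := fun _ => 0)]
    · simp
    · intro t ht
      simp [this t (le_of_lt ht), hη0]
  · intro x hx
    have hp := hηpos x hx
    have hcx : ContinuousWithinAt (fun t => η (φ t x)) (Set.Ici 0) 0 :=
      hη.continuous.continuousAt.comp_continuousWithinAt (hφd x 0 le_rfl).continuousWithinAt
    have hev : ∀ᶠ t in 𝓝[≥] (0:ℝ), η x / 2 < η (φ t x) := by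
      apply hcx.eventually (lt_mem_nhds _)
      show η x / 2 < η (φ 0 x)
      rw [hφ0]
      linarith
    obtain ⟨ε, hε, hsub⟩ := mem_nhdsGE_iff_exists_Ico_subset.1 hev
    refine lt_of_lt_of_le ?_ (zubov_aux_lower φ η x (η x / 2) ε (by linarith)
      fun t ht => le_of_lt (hsub ⟨ht.1.le, ht.2⟩))
    have hε' : 0 < ε := hε
    exact ENNReal.ofReal_pos.2 (by positivity)
  · intro y hy xk _ hxk
    have hyD : ¬ Tendsto (fun t => φ t y) atTop (𝓝 xeq) := fun h => by
      rw [hopen.frontier_eq] at hy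
      exact hy.2 h
    obtain ⟨m, hm, hmη⟩ := hηinf (min δ (δ / (2 * M))) (by positivity)
    rw [ENNReal.tendsto_nhds_top_iff_nnreal]
    intro A
    obtain ⟨T, hT0, hTA⟩ : ∃ T : ℝ, 0 ≤ T ∧ (A:ℝ) < m * T :=
      ⟨(A + 1) / m, by positivity, by rw [mul_div_cancel₀ _ hm.ne']; linarith⟩
    have hfar : δ < ‖φ T y - xeq‖ := by
      by_contra! h
      exact hyD (hback y T hT0 h)
    have hlim : Tendsto (fun k => ‖φ T (xk k) - xeq‖) atTop (𝓝 ‖φ T y - xeq‖) :=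
      (((hφc T hT0 y).tendsto.comp hxk).sub_const xeq).norm
    filter_upwards [hlim.eventually (lt_mem_nhds hfar)] with k hk
    refine lt_of_lt_of_le ?_ (zubov_aux_lower φ η (xk k) m T hm.le ?_)
    · rw [← ENNReal.ofReal_coe_nnreal]
      exact (ENNReal.ofReal_lt_ofReal_iff (lt_of_le_of_lt A.2 hTA)).2 hTA
    · intro t ht
      apply hmη
      by_contra! h
      have h1 := hs (φ t (xk k)) (h.le.trans (min_le_left _ _)) (T - t) (by linarith [ht.2])
      rw [hφadd _ _ (by linarith [ht.2]) _ ht.1.le, add_sub_cancel] at h1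
      have h2 : Real.exp (-c * (T - t)) ≤ 1 := by
        rw [Real.exp_le_one_iff]
        nlinarith [ht.2]
      have h3 : M * ‖φ t (xk k) - xeq‖ ≤ M * (δ / (2 * M)) := by
        have := h.le.trans (min_le_right _ _)
        gcongr
      have h4 : M * (δ / (2 * M)) = δ / 2 := by field_simp
      have h5 : M * ‖φ t (xk k) - xeq‖ * Real.exp (-c * (T - t)) ≤ M * ‖φ t (xk k) - xeq‖ :=
        mul_le_of_le_one_right (by positivity) h2
      linarith
end
end

section
/- The stopped flow satisfies the flow-map properties: for every x ∈ R and all s, t ≥ 0, one has φ̂(t,x) ∈ R, φ̂(0,x) = x, and φ̂(s, φ̂(t,x)) = φ̂(t+s, x). -/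
open Filter Topology
open scoped Classical

noncomputable section

/-- The set of nonnegative times at which the trajectory from `x` lies on `∂R`
(so `τ(x) = sInf` of this set when it is nonempty, and `τ(x) = ∞` when it is empty). -/
def hitSet {n : ℕ} (φ : ℝ → EuclideanSpace ℝ (Fin n) → EuclideanSpace ℝ (Fin n))
    (R : Set (EuclideanSpace ℝ (Fin n))) (x : EuclideanSpace ℝ (Fin n)) : Set ℝ :=
  {t | 0 ≤ t ∧ φ t x ∈ frontier R}

/-- The stopped flow `φ̂(t,x) = φ(min(t, τ(x)), x)`. -/
def stopFlow {n : ℕ} (φ : ℝ → EuclideanSpace ℝ (Fin n) → EuclideanSpace ℝ (Fin n))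
    (R : Set (EuclideanSpace ℝ (Fin n))) (t : ℝ) (x : EuclideanSpace ℝ (Fin n)) :
    EuclideanSpace ℝ (Fin n) :=
  if (hitSet φ R x).Nonempty then φ (min t (sInf (hitSet φ R x))) x else φ t x

/-- the stopped flow satisfies the flow-map properties: for every `x ∈ R`
and `s, t ≥ 0`, `φ̂(t,x) ∈ R`, `φ̂(0,x) = x`, and `φ̂(s, φ̂(t,x)) = φ̂(t+s, x)`. -/
theorem stopFlow_flow_properties {n : ℕ}
    (f : EuclideanSpace ℝ (Fin n) → EuclideanSpace ℝ (Fin n))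
    (φ : ℝ → EuclideanSpace ℝ (Fin n) → EuclideanSpace ℝ (Fin n))
    (hf : LocallyLipschitz f)
    (hφ0 : ∀ x, φ 0 x = x)
    (hφd : ∀ x, ∀ t ≥ (0:ℝ), HasDerivWithinAt (fun s => φ s x) (f (φ t x)) (Set.Ici 0) t)
    (hφadd : ∀ x, ∀ s ≥ (0:ℝ), ∀ t ≥ (0:ℝ), φ s (φ t x) = φ (t + s) x)
    (R : Set (EuclideanSpace ℝ (Fin n))) (hR : IsCompact R) :
    ∀ x ∈ R,
      (∀ t ≥ (0:ℝ), stopFlow φ R t x ∈ R) ∧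
      stopFlow φ R 0 x = x ∧
      (∀ s ≥ (0:ℝ), ∀ t ≥ (0:ℝ),
        stopFlow φ R s (stopFlow φ R t x) = stopFlow φ R (t + s) x) := by
  intro x hx
  have hcont : ∀ x, ContinuousOn (fun s => φ s x) (Set.Ici 0) := fun x t ht =>
    (hφd x t ht).continuousWithinAt
  have hRc : IsClosed R := hR.isClosed
  have hfr : frontier R ⊆ R := hRc.frontier_subset
  have key : ∀ t ≥ (0:ℝ), (∀ u, 0 ≤ u → u < t → φ u x ∉ frontier R) → φ t x ∈ R := by
    intro t ht hu
    by_contra hn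
    have hpre : IsPreconnected ((fun s => φ s x) '' Set.Icc 0 t) :=
      isPreconnected_Icc.image _ ((hcont x).mono Set.Icc_subset_Ici_self)
    have hex : ∃ y ∈ (fun s => φ s x) '' Set.Icc 0 t, y ∈ frontier R := by
      by_contra hno
      push Not at hno
      have hint : ∀ y ∈ (fun s => φ s x) '' Set.Icc 0 t, y ∈ R → y ∈ interior R := by
        intro y hy hyR
        by_contra h
        exact hno y hy ⟨subset_closure hyR, h⟩
      have hx0 : x ∈ (fun s => φ s x) '' Set.Icc 0 t := ⟨0, ⟨le_rfl, ht⟩, hφ0 x⟩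
      obtain ⟨y, _, hy1, hy2⟩ := hpre (interior R) Rᶜ isOpen_interior hRc.isOpen_compl
        (fun y hy => (em (y ∈ R)).imp (hint y hy) id)
        ⟨x, hx0, hint x hx0 hx⟩ ⟨φ t x, ⟨t, ⟨ht, le_rfl⟩, rfl⟩, hn⟩
      exact hy2 (interior_subset hy1)
    obtain ⟨y, ⟨u, hu1, rfl⟩, hy⟩ := hex
    rcases lt_or_eq_of_le hu1.2 with h | h
    · exact hu u hu1.1 h hy
    · subst h
      exact hn (hfr hy)
  by_cases hne : (hitSet φ R x).Nonempty
  · have hcl : IsClosed (hitSet φ R x) :=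
      (hcont x).preimage_isClosed_of_isClosed isClosed_Ici isClosed_frontier
    have hbdd : BddBelow (hitSet φ R x) := ⟨0, fun t ht => ht.1⟩
    have hmem := hcl.csInf_mem hne hbdd
    have hlow : ∀ u ∈ hitSet φ R x, sInf (hitSet φ R x) ≤ u := fun u hu => csInf_le hbdd hu
    have hst : ∀ t, stopFlow φ R t x = φ (min t (sInf (hitSet φ R x))) x := fun t => by
      rw [stopFlow, if_pos hne]
    generalize sInf (hitSet φ R x) = τ at *
    obtain ⟨hτ0, hτ⟩ := id hmem
    refine ⟨fun t ht => ?_, ?_, fun s hs t ht => ?_⟩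
    · rw [hst]
      refine key _ (le_min ht hτ0) fun u hu0 hu hf => ?_
      have := hlow u ⟨hu0, hf⟩
      have := min_le_right t τ
      linarith
    · rw [hst, min_eq_left hτ0, hφ0]
    · rw [hst, hst]
      have hm0 : 0 ≤ min t τ := le_min ht hτ0
      have hmτ : min t τ ≤ τ := min_le_right t τ
      have hleast : IsLeast (hitSet φ R (φ (min t τ) x)) (τ - min t τ) := by
        refine ⟨⟨by linarith, ?_⟩, fun u hu => ?_⟩
        · rw [hφadd x _ (by linarith) _ hm0]
          simpa using hτ
        · have h2 := hu.2
          rw [hφadd x _ hu.1 _ hm0] at h2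
          have := hlow _ ⟨add_nonneg hm0 hu.1, h2⟩
          linarith
      rw [stopFlow, if_pos hleast.nonempty, hleast.csInf_eq,
        hφadd x _ (le_min hs (by linarith)) _ hm0]
      congr 1
      rcases le_total t τ with h | h
      · rw [min_eq_left h, ← min_add_add_left]
        congr 1
        ring
      · rw [min_eq_right h, sub_self, min_eq_right hs, min_eq_right (by linarith), add_zero]
  · have hst : ∀ t, stopFlow φ R t x = φ t x := fun t => by
      rw [stopFlow, if_neg hne]
    refine ⟨fun t ht => ?_, ?_, fun s hs t ht => ?_⟩
    · rw [hst]
      exact key t ht fun u hu0 _ hf => hne ⟨u, hu0, hf⟩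
    · rw [hst, hφ0]
    · rw [hst, hst, stopFlow, if_neg, hφadd x s hs t ht]
      rintro ⟨u, hu0, hu⟩
      rw [hφadd x u hu0 t ht] at hu
      exact hne ⟨t + u, add_nonneg ht hu0, hu⟩
end
end

section
/- For every bounded continuous h : ℝⁿ → ℝ, the function U_h is a fixed point of every Zubov–Koopman operator: for each t ≥ 0 and every x ∈ ℝⁿ, exp(−v_t(x))·U_h(φ(t,x)) = U_h(x), i.e., T_t U_h = U_h. -/
open Filter Topology MeasureTheory
open scoped ENNReal

noncomputable section

/-- `U_h(x) = exp(−V(x))·h(x_eq)` when `V(x) < ∞`, and `U_h(x) = 0` otherwise. -/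
def zubovU {n : ℕ} (φ : ℝ → EuclideanSpace ℝ (Fin n) → EuclideanSpace ℝ (Fin n))
    (η : EuclideanSpace ℝ (Fin n) → ℝ) (xeq : EuclideanSpace ℝ (Fin n))
    (h : EuclideanSpace ℝ (Fin n) → ℝ) (x : EuclideanSpace ℝ (Fin n)) : ℝ :=
  if zubovV φ η x < ⊤ then Real.exp (-(zubovV φ η x).toReal) * h xeq else 0

/-- The Zubov–Koopman operator `(T_t h)(x) = exp(−∫₀ᵗ η(φ(r,x)) dr) · h(φ(t,x))`. -/
def zubovKoopman {n : ℕ} (φ : ℝ → EuclideanSpace ℝ (Fin n) → EuclideanSpace ℝ (Fin n))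
    (η : EuclideanSpace ℝ (Fin n) → ℝ) (t : ℝ) (h : EuclideanSpace ℝ (Fin n) → ℝ)
    (x : EuclideanSpace ℝ (Fin n)) : ℝ :=
  Real.exp (-(∫ r in (0:ℝ)..t, η (φ r x))) * h (φ t x)

/-- for every bounded continuous `h`, `U_h` is a fixed point of each
Zubov–Koopman operator: `T_t U_h = U_h` for all `t ≥ 0`. -/
theorem zubovU_fixed_point {n : ℕ}
    (f : EuclideanSpace ℝ (Fin n) → EuclideanSpace ℝ (Fin n))
    (φ : ℝ → EuclideanSpace ℝ (Fin n) → EuclideanSpace ℝ (Fin n))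
    (xeq : EuclideanSpace ℝ (Fin n))
    (hf : LocallyLipschitz f)
    (hφ0 : ∀ x, φ 0 x = x)
    (hφd : ∀ x, ∀ t ≥ (0:ℝ), HasDerivWithinAt (fun s => φ s x) (f (φ t x)) (Set.Ici 0) t)
    (hφadd : ∀ x, ∀ s ≥ (0:ℝ), ∀ t ≥ (0:ℝ), φ s (φ t x) = φ (t + s) x)
    (hfeq : f xeq = 0)
    (hstab : ∃ δ > (0:ℝ), ∃ M > (0:ℝ), ∃ c > (0:ℝ), ∀ x : EuclideanSpace ℝ (Fin n),
      ‖x - xeq‖ ≤ δ → ∀ t ≥ (0:ℝ), ‖φ t x - xeq‖ ≤ M * ‖x - xeq‖ * Real.exp (-c * t))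
    (η : EuclideanSpace ℝ (Fin n) → ℝ)
    (hη : LocallyLipschitz η) (hηnn : ∀ x, 0 ≤ η x)
    (hη0 : η xeq = 0) (hηpos : ∀ x, x ≠ xeq → 0 < η x)
    (hηinf : ∀ r > (0:ℝ), ∃ m > (0:ℝ), ∀ y, r ≤ ‖y - xeq‖ → m ≤ η y)
    (h : EuclideanSpace ℝ (Fin n) → ℝ)
    (hh : Continuous h) (hhb : ∃ C, ∀ x, |h x| ≤ C) :
    ∀ t ≥ (0:ℝ), ∀ x,
      zubovKoopman φ η t (zubovU φ η xeq h) x = zubovU φ η xeq h x := by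
  intro t ht x
  have hcont : ContinuousOn (fun s => η (φ s x)) (Set.Ici 0) :=
    hη.continuous.comp_continuousOn (fun s hs => (hφd x s hs).continuousWithinAt)
  have hint : IntervalIntegrable (fun s => η (φ s x)) volume 0 t := by
    apply ContinuousOn.intervalIntegrable
    rw [Set.uIcc_of_le ht]
    exact hcont.mono (fun s hs => hs.1)
  have hI : ENNReal.ofReal (∫ r in (0:ℝ)..t, η (φ r x))
      = ∫⁻ r in Set.Ioc 0 t, ENNReal.ofReal (η (φ r x)) := by
    rw [intervalIntegral.integral_of_le ht]
    exact ofReal_integral_eq_lintegral_ofReal hint.1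
      (Eventually.of_forall fun s => hηnn _)
  have hI0 : 0 ≤ ∫ r in (0:ℝ)..t, η (φ r x) :=
    intervalIntegral.integral_nonneg ht (fun s _ => hηnn _)
  have hshift : zubovV φ η (φ t x) = ∫⁻ r in Set.Ioi t, ENNReal.ofReal (η (φ r x)) := by
    have e : (fun s : ℝ => t + s) ⁻¹' Set.Ioi t = Set.Ioi 0 := by
      ext s; simp
    have := (measurePreserving_add_left (volume : Measure ℝ) t).setLIntegral_comp_preimage_emb
      (measurableEmbedding_addLeft t) (fun r => ENNReal.ofReal (η (φ r x))) (Set.Ioi t)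
    rw [e] at this
    rw [← this]
    unfold zubovV
    refine setLIntegral_congr_fun measurableSet_Ioi (fun s hs => ?_)
    have hs' : (0:ℝ) ≤ s := le_of_lt hs
    simp only [hφadd x s hs' t ht]
  have key : zubovV φ η x
      = ENNReal.ofReal (∫ r in (0:ℝ)..t, η (φ r x)) + zubovV φ η (φ t x) := by
    rw [hshift, hI, zubovV, ← Set.Ioc_union_Ioi_eq_Ioi ht,
      lintegral_union measurableSet_Ioi (Set.Ioc_disjoint_Ioi le_rfl)]
  unfold zubovKoopman zubovU
  by_cases hV : zubovV φ η (φ t x) < ⊤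
  · have hV' : zubovV φ η x < ⊤ := by
      rw [key]; exact ENNReal.add_lt_top.2 ⟨ENNReal.ofReal_lt_top, hV⟩
    rw [if_pos hV, if_pos hV', key, ENNReal.toReal_add ENNReal.ofReal_ne_top hV.ne,
      ENNReal.toReal_ofReal hI0, neg_add, Real.exp_add, mul_assoc]
  · have hV' : ¬ zubovV φ η x < ⊤ := by
      rw [key]; exact fun hc => hV (ENNReal.add_lt_top.1 hc).2
    rw [if_neg hV, if_neg hV', mul_zero]
end
end

section
/- Let h : ℝⁿ → ℝ be bounded and continuously differentiable and η : ℝⁿ → [0,∞) continuous. Set u_h(t,x) = (T_t h)(x) = exp(−v_t(x))·h(φ(t,x)). Then: (i) for each x, the map t ↦ u_h(t,x) is differentiable on (0,∞); (ii) for every t > 0 and x ∈ ℝⁿ, the map s ↦ u_h(t, φ(s,x)) is differentiable at s = 0 with derivative ∂ₜu_h(t,x) + η(x)·u_h(t,x); consequently, at any point x where y ↦ u_h(t,y) is differentiable, ∂ₜu_h(t,x) = ∇ₓu_h(t,x)·f(x) − η(x)·u_h(t,x); and (iii) u_h(0,x) = h(x) for all x. -/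
open Filter Topology MeasureTheory

noncomputable section

/-- for bounded `C¹` `h` and continuous nonnegative `η`,
`u_h(t,x) = (T_t h)(x)` satisfies: (i) `t ↦ u_h(t,x)` is differentiable on `(0,∞)`;
(ii) `s ↦ u_h(t, φ(s,x))` is differentiable at `s = 0` (from the right) with derivative
`∂ₜu_h(t,x) + η(x)·u_h(t,x)`, and consequently wherever `y ↦ u_h(t,y)` is differentiable,
`∂ₜu_h(t,x) = ∇ₓu_h(t,x)·f(x) − η(x)·u_h(t,x)`; and (iii) `u_h(0,x) = h(x)`. -/
theorem zubovKoopman_solves_cauchy_problem {n : ℕ}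
    (f : EuclideanSpace ℝ (Fin n) → EuclideanSpace ℝ (Fin n))
    (φ : ℝ → EuclideanSpace ℝ (Fin n) → EuclideanSpace ℝ (Fin n))
    (hf : LocallyLipschitz f)
    (hφ0 : ∀ x, φ 0 x = x)
    (hφd : ∀ x, ∀ t ≥ (0:ℝ), HasDerivWithinAt (fun s => φ s x) (f (φ t x)) (Set.Ici 0) t)
    (hφadd : ∀ x, ∀ s ≥ (0:ℝ), ∀ t ≥ (0:ℝ), φ s (φ t x) = φ (t + s) x)
    (η : EuclideanSpace ℝ (Fin n) → ℝ)
    (hη : Continuous η) (hηnn : ∀ x, 0 ≤ η x)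
    (h : EuclideanSpace ℝ (Fin n) → ℝ)
    (hh : ContDiff ℝ 1 h) (hhb : ∃ C, ∀ x, |h x| ≤ C) :
    -- (i)
    (∀ x, ∀ t > (0:ℝ), DifferentiableAt ℝ (fun s => zubovKoopman φ η s h x) t) ∧
    -- (ii)
    (∀ t > (0:ℝ), ∀ x,
      HasDerivWithinAt (fun s => zubovKoopman φ η t h (φ s x))
        (deriv (fun s => zubovKoopman φ η s h x) t + η x * zubovKoopman φ η t h x)
        (Set.Ici 0) 0) ∧
    (∀ t > (0:ℝ), ∀ x, DifferentiableAt ℝ (fun y => zubovKoopman φ η t h y) x →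
      deriv (fun s => zubovKoopman φ η s h x) t =
        fderiv ℝ (fun y => zubovKoopman φ η t h y) x (f x)
          - η x * zubovKoopman φ η t h x) ∧
    -- (iii)
    (∀ x, zubovKoopman φ η 0 h x = h x) := by
  have hφc : ∀ x, Continuous (fun r : ℝ => φ (max r 0) x) := by
    intro x
    have h1 : ContinuousOn (fun s => φ s x) (Set.Ici 0) :=
      fun t ht => (hφd x t ht).continuousWithinAt
    exact h1.comp_continuous (continuous_id.max continuous_const) (fun r => Set.mem_Ici.2 (le_max_right _ _))
  have hgc : ∀ x, Continuous (fun r : ℝ => η (φ (max r 0) x)) := fun x => hη.comp (hφc x)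
  have hVeq : ∀ x, ∀ t ≥ (0:ℝ),
      (∫ r in (0:ℝ)..t, η (φ r x)) = ∫ r in (0:ℝ)..t, η (φ (max r 0) x) := by
    intro x t ht
    apply intervalIntegral.integral_congr
    intro r hr
    rw [Set.uIcc_of_le ht] at hr
    simp only [max_eq_left hr.1]
  have hVd : ∀ x t, HasDerivAt (fun t => ∫ r in (0:ℝ)..t, η (φ (max r 0) x))
      (η (φ (max t 0) x)) t := fun x t =>
    intervalIntegral.integral_hasDerivAt_right ((hgc x).intervalIntegrable _ _)
      (hgc x).stronglyMeasurable.stronglyMeasurableAtFilter (hgc x).continuousAt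
  have hi : ∀ x, ∀ t > (0:ℝ), DifferentiableAt ℝ (fun s => zubovKoopman φ η s h x) t := by
    intro x t ht
    have hφt : DifferentiableAt ℝ (fun s => φ s x) t :=
      ((hφd x t ht.le).hasDerivAt (Ici_mem_nhds ht)).differentiableAt
    have hht : DifferentiableAt ℝ (fun s => h (φ s x)) t :=
      DifferentiableAt.comp t ((hh.differentiable (by norm_num)) (φ t x)) hφt
    have h2 : DifferentiableAt ℝ
        (fun s => Real.exp (-(∫ r in (0:ℝ)..s, η (φ (max r 0) x))) * h (φ s x)) t :=
      ((hVd x t).differentiableAt.neg.exp).mul hht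
    refine h2.congr_of_eventuallyEq ?_
    filter_upwards [Ici_mem_nhds ht] with s hs
    simp only [zubovKoopman, hVeq x s hs]
  have hii : ∀ t > (0:ℝ), ∀ x,
      HasDerivWithinAt (fun s => zubovKoopman φ η t h (φ s x))
        (deriv (fun s => zubovKoopman φ η s h x) t + η x * zubovKoopman φ η t h x)
        (Set.Ici 0) 0 := by
    intro t ht x
    have key : ∀ s ∈ Set.Ici (0:ℝ), zubovKoopman φ η t h (φ s x) =
        Real.exp (∫ r in (0:ℝ)..s, η (φ (max r 0) x)) * zubovKoopman φ η (s + t) h x := by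
      intro s hs
      have hs' : (0:ℝ) ≤ s := hs
      have e1 : (∫ r in (0:ℝ)..t, η (φ r (φ s x))) =
          ∫ r in (0:ℝ)..t, (fun r => η (φ (max r 0) x)) (s + r) := by
        apply intervalIntegral.integral_congr
        intro r hr
        rw [Set.uIcc_of_le ht.le] at hr
        simp only [max_eq_left (add_nonneg hs' hr.1), hφadd x r hr.1 s hs']
      have e2 := intervalIntegral.integral_add_adjacent_intervals
        ((hgc x).intervalIntegrable (μ := volume) 0 s)
        ((hgc x).intervalIntegrable (μ := volume) s (s + t))
      rw [intervalIntegral.integral_comp_add_left (fun r => η (φ (max r 0) x)) s, add_zero] at e1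
      unfold zubovKoopman
      rw [e1, hVeq x (s + t) (by positivity), ← e2, hφadd x t ht.le s hs', ← mul_assoc,
        ← Real.exp_add]
      congr 2
      ring
    have d1 := (hVd x 0).exp
    have d2 : HasDerivAt (fun s => zubovKoopman φ η (s + t) h x)
        (deriv (fun s => zubovKoopman φ η s h x) t) 0 := by
      have := (hi x t ht).hasDerivAt
      rw [← zero_add t] at this
      simpa using HasDerivAt.comp_add_const 0 t this
    have d3 := (d1.mul d2).hasDerivWithinAt (s := Set.Ici 0)
    refine (d3.congr_of_mem key (Set.mem_Ici.2 le_rfl)).congr_deriv ?_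
    simp [hφ0]
    ring
  refine ⟨hi, hii, ?_, ?_⟩
  · intro t ht x hd
    have hd' : HasFDerivAt (fun y => zubovKoopman φ η t h y)
        (fderiv ℝ (fun y => zubovKoopman φ η t h y) x) (φ 0 x) := by
      rw [hφ0]; exact hd.hasFDerivAt
    have c := hd'.comp_hasDerivWithinAt (0:ℝ) (hφd x 0 le_rfl)
    have := (uniqueDiffOn_Ici (0:ℝ) 0 (Set.mem_Ici.2 le_rfl)).eq_deriv _ (hii t ht x) c
    rw [hφ0] at this
    linarith
  · intro x
    simp [zubovKoopman, hφ0]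
end
end

section
/- Let h : ℝⁿ → ℝ be bounded and continuously differentiable and η : ℝⁿ → [0,∞) continuous. If u : [0,∞) × ℝⁿ → ℝ is continuously differentiable in (t,x) and satisfies ∂ₜu(t,x) = ∇ₓu(t,x)·f(x) − η(x)·u(t,x) for all t > 0 and x ∈ ℝⁿ, together with u(0,x) = h(x) for all x, then u(t,x) = exp(−v_t(x))·h(φ(t,x)) = (T_t h)(x) for all t ≥ 0 and all x ∈ ℝⁿ. -/
open Filter Topology MeasureTheory

noncomputable section

/-- uniqueness part of the Feynman–Kac characterization: any `C^{1,1}`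
solution `u` of `∂ₜu = ∇ₓu·f − η·u` on `(0,∞) × ℝⁿ` with `u(0,·) = h` is given by
`u(t,x) = (T_t h)(x) = exp(−v_t(x))·h(φ(t,x))`. -/
theorem zubovKoopman_uniqueness_feynman_kac {n : ℕ}
    (f : EuclideanSpace ℝ (Fin n) → EuclideanSpace ℝ (Fin n))
    (φ : ℝ → EuclideanSpace ℝ (Fin n) → EuclideanSpace ℝ (Fin n))
    (hf : LocallyLipschitz f)
    (hφ0 : ∀ x, φ 0 x = x)
    (hφd : ∀ x, ∀ t ≥ (0:ℝ), HasDerivWithinAt (fun s => φ s x) (f (φ t x)) (Set.Ici 0) t)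
    (hφadd : ∀ x, ∀ s ≥ (0:ℝ), ∀ t ≥ (0:ℝ), φ s (φ t x) = φ (t + s) x)
    (η : EuclideanSpace ℝ (Fin n) → ℝ)
    (hη : Continuous η) (hηnn : ∀ x, 0 ≤ η x)
    (h : EuclideanSpace ℝ (Fin n) → ℝ)
    (hh : ContDiff ℝ 1 h) (hhb : ∃ C, ∀ x, |h x| ≤ C)
    (u : ℝ → EuclideanSpace ℝ (Fin n) → ℝ)
    (hu : ContDiffOn ℝ 1 (fun p : ℝ × EuclideanSpace ℝ (Fin n) => u p.1 p.2)
      (Set.Ici (0:ℝ) ×ˢ Set.univ))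
    (hpde : ∀ t > (0:ℝ), ∀ x, deriv (fun s => u s x) t =
      fderiv ℝ (fun y => u t y) x (f x) - η x * u t x)
    (hinit : ∀ x, u 0 x = h x) :
    ∀ t ≥ (0:ℝ), ∀ x, u t x = zubovKoopman φ η t h x := by
  intro t ht x
  set ψ : ℝ → ℝ := fun r => η (φ (max r 0) x) with hψ
  have hφc : ContinuousOn (fun s => φ s x) (Set.Ici 0) :=
    fun s hs => (hφd x s hs).continuousWithinAt
  have hψc : Continuous ψ := by
    refine hη.comp (hφc.comp_continuous ((continuous_id (X := ℝ)).max (continuous_const (y := (0:ℝ)))) ?_)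
    intro r
    exact le_max_right r (0:ℝ)
  have hint : ∀ s, 0 ≤ s → (∫ r in (0:ℝ)..s, η (φ r x)) = ∫ r in (0:ℝ)..s, ψ r := by
    intro s hs
    apply intervalIntegral.integral_congr
    intro r hr
    rw [Set.uIcc_of_le hs] at hr
    simp only [hψ]
    rw [max_eq_left hr.1]
  set V : ℝ → ℝ := fun s => ∫ r in (0:ℝ)..s, ψ r with hV
  have hVd : ∀ s, HasDerivAt V (ψ s) s := fun s => hψc.integral_hasStrictDerivAt 0 s |>.hasDerivAt
  set g : ℝ → ℝ := fun s => Real.exp (-(V s)) * u (t - s) (φ s x) with hg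
  have hcont : ContinuousOn g (Set.Icc 0 t) := by
    have h1 : ContinuousOn (fun s => Real.exp (-(V s))) (Set.Icc 0 t) := by
      have : Continuous V := continuous_iff_continuousAt.2 fun s => (hVd s).continuousAt
      exact (Real.continuous_exp.comp this.neg).continuousOn
    refine h1.mul ?_
    have h2 : ContinuousOn (fun s : ℝ => ((t - s, φ s x) : ℝ × EuclideanSpace ℝ (Fin n)))
        (Set.Icc 0 t) :=
      (continuousOn_const.sub continuousOn_id).prodMk (hφc.mono fun s hs => hs.1)
    exact hu.continuousOn.comp h2 fun s hs => ⟨sub_nonneg.2 hs.2, Set.mem_univ _⟩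
  have hder : ∀ s ∈ Set.Ico 0 t, HasDerivWithinAt g 0 (Set.Ici s) s := by
    intro s hs
    have hts : 0 < t - s := sub_pos.2 hs.2
    have hnhds : (Set.Ici (0:ℝ) ×ˢ (Set.univ : Set (EuclideanSpace ℝ (Fin n)))) ∈
        𝓝 ((t - s, φ s x) : ℝ × EuclideanSpace ℝ (Fin n)) :=
      prod_mem_nhds (Ici_mem_nhds hts) univ_mem
    have hd : DifferentiableAt ℝ (fun p : ℝ × EuclideanSpace ℝ (Fin n) => u p.1 p.2)
        (t - s, φ s x) :=
      (hu.contDiffAt hnhds).differentiableAt (by simp)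
    obtain ⟨L, hL⟩ := hd
    have hφs : HasDerivWithinAt (fun s => φ s x) (f (φ s x)) (Set.Ici s) s :=
      (hφd x s hs.1).mono (Set.Ici_subset_Ici.2 hs.1)
    have hlin : HasDerivWithinAt (fun r : ℝ => t - r) (-1) (Set.Ici s) s :=
      ((hasDerivAt_id s).const_sub t).hasDerivWithinAt
    have hcomp : HasDerivWithinAt (fun r => u (t - r) (φ r x)) (L (-1, f (φ s x))) (Set.Ici s) s :=
      HasFDerivAt.comp_hasDerivWithinAt (f := fun r : ℝ => (t - r, φ r x)) s hL (hlin.prodMk hφs)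
    have ht1 : HasDerivAt (fun r => u r (φ s x)) (L (1, 0)) (t - s) :=
      HasFDerivAt.comp_hasDerivAt (f := fun r : ℝ => (r, φ s x)) (t - s) hL
        ((hasDerivAt_id (t - s)).prodMk (hasDerivAt_const _ _))
    have hx1 : HasFDerivAt (fun y => u (t - s) y)
        (L.comp (ContinuousLinearMap.inr ℝ ℝ (EuclideanSpace ℝ (Fin n)))) (φ s x) :=
      HasFDerivAt.comp (f := fun y => (t - s, y)) (φ s x) hL (hasFDerivAt_prodMk_right _ _)
    have hp := hpde (t - s) hts (φ s x)
    rw [ht1.deriv, hx1.fderiv] at hp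
    simp only [ContinuousLinearMap.comp_apply, ContinuousLinearMap.inr_apply] at hp
    have hsplit : L (-1, f (φ s x)) = -L (1, 0) + L (0, f (φ s x)) := by
      rw [← map_neg, ← map_add]; simp
    have hψs : ψ s = η (φ s x) := by simp only [hψ]; rw [max_eq_left hs.1]
    have := ((hVd s).neg.exp.hasDerivWithinAt (s := Set.Ici s)).mul hcomp
    refine this.congr_deriv ?_
    rw [hsplit, hp, hψs]
    simp only [Pi.neg_apply]
    ring
  have hfin := constant_of_has_deriv_right_zero hcont hder t ⟨ht, le_rfl⟩
  simp only [hg, sub_self, sub_zero, hφ0, hinit] at hfin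
  have hV0 : V 0 = 0 := by simp [hV]
  rw [hV0] at hfin
  simp only [neg_zero, Real.exp_zero, one_mul] at hfin
  rw [zubovKoopman, hint t ht, ← hfin]
end
end

section
/- For every bounded continuous h : ℝⁿ → ℝ and every x ∈ ℝⁿ, (T_t h)(x) → U_h(x) as t → ∞. In particular, for any fixed Δt > 0, the iterates satisfy ((T_{Δt})^k h)(x) = (T_{kΔt} h)(x) → U_h(x) as k → ∞. -/
open Filter Topology MeasureTheory
open scoped ENNReal

noncomputable section

/-- for every bounded continuous `h` and every `x`, `(T_t h)(x) → U_h(x)` as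
`t → ∞`; in particular for any fixed `Δt > 0` the iterates satisfy
`((T_{Δt})^k h)(x) = (T_{kΔt} h)(x) → U_h(x)` as `k → ∞`. -/
theorem zubovKoopman_tendsto_zubovU {n : ℕ}
    (f : EuclideanSpace ℝ (Fin n) → EuclideanSpace ℝ (Fin n))
    (φ : ℝ → EuclideanSpace ℝ (Fin n) → EuclideanSpace ℝ (Fin n))
    (xeq : EuclideanSpace ℝ (Fin n))
    (hf : LocallyLipschitz f)
    (hφ0 : ∀ x, φ 0 x = x)
    (hφd : ∀ x, ∀ t ≥ (0:ℝ), HasDerivWithinAt (fun s => φ s x) (f (φ t x)) (Set.Ici 0) t)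
    (hφadd : ∀ x, ∀ s ≥ (0:ℝ), ∀ t ≥ (0:ℝ), φ s (φ t x) = φ (t + s) x)
    (hfeq : f xeq = 0)
    (hstab : ∃ δ > (0:ℝ), ∃ M > (0:ℝ), ∃ c > (0:ℝ), ∀ x : EuclideanSpace ℝ (Fin n),
      ‖x - xeq‖ ≤ δ → ∀ t ≥ (0:ℝ), ‖φ t x - xeq‖ ≤ M * ‖x - xeq‖ * Real.exp (-c * t))
    (η : EuclideanSpace ℝ (Fin n) → ℝ)
    (hη : LocallyLipschitz η) (hηnn : ∀ x, 0 ≤ η x)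
    (hη0 : η xeq = 0) (hηpos : ∀ x, x ≠ xeq → 0 < η x)
    (hηinf : ∀ r > (0:ℝ), ∃ m > (0:ℝ), ∀ y, r ≤ ‖y - xeq‖ → m ≤ η y) :
    ∀ h : EuclideanSpace ℝ (Fin n) → ℝ, Continuous h → (∃ C, ∀ x, |h x| ≤ C) →
      ∀ x : EuclideanSpace ℝ (Fin n),
        Tendsto (fun t => zubovKoopman φ η t h x) atTop (𝓝 (zubovU φ η xeq h x)) ∧
        ∀ Δt > (0:ℝ),
          (∀ k : ℕ, (zubovKoopman φ η Δt)^[k] h x = zubovKoopman φ η (k * Δt) h x) ∧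
          Tendsto (fun k : ℕ => (zubovKoopman φ η Δt)^[k] h x) atTop
            (𝓝 (zubovU φ η xeq h x)) := by
  have hcont : ∀ x, ContinuousOn (fun t => η (φ t x)) (Set.Ici 0) := fun x =>
    hη.continuous.comp_continuousOn (fun t ht => (hφd x t ht).continuousWithinAt)
  have hint : ∀ x, ∀ a ≥ (0:ℝ), ∀ b ≥ (0:ℝ),
      IntervalIntegrable (fun t => η (φ t x)) volume a b := by
    intro x a ha b hb
    apply ContinuousOn.intervalIntegrable
    apply (hcont x).mono
    intro t ht
    exact le_trans (le_min ha hb) ht.1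
  intro h hc hbd x
  have main : Tendsto (fun t => zubovKoopman φ η t h x) atTop (𝓝 (zubovU φ η xeq h x)) := by
    have hmeas : AEStronglyMeasurable (fun t => η (φ t x)) (volume.restrict (Set.Ioi (0:ℝ))) :=
      ((hcont x).mono Set.Ioi_subset_Ici_self).aestronglyMeasurable measurableSet_Ioi
    have hnn : 0 ≤ᵐ[volume.restrict (Set.Ioi (0:ℝ))] (fun t => η (φ t x)) :=
      Eventually.of_forall (fun t => hηnn _)
    have hiff := lintegral_ofReal_ne_top_iff_integrable hmeas hnn
    unfold zubovU zubovKoopman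
    by_cases hV : zubovV φ η x < ⊤
    · rw [if_pos hV]
      have hI : IntegrableOn (fun t => η (φ t x)) (Set.Ioi 0) := hiff.1 hV.ne
      have h1 := intervalIntegral_tendsto_integral_Ioi (0:ℝ) hI tendsto_id
      rw [integral_eq_lintegral_of_nonneg_ae hnn hmeas] at h1
      have h2 : Tendsto (fun t => φ t x) atTop (𝓝 xeq) := by
        obtain ⟨δ, hδ, M, hM, c, hc, hs⟩ := hstab
        obtain ⟨m, hm, hmη⟩ := hηinf δ hδ
        have hex : ∃ t0 ≥ (0:ℝ), ‖φ t0 x - xeq‖ ≤ δ := by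
          by_contra hcon
          push Not at hcon
          refine hV.ne (top_le_iff.1 ?_)
          calc (⊤ : ℝ≥0∞) = ∫⁻ _ in Set.Ioi (0:ℝ), ENNReal.ofReal m := by
                simp [ENNReal.mul_top, hm]
            _ ≤ zubovV φ η x := by
                apply setLIntegral_mono' measurableSet_Ioi
                intro t ht
                exact ENNReal.ofReal_le_ofReal (hmη _ (hcon t (le_of_lt ht)).le)
        obtain ⟨t0, ht0, hle⟩ := hex
        rw [tendsto_iff_norm_sub_tendsto_zero]
        have hlim : Tendsto (fun t : ℝ => M * ‖φ t0 x - xeq‖ * Real.exp (-c * (t - t0)))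
            atTop (𝓝 0) := by
          have ha : Tendsto (fun t : ℝ => -c * (t - t0)) atTop atBot :=
            (tendsto_atTop_add_const_right atTop (-t0) tendsto_id).const_mul_atTop_of_neg
              (neg_lt_zero.2 hc)
          simpa using (Real.tendsto_exp_atBot.comp ha).const_mul (M * ‖φ t0 x - xeq‖)
        refine squeeze_zero' (Eventually.of_forall fun t => norm_nonneg _) ?_ hlim
        filter_upwards [eventually_ge_atTop t0] with t ht
        have := hs _ hle (t - t0) (sub_nonneg.2 ht)
        rwa [hφadd x (t - t0) (sub_nonneg.2 ht) t0 ht0, add_sub_cancel] at this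
      exact ((Real.continuous_exp.tendsto _).comp h1.neg).mul ((hc.tendsto _).comp h2)
    · rw [if_neg hV]
      have hv : Tendsto (fun t => ∫ r in (0:ℝ)..t, η (φ r x)) atTop atTop := by
        rw [tendsto_atTop]
        intro b
        have hex : ∃ a ≥ (0:ℝ), b ≤ ∫ r in (0:ℝ)..a, η (φ r x) := by
          by_contra hcon
          push Not at hcon
          apply hV
          refine lt_top_iff_ne_top.2 (hiff.2 ?_)
          refine integrableOn_Ioi_of_intervalIntegral_norm_bounded (l := atTop)
            (b := fun t : ℝ => max t 0) b 0 ?_ ?_ ?_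
          · intro i
            exact (hint x 0 le_rfl _ (le_max_right i 0)).1
          · exact tendsto_atTop_mono (fun t => le_max_left t 0) tendsto_id
          · refine Eventually.of_forall fun t => ?_
            simp only [Real.norm_of_nonneg (hηnn _)]
            exact (hcon _ (le_max_right t 0)).le
        obtain ⟨a, ha, hab⟩ := hex
        filter_upwards [eventually_ge_atTop a] with t ht
        exact hab.trans (intervalIntegral.integral_mono_interval le_rfl ha ht
          (Eventually.of_forall fun t => hηnn _) (hint x 0 le_rfl t (ha.trans ht)))
      obtain ⟨C, hC⟩ := hbd
      have he := (Real.tendsto_exp_neg_atTop_nhds_zero.comp hv).mul_const C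
      rw [zero_mul] at he
      refine squeeze_zero_norm (fun t => ?_) he
      rw [norm_mul, Real.norm_of_nonneg (Real.exp_pos _).le]
      exact mul_le_mul_of_nonneg_left (hC _) (Real.exp_pos _).le
  refine ⟨main, fun Δt hΔ => ?_⟩
  have hit : ∀ k : ℕ, ∀ x, (zubovKoopman φ η Δt)^[k] h x = zubovKoopman φ η (k * Δt) h x := by
    intro k
    induction k with
    | zero => intro x; simp [zubovKoopman, hφ0]
    | succ k ih =>
      intro x
      have hk : 0 ≤ (k:ℝ) * Δt := by positivity
      have hk1 : ((k + 1 : ℕ) : ℝ) * Δt = Δt + k * Δt := by push_cast; ring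
      rw [Function.iterate_succ_apply', zubovKoopman, ih, hk1]
      unfold zubovKoopman
      rw [hφadd x _ hk _ hΔ.le, ← mul_assoc, ← Real.exp_add]
      have e1 : ∫ r in (0:ℝ)..(k * Δt), η (φ r (φ Δt x))
          = ∫ r in Δt..(Δt + k * Δt), η (φ r x) := by
        have e2 : ∫ r in (0:ℝ)..(k * Δt), η (φ r (φ Δt x))
            = ∫ r in (0:ℝ)..(k * Δt), η (φ (Δt + r) x) := by
          apply intervalIntegral.integral_congr
          intro r hr
          rw [Set.uIcc_of_le hk] at hr
          simp only [hφadd x r hr.1 Δt hΔ.le]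
        rw [e2, intervalIntegral.integral_comp_add_left (fun r => η (φ r x)) Δt, add_zero]
      rw [e1, ← neg_add, intervalIntegral.integral_add_adjacent_intervals
        (hint x _ le_rfl _ hΔ.le) (hint x _ hΔ.le _ (add_nonneg hΔ.le hk))]
  refine ⟨fun k => hit k x, ?_⟩
  simp only [hit]
  exact main.comp (tendsto_natCast_atTop_atTop.atTop_mul_const hΔ)
end
end

section
/- Let h : ℝⁿ → ℝ be bounded, continuous and locally Lipschitz. Suppose that for each t > 0 there is a sequence of bounded continuous locally Lipschitz functions u_k^t : ℝⁿ → ℝ (k ∈ ℕ) such that sup_{x∈Ω} |(T_t h)(x) − u_k^t(x)| → 0 as k → ∞ for every bounded subset Ω ⊆ ℝⁿ. Then u_k^t converges uniformly on bounded sets to U_h as t, k → ∞: for every bounded Ω ⊆ ℝⁿ and every ε > 0 there exists T₀ > 0 such that for each t ≥ T₀ there exists K₀ with sup_{x∈Ω} |u_k^t(x) − U_h(x)| < ε for all k ≥ K₀. -/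
open Filter Topology MeasureTheory Bornology
open scoped ENNReal

noncomputable section

theorem zubovV_split {n : ℕ} (φ : ℝ → EuclideanSpace ℝ (Fin n) → EuclideanSpace ℝ (Fin n))
    (η : EuclideanSpace ℝ (Fin n) → ℝ) (hηnn : ∀ x, 0 ≤ η x) (x : EuclideanSpace ℝ (Fin n))
    (hc : ContinuousOn (fun s => η (φ s x)) (Set.Ici 0)) (t : ℝ) (ht : 0 ≤ t) :
    zubovV φ η x = ENNReal.ofReal (∫ r in (0:ℝ)..t, η (φ r x)) +
      ∫⁻ r in Set.Ioi t, ENNReal.ofReal (η (φ r x)) := by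
  unfold zubovV
  rw [← Set.Ioc_union_Ioi_eq_Ioi ht,
    lintegral_union measurableSet_Ioi (Set.Ioc_disjoint_Ioi le_rfl),
    intervalIntegral.integral_of_le ht]
  congr 1
  rw [ofReal_integral_eq_lintegral_ofReal]
  · have : ContinuousOn (fun s => η (φ s x)) (Set.Icc 0 t) :=
      hc.mono Set.Icc_subset_Ici_self
    exact this.integrableOn_Icc.mono_set Set.Ioc_subset_Icc_self
  · exact Eventually.of_forall fun s => hηnn _

theorem exp_tail_bound (A c t : ℝ) (hA : 0 ≤ A) (hc : 0 < c) :
    ∫⁻ r in Set.Ioi t, ENNReal.ofReal (A * Real.exp (-c * (r - t))) = ENNReal.ofReal (A / c) := by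
  have hc' : -c < 0 := by linarith
  have e : (fun r => A * Real.exp (-c * (r - t))) =
      fun r => (A * Real.exp (c * t)) * Real.exp (-c * r) := by
    funext r
    rw [mul_assoc, ← Real.exp_add]; ring_nf
  rw [← ofReal_integral_eq_lintegral_ofReal]
  · congr 1
    rw [e, integral_const_mul, integral_exp_mul_Ioi hc']
    have : Real.exp (c * t) * Real.exp (-c * t) = 1 := by
      rw [← Real.exp_add]; simp
    field_simp
    ring_nf at this ⊢
    linear_combination A * this
  · rw [e]
    exact (integrableOn_exp_mul_Ioi hc' t).const_mul _
  · exact Eventually.of_forall fun s => by positivity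

theorem koopman_tendsto {n : ℕ}
    (φ : ℝ → EuclideanSpace ℝ (Fin n) → EuclideanSpace ℝ (Fin n))
    (xeq : EuclideanSpace ℝ (Fin n))
    (hφc : ∀ x, ContinuousOn (fun s => φ s x) (Set.Ici 0))
    (hφadd : ∀ x, ∀ s ≥ (0:ℝ), ∀ t ≥ (0:ℝ), φ s (φ t x) = φ (t + s) x)
    (hstab : ∃ δ > (0:ℝ), ∃ M > (0:ℝ), ∃ c > (0:ℝ), ∀ x : EuclideanSpace ℝ (Fin n),
      ‖x - xeq‖ ≤ δ → ∀ t ≥ (0:ℝ), ‖φ t x - xeq‖ ≤ M * ‖x - xeq‖ * Real.exp (-c * t))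
    (η : EuclideanSpace ℝ (Fin n) → ℝ)
    (hη : LocallyLipschitz η) (hηnn : ∀ x, 0 ≤ η x)
    (hη0 : η xeq = 0)
    (hηinf : ∀ r > (0:ℝ), ∃ m > (0:ℝ), ∀ y, r ≤ ‖y - xeq‖ → m ≤ η y)
    (h : EuclideanSpace ℝ (Fin n) → ℝ)
    (hh : Continuous h) (hhb : ∃ C, ∀ x, |h x| ≤ C) (ε : ℝ) (hε : 0 < ε) :
    ∃ T₀ > (0:ℝ), ∀ t ≥ T₀, ∀ x, |zubovKoopman φ η t h x - zubovU φ η xeq h x| < ε := by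
  obtain ⟨δ, hδ, M, hM, c, hc, hst⟩ := hstab
  obtain ⟨C, hC⟩ := hhb
  have hC0 : 0 ≤ C := (abs_nonneg _).trans (hC xeq)
  have hηc : ∀ x, ContinuousOn (fun s => η (φ s x)) (Set.Ici 0) := fun x =>
    hη.continuous.comp_continuousOn (hφc x)
  obtain ⟨L, hL0, ρ, hρ0, hL⟩ : ∃ L > (0:ℝ), ∃ ρ > (0:ℝ), ∀ y, ‖y - xeq‖ < ρ → η y ≤ L * ‖y - xeq‖ := by
    obtain ⟨K, s, hs, hK⟩ := hη xeq
    obtain ⟨ρ, hρ, hb⟩ := Metric.mem_nhds_iff.1 hs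
    refine ⟨K + 1, by positivity, ρ, hρ, fun y hy => ?_⟩
    have h1 := hK.dist_le_mul y (hb (by rwa [Metric.mem_ball, dist_eq_norm])) xeq (mem_of_mem_nhds hs)
    rw [hη0, dist_eq_norm, dist_eq_norm, sub_zero, Real.norm_eq_abs] at h1
    have h2 := le_abs_self (η y)
    nlinarith [norm_nonneg (y - xeq)]
  obtain ⟨σ, hσ, hhσ⟩ := Metric.continuous_iff.1 hh xeq (ε/4) (by positivity)
  obtain ⟨r, hr, hr1, hr2, hr3, hr4⟩ : ∃ r > (0:ℝ), r ≤ δ ∧ M * r < ρ ∧ M * r < σ ∧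
      (C + 1) * (L * (M * r) / c) ≤ ε / 4 := by
    have t0 : ∀ a : ℝ, Tendsto (fun r : ℝ => a * r) (𝓝[>] 0) (𝓝 0) := fun a => by
      have : Tendsto (fun r : ℝ => a * r) (𝓝 0) (𝓝 (a * 0)) := (continuous_const_mul a).tendsto 0
      rw [mul_zero] at this
      exact this.mono_left nhdsWithin_le_nhds
    have e1 := (t0 1).eventually_lt_const hδ
    have e2 := (t0 M).eventually_lt_const hρ0
    have e3 := (t0 M).eventually_lt_const hσ
    have e4 := (t0 ((C+1) * (L * M / c))).eventually_lt_const (show (0:ℝ) < ε/4 by positivity)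
    obtain ⟨r, a0, a1, a2, a3, a4⟩ :=
      ((eventually_mem_nhdsWithin (a := (0:ℝ)) (s := Set.Ioi 0)).and
        (e1.and (e2.and (e3.and e4)))).exists
    refine ⟨r, a0, by linarith, a2, a3, ?_⟩
    have : (C + 1) * (L * (M * r) / c) = (C+1) * (L * M / c) * r := by ring
    linarith
  obtain ⟨m, hm, hmη⟩ := hηinf r hr
  obtain ⟨T, hT⟩ : ∃ T : ℝ, ∀ t ≥ T, 2 * C * Real.exp (-(m * t)) < ε := by
    have : Tendsto (fun t : ℝ => 2 * C * Real.exp (-(m * t))) atTop (𝓝 (2 * C * 0)) :=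
      (Real.tendsto_exp_neg_atTop_nhds_zero.comp (tendsto_id.const_mul_atTop hm)).const_mul _
    rw [mul_zero] at this
    exact eventually_atTop.1 (this.eventually_lt_const hε)
  refine ⟨max T 1, by positivity, fun t ht x => ?_⟩
  have htT : T ≤ t := (le_max_left _ _).trans ht
  have ht0 : 0 ≤ t := zero_le_one.trans ((le_max_right _ _).trans ht)
  have hsplit := zubovV_split φ η hηnn x (hηc x) t ht0
  set v := ∫ r in (0:ℝ)..t, η (φ r x) with hv
  have hv0 : 0 ≤ v := intervalIntegral.integral_nonneg ht0 fun s _ => hηnn _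
  by_cases hent : ∃ s, 0 ≤ s ∧ s ≤ t ∧ ‖φ s x - xeq‖ < r
  · obtain ⟨s, hs0, hst', hsr⟩ := hent
    have hdec : ∀ τ ≥ t, ‖φ τ x - xeq‖ ≤ M * r * Real.exp (-c * (τ - t)) := by
      intro τ hτ
      have h1 := hst (φ s x) (hsr.le.trans hr1) (τ - s) (by linarith)
      rw [hφadd x (τ - s) (by linarith) s hs0, add_sub_cancel] at h1
      refine h1.trans ?_
      gcongr ?_ * ?_
      · gcongr
      · exact Real.exp_le_exp.2 (by nlinarith)
    have hdec' : ∀ τ ≥ t, ‖φ τ x - xeq‖ ≤ M * r := fun τ hτ =>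
      (hdec τ hτ).trans (mul_le_of_le_one_right (by positivity)
        (Real.exp_le_one_iff.2 (by nlinarith)))
    have htail : ∫⁻ r in Set.Ioi t, ENNReal.ofReal (η (φ r x)) ≤
        ENNReal.ofReal (L * (M * r) / c) := by
      rw [← exp_tail_bound (L * (M * r)) c t (by positivity) hc]
      refine setLIntegral_mono' measurableSet_Ioi fun τ hτ => ENNReal.ofReal_le_ofReal ?_
      have hτ' : t ≤ τ := le_of_lt hτ
      refine (hL _ ((hdec' τ hτ').trans_lt hr2)).trans ?_
      rw [mul_assoc L]
      exact mul_le_mul_of_nonneg_left (hdec τ hτ') hL0.le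
    set w := ∫⁻ r in Set.Ioi t, ENNReal.ofReal (η (φ r x)) with hw
    have hwt : w ≠ ⊤ := ne_top_of_le_ne_top ENNReal.ofReal_ne_top htail
    have hd : w.toReal ≤ L * (M * r) / c := ENNReal.toReal_le_of_le_ofReal (by positivity) htail
    have hd0 : 0 ≤ w.toReal := ENNReal.toReal_nonneg
    have hVt : zubovV φ η x < ⊤ := by
      rw [hsplit]; exact ENNReal.add_lt_top.2 ⟨ENNReal.ofReal_lt_top, hwt.lt_top⟩
    have hVr : (zubovV φ η x).toReal = v + w.toReal := by
      rw [hsplit, ENNReal.toReal_add ENNReal.ofReal_ne_top hwt, ENNReal.toReal_ofReal hv0]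
    unfold zubovKoopman zubovU
    rw [if_pos hVt, hVr, ← hv, neg_add, Real.exp_add]
    have hhx : |h (φ t x) - h xeq| < ε / 4 := by
      have := hhσ (φ t x) (by rw [dist_eq_norm]; exact (hdec' t le_rfl).trans_lt hr3)
      rwa [Real.dist_eq] at this
    have hE : Real.exp (-v) ≤ 1 := Real.exp_le_one_iff.2 (by linarith)
    have hE0 := Real.exp_pos (-v)
    have hF : Real.exp (-w.toReal) ≤ 1 := Real.exp_le_one_iff.2 (by linarith)
    have hF1 : 1 - Real.exp (-w.toReal) ≤ w.toReal := by
      linarith [Real.add_one_le_exp (-w.toReal)]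
    have heq : Real.exp (-v) * h (φ t x) - Real.exp (-v) * Real.exp (-w.toReal) * h xeq =
      Real.exp (-v) * ((h (φ t x) - h xeq) + (1 - Real.exp (-w.toReal)) * h xeq) := by ring
    rw [heq, abs_mul, abs_of_pos hE0]
    refine (mul_le_of_le_one_left (abs_nonneg _) hE).trans_lt ?_
    refine (abs_add_le _ _).trans_lt ?_
    rw [abs_mul, abs_of_nonneg (by linarith : 0 ≤ 1 - Real.exp (-w.toReal))]
    have : (1 - Real.exp (-w.toReal)) * |h xeq| ≤ (L * (M * r) / c) * (C + 1) := by
      apply mul_le_mul (hF1.trans hd) (by linarith [hC xeq]) (abs_nonneg _) (hd0.trans hd)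
    nlinarith
  · push Not at hent
    have hvm : m * t ≤ v := by
      have : ∫ r in (0:ℝ)..t, m ≤ v := by
        refine intervalIntegral.integral_mono_on ht0 (by simp) ?_ fun s hs =>
          hmη _ (hent s hs.1 hs.2)
        apply ContinuousOn.intervalIntegrable
        rw [Set.uIcc_of_le ht0]
        exact (hηc x).mono Set.Icc_subset_Ici_self
      simp at this
      linarith
    have h1 : |zubovKoopman φ η t h x| ≤ C * Real.exp (-(m * t)) := by
      unfold zubovKoopman
      rw [← hv, abs_mul, abs_of_pos (Real.exp_pos _), mul_comm]
      exact mul_le_mul (hC _) (Real.exp_le_exp.2 (by linarith)) (Real.exp_pos _).le hC0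
    have h2 : |zubovU φ η xeq h x| ≤ C * Real.exp (-(m * t)) := by
      unfold zubovU
      split_ifs with hV
      · have hvV : v ≤ (zubovV φ η x).toReal := by
          apply (ENNReal.ofReal_le_iff_le_toReal hV.ne).1
          rw [hsplit]; exact le_self_add
        rw [abs_mul, abs_of_pos (Real.exp_pos _), mul_comm]
        exact mul_le_mul (hC _) (Real.exp_le_exp.2 (by linarith)) (Real.exp_pos _).le hC0
      · simp; positivity
    have h3 := hT t htT
    have h4 := abs_sub (zubovKoopman φ η t h x) (zubovU φ η xeq h x)
    linarith

/-- if bounded continuous locally Lipschitz approximants `u_k^t` converge to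
`T_t h` uniformly on bounded sets for each `t > 0`, then `u_k^t` converges uniformly on
bounded sets to `U_h` as `t, k → ∞`. -/
theorem approximants_tendsto_zubovU {n : ℕ}
    (f : EuclideanSpace ℝ (Fin n) → EuclideanSpace ℝ (Fin n))
    (φ : ℝ → EuclideanSpace ℝ (Fin n) → EuclideanSpace ℝ (Fin n))
    (xeq : EuclideanSpace ℝ (Fin n))
    (hf : LocallyLipschitz f)
    (hφ0 : ∀ x, φ 0 x = x)
    (hφd : ∀ x, ∀ t ≥ (0:ℝ), HasDerivWithinAt (fun s => φ s x) (f (φ t x)) (Set.Ici 0) t)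
    (hφadd : ∀ x, ∀ s ≥ (0:ℝ), ∀ t ≥ (0:ℝ), φ s (φ t x) = φ (t + s) x)
    (hfeq : f xeq = 0)
    (hstab : ∃ δ > (0:ℝ), ∃ M > (0:ℝ), ∃ c > (0:ℝ), ∀ x : EuclideanSpace ℝ (Fin n),
      ‖x - xeq‖ ≤ δ → ∀ t ≥ (0:ℝ), ‖φ t x - xeq‖ ≤ M * ‖x - xeq‖ * Real.exp (-c * t))
    (η : EuclideanSpace ℝ (Fin n) → ℝ)
    (hη : LocallyLipschitz η) (hηnn : ∀ x, 0 ≤ η x)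
    (hη0 : η xeq = 0) (hηpos : ∀ x, x ≠ xeq → 0 < η x)
    (hηinf : ∀ r > (0:ℝ), ∃ m > (0:ℝ), ∀ y, r ≤ ‖y - xeq‖ → m ≤ η y)
    (h : EuclideanSpace ℝ (Fin n) → ℝ)
    (hh : Continuous h) (hhb : ∃ C, ∀ x, |h x| ≤ C) (hhl : LocallyLipschitz h)
    (u : ℝ → ℕ → EuclideanSpace ℝ (Fin n) → ℝ)
    (hu : ∀ t > (0:ℝ), ∀ k : ℕ, Continuous (u t k) ∧ (∃ C, ∀ x, |u t k x| ≤ C) ∧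
      LocallyLipschitz (u t k))
    (huconv : ∀ t > (0:ℝ), ∀ Ω : Set (EuclideanSpace ℝ (Fin n)), IsBounded Ω →
      ∀ ε > (0:ℝ), ∃ K₀ : ℕ, ∀ k ≥ K₀, ∀ x ∈ Ω,
        |zubovKoopman φ η t h x - u t k x| < ε) :
    ∀ Ω : Set (EuclideanSpace ℝ (Fin n)), IsBounded Ω →
      ∀ ε > (0:ℝ), ∃ T₀ > (0:ℝ), ∀ t ≥ T₀, ∃ K₀ : ℕ, ∀ k ≥ K₀, ∀ x ∈ Ω,
        |u t k x - zubovU φ η xeq h x| < ε := by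
  intro Ω hΩ ε hε
  obtain ⟨T₀, hT₀, hT⟩ := koopman_tendsto φ xeq
    (fun x t ht => (hφd x t ht).continuousWithinAt) hφadd hstab η hη hηnn hη0 hηinf h hh hhb
    (ε / 2) (by positivity)
  refine ⟨T₀, hT₀, fun t ht => ?_⟩
  obtain ⟨K₀, hK⟩ := huconv t (lt_of_lt_of_le hT₀ ht) Ω hΩ (ε / 2) (by positivity)
  refine ⟨K₀, fun k hk x hx => ?_⟩
  have h1 := abs_lt.1 (hK k hk x hx)
  have h2 := abs_lt.1 (hT t ht x)
  rw [abs_lt]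
  constructor <;> linarith [h1.1, h1.2, h2.1, h2.2]
end
end
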